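/- arXiv:1309.4542 — 7 statements merged into one kernel-verified Lean document; each statement's English description precedes it below -/
import Mathlib

section
/- There exists a constant C > 0 such that for every n ≥ 2, every 2×n totally positive real matrix A, and every real number α, the number of pairs of column indices 1 ≤ i < j ≤ n such that the 2×2 minor of A on columns i and j (i.e., det of the 2×2 matrix whose first column is the i-th column of A and whose second column is the j-th column of A) equals α is at most C·n^(4/3). -/
/-- A real `m × n` matrix is totally positive if every minor (determinant of a square
submatrix taken on strictly increasing row and column indices) is positive. -/
def IsTotallyPositive {m n : ℕ} (A : Matrix (Fin m) (Fin n) ℝ) : Prop :=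
  ∀ (k : ℕ) (r : Fin k → Fin m) (c : Fin k → Fin n),
    StrictMono r → StrictMono c → 0 < (A.submatrix r c).det


/-!
The minor on columns `i` and `j` equals `α` exactly when column `j`, viewed as a point of the
plane, lies on the line `A 0 i * y - A 1 i * x = α`, so the pairs to be counted are incidences
between `n` points and `n` lines, and the bound is the Szemerédi–Trotter theorem.

For the latter, join consecutive points on each line. If no two of the resulting segments cross,
charge the topmost segment leaving a point rightwards to that point, and any other one to the
first point `c` in the wedge below the next segment leaving the same point. Each point is charged
at most three times: once as an apex, once as a `c` strictly below the upper side of the wedge, and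
once as a `c` on that side. Hence `#E ≤ 3 * #V + #(crossings)` in general. Averaging this over a
random subset of the points in which each survives with probability `p` yields
`p ^ 2 * #E ≤ 3 * p * #V + p ^ 4 * #(crossings)`, to be optimised in `p`.
-/

open Finset

/-- A non-vertical line in the coordinate plane over `𝕜`. -/
@[ext]
structure NonverticalLine (𝕜 : Type*) where
  slope : 𝕜
  intercept : 𝕜

namespace NonverticalLine

variable {𝕜 : Type*} [Field 𝕜]

/-- The ordinate of the point of the line `ℓ` with abscissa `x`. -/
def eval (ℓ : NonverticalLine 𝕜) (x : 𝕜) : 𝕜 := ℓ.slope * x + ℓ.intercept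

lemma eq_of_slope_eq_of_eval_eq {ℓ m : NonverticalLine 𝕜} {x : 𝕜} (hslope : ℓ.slope = m.slope)
    (hx : ℓ.eval x = m.eval x) : ℓ = m := by
  refine NonverticalLine.ext hslope ?_
  simpa only [eval, hslope, add_right_inj] using hx

lemma eq_of_eval_eq_of_eval_eq {ℓ m : NonverticalLine 𝕜} {x y : 𝕜} (hxy : x ≠ y)
    (hx : ℓ.eval x = m.eval x) (hy : ℓ.eval y = m.eval y) : ℓ = m := by
  refine eq_of_slope_eq_of_eval_eq (mul_right_cancel₀ (sub_ne_zero.2 hxy) ?_) hx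
  simp only [eval] at hx hy
  linear_combination hx - hy

variable [LinearOrder 𝕜] [IsStrictOrderedRing 𝕜]

lemma eval_le_eval_of_slope_le {ℓ m : NonverticalLine 𝕜} {x y : 𝕜} (hx : ℓ.eval x = m.eval x)
    (hslope : ℓ.slope ≤ m.slope) (hxy : x ≤ y) : ℓ.eval y ≤ m.eval y := by
  have := mul_le_mul_of_nonneg_right hslope (sub_nonneg.2 hxy)
  simp only [eval] at hx ⊢
  linarith

lemma eval_lt_eval_of_slope_lt {ℓ m : NonverticalLine 𝕜} {x y : 𝕜} (hx : ℓ.eval x = m.eval x)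
    (hslope : ℓ.slope < m.slope) (hxy : x < y) : ℓ.eval y < m.eval y := by
  have := mul_lt_mul_of_pos_right hslope (sub_pos.2 hxy)
  simp only [eval] at hx ⊢
  linarith

lemma exists_eval_eq_of_lt_of_lt {ℓ m : NonverticalLine 𝕜} {p q : 𝕜} (hpq : p < q)
    (hp : ℓ.eval p < m.eval p) (hq : m.eval q < ℓ.eval q) :
    ∃ t ∈ Set.Ioo p q, ℓ.eval t = m.eval t := by
  have hslope : 0 < ℓ.slope - m.slope := by
    refine pos_of_mul_pos_left (b := q - p) ?_ (sub_pos.2 hpq).le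
    simp only [eval] at hp hq
    linarith
  refine ⟨(m.intercept - ℓ.intercept) / (ℓ.slope - m.slope), ⟨?_, ?_⟩, ?_⟩
  · rw [lt_div_iff₀ hslope]
    simp only [eval] at hp
    linarith
  · rw [div_lt_iff₀ hslope]
    simp only [eval] at hq
    linarith
  · simp only [eval]
    field_simp
    ring

end NonverticalLine

/-- A segment of positive length on a non-vertical line, given by that line and the abscissae of the
two endpoints. -/
@[ext]
structure LineSegment (𝕜 : Type*) [LT 𝕜] where
  line : NonverticalLine 𝕜
  left : 𝕜
  right : 𝕜
  left_lt_right : left < right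

namespace LineSegment

variable {𝕜 : Type*} [Field 𝕜] [LinearOrder 𝕜]

/-- The left endpoint of a segment, as a point of the plane. -/
def leftPt (e : LineSegment 𝕜) : 𝕜 × 𝕜 := (e.left, e.line.eval e.left)

/-- The right endpoint of a segment, as a point of the plane. -/
def rightPt (e : LineSegment 𝕜) : 𝕜 × 𝕜 := (e.right, e.line.eval e.right)

/-- The set of the two endpoints of a segment. -/
def endpoints (e : LineSegment 𝕜) : Finset (𝕜 × 𝕜) := {e.leftPt, e.rightPt}

/-- Two segments cross if their relative interiors meet. This includes overlapping segments of the
same line; in particular a segment may cross itself. -/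
def Crosses (e f : LineSegment 𝕜) : Prop :=
  ∃ t ∈ Set.Ioo e.left e.right ∩ Set.Ioo f.left f.right, e.line.eval t = f.line.eval t

open Classical in
/-- The ordered pairs of distinct crossing segments in `E`. -/
noncomputable def crossings (E : Finset (LineSegment 𝕜)) :
    Finset (LineSegment 𝕜 × LineSegment 𝕜) :=
  {q ∈ E.offDiag | q.1.Crosses q.2}

/-- The points weakly between the segments `e` (below) and `f` (above), to the right of the left
endpoint of `e` and not beyond the right end of either. Used for segments with a common left
endpoint, which is the apex of the wedge and does not belong to it. -/
def wedge (e f : LineSegment 𝕜) : Set (𝕜 × 𝕜) :=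
  {v | v.1 ∈ Set.Ioc e.left (min e.right f.right) ∧
    v.2 ∈ Set.Icc (e.line.eval v.1) (f.line.eval v.1)}

/-- `f` is the segment following `e` in the upward order of the segments of `E` that leave the left
endpoint of `e`. -/
structure IsNextAbove (E : Finset (LineSegment 𝕜)) (e f : LineSegment 𝕜) : Prop where
  mem : f ∈ E
  leftPt_eq : f.leftPt = e.leftPt
  slope_lt : e.line.slope < f.line.slope
  slope_le : ∀ g ∈ E, g.leftPt = e.leftPt → e.line.slope < g.line.slope →
    f.line.slope ≤ g.line.slope

/-- `c` lies in the wedge between `e` and `f`, and no point of `V` in that wedge is further left. -/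
structure IsFirstInWedge (V : Finset (𝕜 × 𝕜)) (e f : LineSegment 𝕜) (c : 𝕜 × 𝕜) : Prop where
  mem_wedge : c ∈ wedge e f
  notMem_wedge : ∀ d ∈ V, d.1 < c.1 → d ∉ wedge e f

lemma mem_crossings {E : Finset (LineSegment 𝕜)} {q : LineSegment 𝕜 × LineSegment 𝕜} :
    q ∈ crossings E ↔ q.1 ∈ E ∧ q.2 ∈ E ∧ q.1 ≠ q.2 ∧ q.1.Crosses q.2 := by
  simp only [crossings, mem_filter, mem_offDiag, and_assoc]

lemma leftPt_mem_endpoints (e : LineSegment 𝕜) : e.leftPt ∈ e.endpoints :=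
  mem_insert_self _ _

lemma rightPt_mem_endpoints (e : LineSegment 𝕜) : e.rightPt ∈ e.endpoints :=
  mem_insert_of_mem (mem_singleton_self _)

lemma card_endpoints (e : LineSegment 𝕜) : #e.endpoints = 2 :=
  card_pair fun h => e.left_lt_right.ne (congrArg Prod.fst h)

lemma snd_eq_eval_of_mem_endpoints {e : LineSegment 𝕜} {v : 𝕜 × 𝕜} (hv : v ∈ e.endpoints) :
    v.2 = e.line.eval v.1 := by
  obtain rfl | hv := mem_insert.1 hv
  · rfl
  · obtain rfl := mem_singleton.1 hv
    rfl

lemma fst_notMem_Ioo_of_mem_endpoints {e : LineSegment 𝕜} {v : 𝕜 × 𝕜} (hv : v ∈ e.endpoints) :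
    v.1 ∉ Set.Ioo e.left e.right := by
  obtain rfl | hv := mem_insert.1 hv
  · exact Set.left_notMem_Ioo
  · obtain rfl := mem_singleton.1 hv
    exact Set.right_notMem_Ioo

lemma Crosses.disjoint_endpoints {e f : LineSegment 𝕜} (h : e.Crosses f)
    (hline : e.line ≠ f.line) : Disjoint e.endpoints f.endpoints := by
  obtain ⟨t, ⟨hte, -⟩, ht⟩ := h
  refine disjoint_left.2 fun v hve hvf => hline ?_
  refine NonverticalLine.eq_of_eval_eq_of_eval_eq (x := v.1) (y := t) ?_ ?_ ht
  · rintro rfl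
    exact fst_notMem_Ioo_of_mem_endpoints hve hte
  · rw [← snd_eq_eval_of_mem_endpoints hve, snd_eq_eval_of_mem_endpoints hvf]

lemma IsNextAbove.eval_left {E : Finset (LineSegment 𝕜)} {e f : LineSegment 𝕜}
    (h : IsNextAbove E e f) : f.line.eval e.left = e.line.eval e.left := by
  have := h.leftPt_eq
  simp only [leftPt, Prod.mk.injEq] at this
  rw [← this.1, this.2, this.1]

lemma IsNextAbove.left_eq {E : Finset (LineSegment 𝕜)} {e f : LineSegment 𝕜}
    (h : IsNextAbove E e f) : f.left = e.left :=
  congrArg Prod.fst h.leftPt_eq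

lemma exists_isNextAbove {E : Finset (LineSegment 𝕜)} {e g : LineSegment 𝕜} (hg : g ∈ E)
    (hleft : g.leftPt = e.leftPt) (hslope : e.line.slope < g.line.slope) :
    ∃ f, IsNextAbove E e f := by
  obtain ⟨f, hf, hmin⟩ := exists_min_image
    {g ∈ E | g.leftPt = e.leftPt ∧ e.line.slope < g.line.slope} (fun g => g.line.slope)
    ⟨g, mem_filter.2 ⟨hg, hleft, hslope⟩⟩
  obtain ⟨hfE, hfleft, hfslope⟩ := mem_filter.1 hf
  exact ⟨f, hfE, hfleft, hfslope, fun g hg hl hs => hmin g (mem_filter.2 ⟨hg, hl, hs⟩)⟩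

lemma IsFirstInWedge.eval_lt_or_lt_eval {V : Finset (𝕜 × 𝕜)}
    {E : Finset (LineSegment 𝕜)} {e₁ e₂ f₁ : LineSegment 𝕜} {c : 𝕜 × 𝕜}
    (hc₁ : IsFirstInWedge V e₁ f₁ c) (h₁ : IsNextAbove E e₁ f₁) (he₂ : e₂.leftPt ∈ V)
    (hne : e₁.leftPt ≠ e₂.leftPt) (hle : e₁.left ≤ e₂.left) (hlt : e₂.left < c.1) :
    e₂.line.eval e₂.left < e₁.line.eval e₂.left ∨
      f₁.line.eval e₂.left < e₂.line.eval e₂.left := by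
  rcases hle.eq_or_lt with heq | hleft
  · have : e₂.line.eval e₂.left ≠ e₁.line.eval e₂.left :=
      fun h => hne (Prod.ext heq ((congrArg _ heq).trans h.symm))
    rw [← heq, h₁.eval_left, heq]
    exact this.lt_or_gt
  · by_contra! h
    exact hc₁.notMem_wedge _ he₂ hlt ⟨⟨hleft, hlt.le.trans hc₁.mem_wedge.1.2⟩, h⟩

variable [IsStrictOrderedRing 𝕜]

lemma crosses_of_eval_lt_of_eval_lt {e f : LineSegment 𝕜} {p q : 𝕜} (hpq : p < q)
    (hp : max e.left f.left ≤ p) (hq : q ≤ min e.right f.right)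
    (hp' : e.line.eval p < f.line.eval p) (hq' : f.line.eval q < e.line.eval q) : e.Crosses f := by
  obtain ⟨t, ht, heq⟩ := NonverticalLine.exists_eval_eq_of_lt_of_lt hpq hp' hq'
  rw [max_le_iff] at hp
  rw [le_min_iff] at hq
  exact ⟨t, ⟨Set.Ioo_subset_Ioo hp.1 hq.1 ht, Set.Ioo_subset_Ioo hp.2 hq.2 ht⟩, heq⟩

section Noncrossing

variable {V : Finset (𝕜 × 𝕜)} {E : Finset (LineSegment 𝕜)} {e f g e₁ e₂ f₁ f₂ : LineSegment 𝕜}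
  {c : 𝕜 × 𝕜}

lemma eq_of_leftPt_eq_of_slope_eq (hE : (E : Set (LineSegment 𝕜)).Pairwise (¬ Crosses · ·))
    (he : e ∈ E) (hf : f ∈ E) (hleft : e.leftPt = f.leftPt)
    (hslope : e.line.slope = f.line.slope) : e = f := by
  by_contra hne
  simp only [leftPt, Prod.mk.injEq] at hleft
  have hline : e.line = f.line :=
    NonverticalLine.eq_of_slope_eq_of_eval_eq hslope (hleft.2.trans (by rw [hleft.1]))
  obtain ⟨t, hlt, htr⟩ := exists_between
    (lt_min e.left_lt_right (hleft.1.trans_lt f.left_lt_right))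
  rw [lt_min_iff] at htr
  exact hE he hf hne ⟨t, ⟨⟨hlt, htr.1⟩, hleft.1 ▸ hlt, htr.2⟩, by rw [hline]⟩

lemma IsNextAbove.eval_lt {x : 𝕜} (h : IsNextAbove E e f) (hx : e.left < x) :
    e.line.eval x < f.line.eval x :=
  NonverticalLine.eval_lt_eval_of_slope_lt h.eval_left.symm h.slope_lt hx

lemma IsNextAbove.slope_le_of_eval_lt {x : 𝕜} (h : IsNextAbove E e f) (hg : g ∈ E)
    (hleft : g.leftPt = e.leftPt) (hx : e.left < x) (hlt : g.line.eval x < f.line.eval x) :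
    g.line.slope ≤ e.line.slope := by
  by_contra! hslope
  simp only [leftPt, Prod.mk.injEq] at hleft
  have heval : f.line.eval e.left = g.line.eval e.left := by
    rw [h.eval_left, ← hleft.2, hleft.1]
  exact hlt.not_ge (NonverticalLine.eval_le_eval_of_slope_le heval
    (h.slope_le g hg (Prod.ext hleft.1 hleft.2) hslope) hx.le)

lemma IsNextAbove.exists_isFirstInWedge (h : IsNextAbove E e f) (he : e.rightPt ∈ V)
    (hf : f.rightPt ∈ V) : ∃ c ∈ V, IsFirstInWedge V e f c := by
  classical
  have hne : ({v ∈ V | v ∈ wedge e f} : Finset (𝕜 × 𝕜)).Nonempty := by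
    have hf_right : e.left < f.right := h.left_eq ▸ f.left_lt_right
    rcases le_total e.right f.right with hle | hle
    · exact ⟨e.rightPt, mem_filter.2 ⟨he, ⟨e.left_lt_right, le_min le_rfl hle⟩, le_rfl,
        (h.eval_lt e.left_lt_right).le⟩⟩
    · exact ⟨f.rightPt, mem_filter.2 ⟨hf, ⟨hf_right, le_min hle le_rfl⟩,
        (h.eval_lt hf_right).le, le_rfl⟩⟩
  obtain ⟨c, hc, hmin⟩ := exists_min_image _ Prod.fst hne
  obtain ⟨hcV, hcw⟩ := mem_filter.1 hc
  exact ⟨c, hcV, hcw, fun d hd hdc hdw => hdc.not_ge (hmin d (mem_filter.2 ⟨hd, hdw⟩))⟩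

lemma eq_of_isFirstInWedge_of_left_le
    (hE : (E : Set (LineSegment 𝕜)).Pairwise (¬ Crosses · ·)) (he₁ : e₁ ∈ E) (he₂ : e₂ ∈ E)
    (hV : e₂.leftPt ∈ V) (h₁ : IsNextAbove E e₁ f₁) (h₂ : IsNextAbove E e₂ f₂)
    (hc₁ : IsFirstInWedge V e₁ f₁ c) (hc₂ : IsFirstInWedge V e₂ f₂ c)
    (h₂₁ : e₂.line.eval c.1 < f₁.line.eval c.1) (h₁₂ : e₁.line.eval c.1 < f₂.line.eval c.1)
    (hle : e₁.left ≤ e₂.left) : e₁ = e₂ := by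
  obtain ⟨⟨hl₁, hr₁⟩, -⟩ := hc₁.mem_wedge
  obtain ⟨⟨hl₂, hr₂⟩, -⟩ := hc₂.mem_wedge
  rw [le_min_iff] at hr₁ hr₂
  by_cases hleft : e₁.leftPt = e₂.leftPt
  · exact eq_of_leftPt_eq_of_slope_eq hE he₁ he₂ hleft
      ((h₂.slope_le_of_eval_lt he₁ hleft hl₂ h₁₂).antisymm
        (h₁.slope_le_of_eval_lt he₂ hleft.symm hl₁ h₂₁))
  exfalso
  rcases hc₁.eval_lt_or_lt_eval h₁ hV hleft hle hl₂ with hbelow | habove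
  · rw [← h₂.eval_left] at hbelow
    refine hE h₂.mem he₁ ?_ (crosses_of_eval_lt_of_eval_lt hl₂
      (max_le h₂.left_eq.le hle) (le_min hr₂.2 hr₁.1) hbelow h₁₂)
    rintro rfl
    exact hbelow.false
  · refine hE h₁.mem he₂ ?_ (crosses_of_eval_lt_of_eval_lt hl₂
      (max_le (h₁.left_eq.trans_le hle) le_rfl) (le_min hr₁.2 hr₂.1) habove h₂₁)
    rintro rfl
    exact habove.false

lemma eq_of_isFirstInWedge (hE : (E : Set (LineSegment 𝕜)).Pairwise (¬ Crosses · ·))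
    (hV : ∀ e ∈ E, e.endpoints ⊆ V) (he₁ : e₁ ∈ E) (he₂ : e₂ ∈ E)
    (h₁ : IsNextAbove E e₁ f₁) (h₂ : IsNextAbove E e₂ f₂)
    (hc₁ : IsFirstInWedge V e₁ f₁ c) (hc₂ : IsFirstInWedge V e₂ f₂ c)
    (h₂₁ : e₂.line.eval c.1 < f₁.line.eval c.1) (h₁₂ : e₁.line.eval c.1 < f₂.line.eval c.1) :
    e₁ = e₂ := by
  rcases le_total e₁.left e₂.left with hle | hle
  · exact eq_of_isFirstInWedge_of_left_le hE he₁ he₂ (hV e₂ he₂ (leftPt_mem_endpoints e₂))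
      h₁ h₂ hc₁ hc₂ h₂₁ h₁₂ hle
  · exact (eq_of_isFirstInWedge_of_left_le hE he₂ he₁ (hV e₁ he₁ (leftPt_mem_endpoints e₁))
      h₂ h₁ hc₂ hc₁ h₁₂ h₂₁ hle).symm

open Classical in
lemma card_topmost_le (hE : (E : Set (LineSegment 𝕜)).Pairwise (¬ Crosses · ·))
    (hV : ∀ e ∈ E, e.endpoints ⊆ V) :
    #{e ∈ E | ∀ g ∈ E, g.leftPt = e.leftPt → g.line.slope ≤ e.line.slope} ≤ #V := by
  refine card_le_card_of_injOn leftPt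
    (fun e he => hV e (mem_filter.1 he).1 (leftPt_mem_endpoints e)) fun e he f hf hleft => ?_
  obtain ⟨heE, he⟩ := mem_filter.1 he
  obtain ⟨hfE, hf⟩ := mem_filter.1 hf
  exact eq_of_leftPt_eq_of_slope_eq hE heE hfE hleft
    ((hf e heE hleft).antisymm (he f hfE hleft.symm))

open Classical in
lemma card_isFirstInWedge_lt_eval_le (hE : (E : Set (LineSegment 𝕜)).Pairwise (¬ Crosses · ·))
    (hV : ∀ e ∈ E, e.endpoints ⊆ V) :
    #{e ∈ E | ∃ c ∈ V, ∃ f, IsNextAbove E e f ∧ IsFirstInWedge V e f c ∧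
      c.2 < f.line.eval c.1} ≤ #V := by
  refine card_le_card_of_forall_subsingleton (fun e c => ∃ f, IsNextAbove E e f ∧
    IsFirstInWedge V e f c ∧ c.2 < f.line.eval c.1) (fun e he => (mem_filter.1 he).2) ?_
  rintro c - e₁ ⟨he₁, f₁, h₁, hc₁, hlt₁⟩ e₂ ⟨he₂, f₂, h₂, hc₂, hlt₂⟩
  exact eq_of_isFirstInWedge hE hV (mem_filter.1 he₁).1 (mem_filter.1 he₂).1 h₁ h₂ hc₁ hc₂
    (hc₂.mem_wedge.2.1.trans_lt hlt₁) (hc₁.mem_wedge.2.1.trans_lt hlt₂)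

open Classical in
lemma card_isFirstInWedge_eq_eval_le (hE : (E : Set (LineSegment 𝕜)).Pairwise (¬ Crosses · ·))
    (hV : ∀ e ∈ E, e.endpoints ⊆ V) :
    #{e ∈ E | ∃ c ∈ V, ∃ f, IsNextAbove E e f ∧ IsFirstInWedge V e f c ∧
      c.2 = f.line.eval c.1} ≤ #V := by
  refine card_le_card_of_forall_subsingleton (fun e c => ∃ f, IsNextAbove E e f ∧
    IsFirstInWedge V e f c ∧ c.2 = f.line.eval c.1) (fun e he => (mem_filter.1 he).2) ?_
  rintro c - e₁ ⟨he₁, f₁, h₁, hc₁, heq₁⟩ e₂ ⟨he₂, f₂, h₂, hc₂, heq₂⟩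
  have heq : f₁.line.eval c.1 = f₂.line.eval c.1 := heq₁.symm.trans heq₂
  exact eq_of_isFirstInWedge hE hV (mem_filter.1 he₁).1 (mem_filter.1 he₂).1 h₁ h₂ hc₁ hc₂
    ((h₂.eval_lt hc₂.mem_wedge.1.1).trans_eq heq.symm)
    ((h₁.eval_lt hc₁.mem_wedge.1.1).trans_eq heq)

lemma card_le_three_mul_card_of_not_crosses
    (hE : (E : Set (LineSegment 𝕜)).Pairwise (¬ Crosses · ·))
    (hV : ∀ e ∈ E, e.endpoints ⊆ V) : #E ≤ 3 * #V := by
  classical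
  have hcover : E ⊆ {e ∈ E | ∀ g ∈ E, g.leftPt = e.leftPt → g.line.slope ≤ e.line.slope} ∪
      ({e ∈ E | ∃ c ∈ V, ∃ f, IsNextAbove E e f ∧ IsFirstInWedge V e f c ∧
          c.2 < f.line.eval c.1} ∪
        {e ∈ E | ∃ c ∈ V, ∃ f, IsNextAbove E e f ∧ IsFirstInWedge V e f c ∧
          c.2 = f.line.eval c.1}) := by
    intro e he
    simp only [mem_union, mem_filter, he, true_and]
    by_cases htop : ∀ g ∈ E, g.leftPt = e.leftPt → g.line.slope ≤ e.line.slope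
    · exact Or.inl htop
    · push Not at htop
      obtain ⟨g, hg, hleft, hslope⟩ := htop
      obtain ⟨f, hf⟩ := exists_isNextAbove hg hleft hslope
      obtain ⟨c, hcV, hc⟩ := hf.exists_isFirstInWedge (hV e he (rightPt_mem_endpoints e))
        (hV f hf.mem (rightPt_mem_endpoints f))
      exact Or.inr (hc.mem_wedge.2.2.lt_or_eq.imp (fun h => ⟨c, hcV, f, hf, hc, h⟩)
        fun h => ⟨c, hcV, f, hf, hc, h⟩)
  have htop := card_topmost_le hE hV
  have hlt := card_isFirstInWedge_lt_eval_le hE hV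
  have heq := card_isFirstInWedge_eq_eval_le hE hV
  have := (card_le_card hcover).trans
    ((card_union_le _ _).trans (Nat.add_le_add_left (card_union_le _ _) _))
  lia

end Noncrossing

lemma card_le_three_mul_card_add_card_crossings {V : Finset (𝕜 × 𝕜)} {E : Finset (LineSegment 𝕜)}
    (hV : ∀ e ∈ E, e.endpoints ⊆ V) : #E ≤ 3 * #V + #(crossings E) := by
  classical
  induction E using Finset.strongInduction with
  | H E ih =>
    by_cases hE : (E : Set (LineSegment 𝕜)).Pairwise (¬ Crosses · ·)
    · exact (card_le_three_mul_card_of_not_crosses hE hV).trans (Nat.le_add_right _ _)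
    · simp only [Set.Pairwise, mem_coe, not_forall, not_not] at hE
      obtain ⟨e, he, f, hf, hne, hef⟩ := hE
      have herase := ih (E.erase e) (erase_ssubset he) fun g hg => hV g (mem_of_mem_erase hg)
      have hcrossings : crossings (E.erase e) ⊂ crossings E := by
        refine Finset.ssubset_iff_subset_ne.2 ⟨fun q hq => ?_, fun h => ?_⟩
        · simp only [mem_crossings, mem_erase] at hq ⊢
          exact ⟨hq.1.2, hq.2.1.2, hq.2.2⟩
        · have hmem : (e, f) ∈ crossings E := mem_crossings.2 ⟨he, hf, hne, hef⟩
          rw [← h, mem_crossings] at hmem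
          exact notMem_erase e E hmem.1
      have := card_lt_card hcrossings
      have := card_erase_add_one he
      lia

end LineSegment

section Sampling

variable {α β R : Type*} [DecidableEq α] [CommRing R]

/-- The probability that a random subset of `V`, containing each element independently with
probability `p`, equals the subset `S`. -/
def sampleWeight (V : Finset α) (p : R) (S : Finset α) : R := p ^ #S * (1 - p) ^ (#V - #S)

lemma sum_sampleWeight_Icc {V T : Finset α} (hT : T ⊆ V) (p : R) :
    ∑ S ∈ Icc T V, sampleWeight V p S = p ^ #T := by
  have hdisj {U : Finset α} (hU : U ∈ (V \ T).powerset) : Disjoint T U :=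
    (disjoint_sdiff (s := T)).mono_right (mem_powerset.1 hU)
  rw [Icc_eq_image_powerset hT, sum_image fun U hU U' hU' h => ?_]
  · calc ∑ U ∈ (V \ T).powerset, sampleWeight V p (T ∪ U)
        = ∑ U ∈ (V \ T).powerset, p ^ #T * (p ^ #U * (1 - p) ^ (#(V \ T) - #U)) := by
          refine sum_congr rfl fun U hU => ?_
          rw [sampleWeight, card_union_of_disjoint (hdisj hU), card_sdiff_of_subset hT,
            Nat.sub_add_eq, pow_add, mul_assoc]
      _ = p ^ #T := by
          rw [← mul_sum, sum_pow_mul_eq_add_pow, add_sub_cancel, one_pow, mul_one]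
  · rw [← union_sdiff_cancel_left (hdisj hU), h, union_sdiff_cancel_left (hdisj hU')]

lemma sum_sampleWeight_mul_card {V : Finset α} {X : Finset β} {T : β → Finset α} {t : ℕ}
    (hV : ∀ b ∈ X, T b ⊆ V) (ht : ∀ b ∈ X, #(T b) = t) (p : R) :
    ∑ S ∈ V.powerset, sampleWeight V p S * #{b ∈ X | T b ⊆ S} = p ^ t * #X := by
  calc ∑ S ∈ V.powerset, sampleWeight V p S * (#{b ∈ X | T b ⊆ S} : R)
      = ∑ S ∈ V.powerset, ∑ b ∈ X, if T b ⊆ S then sampleWeight V p S else 0 := by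
        simp only [← sum_filter, sum_const, nsmul_eq_mul, mul_comm]
    _ = ∑ b ∈ X, ∑ S ∈ Icc (T b) V, sampleWeight V p S := by
        rw [sum_comm]
        refine sum_congr rfl fun b _ => ?_
        rw [← sum_filter]
        congr 1
        ext S
        simp only [mem_filter, mem_powerset, mem_Icc, and_comm]
    _ = ∑ _b ∈ X, p ^ t :=
        sum_congr rfl fun b hb => by rw [sum_sampleWeight_Icc (hV b hb), ht b hb]
    _ = p ^ t * #X := by rw [sum_const, nsmul_eq_mul, mul_comm]

end Sampling

namespace LineSegment

variable {𝕜 R : Type*} [Field 𝕜] [LinearOrder 𝕜] [IsStrictOrderedRing 𝕜]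
  [CommRing R] [LinearOrder R] [IsStrictOrderedRing R]

lemma sq_mul_card_le_add_pow_four_mul_card_crossings {V : Finset (𝕜 × 𝕜)}
    {E : Finset (LineSegment 𝕜)} (hV : ∀ e ∈ E, e.endpoints ⊆ V)
    (hE : ∀ q ∈ crossings E, q.1.line ≠ q.2.line) {p : R} (hp : p ∈ Set.Icc 0 1) :
    p ^ 2 * #E ≤ 3 * p * #V + p ^ 4 * #(crossings E) := by
  let T (q : LineSegment 𝕜 × LineSegment 𝕜) : Finset (𝕜 × 𝕜) := q.1.endpoints ∪ q.2.endpoints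
  have hTV : ∀ q ∈ crossings E, T q ⊆ V := fun q hq =>
    union_subset (hV _ (mem_crossings.1 hq).1) (hV _ (mem_crossings.1 hq).2.1)
  have hT : ∀ q ∈ crossings E, #(T q) = 4 := fun q hq => by
    rw [card_union_of_disjoint ((mem_crossings.1 hq).2.2.2.disjoint_endpoints (hE q hq)),
      card_endpoints, card_endpoints]
  have hsample (S : Finset (𝕜 × 𝕜)) (hS : S ∈ V.powerset) :
      #{e ∈ E | e.endpoints ⊆ S} ≤ 3 * #{v ∈ V | {v} ⊆ S} + #{q ∈ crossings E | T q ⊆ S} := by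
    convert card_le_three_mul_card_add_card_crossings (V := S)
      (E := {e ∈ E | e.endpoints ⊆ S}) fun e he => (mem_filter.1 he).2 using 4
    · simp only [singleton_subset_iff, filter_mem_eq_inter]
      exact inter_eq_right.2 (mem_powerset.1 hS)
    · ext q
      simp only [T, mem_filter, mem_crossings, union_subset_iff]
      tauto
  have hweight (S : Finset (𝕜 × 𝕜)) : 0 ≤ sampleWeight V p S :=
    mul_nonneg (pow_nonneg hp.1 _) (pow_nonneg (sub_nonneg.2 hp.2) _)
  calc p ^ 2 * (#E : R)
      = ∑ S ∈ V.powerset, sampleWeight V p S * #{e ∈ E | e.endpoints ⊆ S} :=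
        (sum_sampleWeight_mul_card hV (fun e _ => card_endpoints e) p).symm
    _ ≤ ∑ S ∈ V.powerset, sampleWeight V p S *
          (3 * #{v ∈ V | {v} ⊆ S} + #{q ∈ crossings E | T q ⊆ S}) :=
        sum_le_sum fun S hS => mul_le_mul_of_nonneg_left (mod_cast hsample S hS) (hweight S)
    _ = 3 * (p ^ 1 * #V) + p ^ 4 * #(crossings E) := by
        rw [← sum_sampleWeight_mul_card (fun v hv => singleton_subset_iff.2 hv)
          (fun v _ => card_singleton v), ← sum_sampleWeight_mul_card hTV hT, mul_sum,
          ← sum_add_distrib]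
        exact sum_congr rfl fun S _ => by ring
    _ = 3 * p * #V + p ^ 4 * #(crossings E) := by ring

end LineSegment

lemma le_of_forall_sq_mul_le {N a b : ℝ} (ha : 0 < a)
    (h : ∀ p ∈ Set.Icc (0 : ℝ) 1, p ^ 2 * N ≤ 3 * p * a ^ 3 + p ^ 4 * b ^ 6) :
    N ≤ 4 * (a ^ 2 * b ^ 2 + a ^ 3) := by
  rcases le_or_gt (b ^ 2) a with hba | hab
  · have hb : (b ^ 2) ^ 3 ≤ a ^ 3 := by gcongr
    have := h 1 ⟨zero_le_one, le_rfl⟩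
    nlinarith [mul_nonneg (sq_nonneg a) (sq_nonneg b)]
  · have hb : 0 < b ^ 2 := ha.trans hab
    -- This `p` balances the two terms on the right-hand side of `h`.
    obtain ⟨p, hp, hpb⟩ : ∃ p : ℝ, 0 < p ∧ p * b ^ 2 = a :=
      ⟨a / b ^ 2, div_pos ha hb, div_mul_cancel₀ a hb.ne'⟩
    have hp1 : p ≤ 1 := le_of_mul_le_mul_right (by linarith) hb
    have hN : N ≤ 4 * (a ^ 2 * b ^ 2) := by
      refine le_of_mul_le_mul_left ((h p ⟨hp.le, hp1⟩).trans_eq ?_) (pow_pos hp 2)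
      rw [← hpb]
      ring
    linarith [pow_pos ha 3]

namespace NonverticalLine

variable {𝕜 : Type*} [Field 𝕜] [LinearOrder 𝕜]

/-- The incidences between the points `P` and the lines `L`. -/
def incidences (P : Finset (𝕜 × 𝕜)) (L : Finset (NonverticalLine 𝕜)) :
    Finset ((𝕜 × 𝕜) × NonverticalLine 𝕜) :=
  {q ∈ P ×ˢ L | q.1.2 = q.2.eval q.1.1}

lemma mem_incidences {P : Finset (𝕜 × 𝕜)} {L : Finset (NonverticalLine 𝕜)}
    {q : (𝕜 × 𝕜) × NonverticalLine 𝕜} :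
    q ∈ incidences P L ↔ q.1 ∈ P ∧ q.2 ∈ L ∧ q.1.2 = q.2.eval q.1.1 := by
  simp only [incidences, mem_filter, mem_product, and_assoc]

lemma finite_setOf_segment (P : Finset (𝕜 × 𝕜)) (L : Finset (NonverticalLine 𝕜)) :
    {e : LineSegment 𝕜 | e.line ∈ L ∧ e.endpoints ⊆ P}.Finite := by
  classical
  refine Set.Finite.of_injOn (f := fun e : LineSegment 𝕜 => (e.line, e.leftPt, e.rightPt))
    (fun e he => ?_) (fun e _ f _ h => ?_) (finite_toSet (L ×ˢ P ×ˢ P))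
  · exact mk_mem_product he.1
      (mk_mem_product (he.2 e.leftPt_mem_endpoints) (he.2 e.rightPt_mem_endpoints))
  · obtain ⟨hline, hpts⟩ := Prod.mk.inj h
    obtain ⟨hleft, hright⟩ := Prod.mk.inj hpts
    exact LineSegment.ext hline (congrArg Prod.fst hleft) (congrArg Prod.fst hright)

open Classical in
/-- The segments joining consecutive points of `P` on the lines of `L`. -/
noncomputable def consecutiveSegments (P : Finset (𝕜 × 𝕜)) (L : Finset (NonverticalLine 𝕜)) :
    Finset (LineSegment 𝕜) :=
  {e ∈ (finite_setOf_segment P L).toFinset |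
    ∀ v ∈ P, v.2 = e.line.eval v.1 → v.1 ∉ Set.Ioo e.left e.right}

section Consecutive

variable {P : Finset (𝕜 × 𝕜)} {L : Finset (NonverticalLine 𝕜)} {e f : LineSegment 𝕜}

lemma mem_consecutiveSegments :
    e ∈ consecutiveSegments P L ↔ e.line ∈ L ∧ e.endpoints ⊆ P ∧
      ∀ v ∈ P, v.2 = e.line.eval v.1 → v.1 ∉ Set.Ioo e.left e.right := by
  simp only [consecutiveSegments, mem_filter, Set.Finite.mem_toFinset, Set.mem_ofPred_eq, and_assoc]

lemma endpoint_notMem_Ioo_of_mem_consecutiveSegments (he : e ∈ consecutiveSegments P L)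
    (hf : f ∈ consecutiveSegments P L) (hline : e.line = f.line) {v : 𝕜 × 𝕜}
    (hv : v ∈ f.endpoints) : v.1 ∉ Set.Ioo e.left e.right :=
  (mem_consecutiveSegments.1 he).2.2 v ((mem_consecutiveSegments.1 hf).2.1 hv)
    (hline ▸ LineSegment.snd_eq_eval_of_mem_endpoints hv)

lemma eq_of_mem_consecutiveSegments (he : e ∈ consecutiveSegments P L)
    (hf : f ∈ consecutiveSegments P L) (hline : e.line = f.line) {t : 𝕜}
    (hte : t ∈ Set.Ioo e.left e.right) (htf : t ∈ Set.Ioo f.left f.right) : e = f := by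
  have hfe {v : 𝕜 × 𝕜} (hv : v ∈ f.endpoints) : v.1 ∉ Set.Ioo e.left e.right :=
    endpoint_notMem_Ioo_of_mem_consecutiveSegments he hf hline hv
  have hef {v : 𝕜 × 𝕜} (hv : v ∈ e.endpoints) : v.1 ∉ Set.Ioo f.left f.right :=
    endpoint_notMem_Ioo_of_mem_consecutiveSegments hf he hline.symm hv
  refine LineSegment.ext hline (le_antisymm ?_ ?_) (le_antisymm ?_ ?_) <;> by_contra! hlt
  · exact hef e.leftPt_mem_endpoints ⟨hlt, hte.1.trans htf.2⟩
  · exact hfe f.leftPt_mem_endpoints ⟨hlt, htf.1.trans hte.2⟩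
  · exact hfe f.rightPt_mem_endpoints ⟨hte.1.trans htf.2, hlt⟩
  · exact hef e.rightPt_mem_endpoints ⟨htf.1.trans hte.2, hlt⟩

lemma line_ne_of_mem_crossings_consecutiveSegments {q : LineSegment 𝕜 × LineSegment 𝕜}
    (hq : q ∈ LineSegment.crossings (consecutiveSegments P L)) : q.1.line ≠ q.2.line := by
  obtain ⟨he, hf, hne, t, ht, -⟩ := LineSegment.mem_crossings.1 hq
  exact fun hline => hne (eq_of_mem_consecutiveSegments he hf hline ht.1 ht.2)

lemma card_crossings_consecutiveSegments_le (P : Finset (𝕜 × 𝕜)) (L : Finset (NonverticalLine 𝕜)) :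
    #(LineSegment.crossings (consecutiveSegments P L)) ≤ #L ^ 2 := by
  rw [sq, ← card_product]
  refine card_le_card_of_injOn (fun q => (q.1.line, q.2.line)) (fun q hq => ?_)
    fun q hq r hr hqr => ?_
  · obtain ⟨he, hf, -⟩ := LineSegment.mem_crossings.1 hq
    exact mk_mem_product (mem_consecutiveSegments.1 he).1 (mem_consecutiveSegments.1 hf).1
  · obtain ⟨hline₁, hline₂⟩ := Prod.mk.inj hqr
    have hne := line_ne_of_mem_crossings_consecutiveSegments hq
    obtain ⟨he, hf, -, t, ht, htq⟩ := LineSegment.mem_crossings.1 hq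
    obtain ⟨he', hf', -, u, hu, hur⟩ := LineSegment.mem_crossings.1 hr
    rw [← hline₁, ← hline₂] at hur
    obtain rfl : t = u := by
      by_contra htu
      exact hne (eq_of_eval_eq_of_eval_eq htu htq hur)
    exact Prod.ext (eq_of_mem_consecutiveSegments he he' hline₁ ht.1 hu.1)
      (eq_of_mem_consecutiveSegments hf hf' hline₂ ht.2 hu.2)

lemma exists_mem_consecutiveSegments {ℓ : NonverticalLine 𝕜} (hℓ : ℓ ∈ L) {v w : 𝕜 × 𝕜}
    (hv : v ∈ P) (hvℓ : v.2 = ℓ.eval v.1) (hw : w ∈ P) (hwℓ : w.2 = ℓ.eval w.1)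
    (hvw : v.1 < w.1) : ∃ e ∈ consecutiveSegments P L, e.leftPt = v ∧ e.line = ℓ := by
  obtain ⟨u, hu, hmin⟩ := exists_min_image {u ∈ P | u.2 = ℓ.eval u.1 ∧ v.1 < u.1} Prod.fst
    ⟨w, mem_filter.2 ⟨hw, hwℓ, hvw⟩⟩
  obtain ⟨huP, huℓ, hvu⟩ := mem_filter.1 hu
  have hleft : (v.1, ℓ.eval v.1) = v := Prod.ext rfl hvℓ.symm
  have hright : (u.1, ℓ.eval u.1) = u := Prod.ext rfl huℓ.symm
  refine ⟨⟨ℓ, v.1, u.1, hvu⟩, mem_consecutiveSegments.2 ⟨hℓ, ?_, fun x hx hxℓ hmem => ?_⟩,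
    hleft, rfl⟩
  · simp only [LineSegment.endpoints, LineSegment.leftPt, LineSegment.rightPt, hleft, hright]
    exact insert_subset hv (singleton_subset_iff.2 huP)
  · exact hmem.2.not_ge (hmin x (mem_filter.2 ⟨hx, hxℓ, hmem.1⟩))

lemma card_incidences_le_card_add_card_consecutiveSegments (P : Finset (𝕜 × 𝕜))
    (L : Finset (NonverticalLine 𝕜)) :
    #(incidences P L) ≤ #L + #(consecutiveSegments P L) := by
  classical
  let IsLast (q : (𝕜 × 𝕜) × NonverticalLine 𝕜) : Prop :=
    ∀ w ∈ P, w.2 = q.2.eval w.1 → w.1 ≤ q.1.1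
  rw [← card_filter_add_card_filter_not IsLast]
  refine Nat.add_le_add ?_ ?_
  · refine card_le_card_of_injOn Prod.snd (fun q hq => ?_) fun q hq r hr hline => ?_
    · exact (mem_incidences.1 (mem_filter.1 hq).1).2.1
    · obtain ⟨hqI, hqlast⟩ := mem_filter.1 hq
      obtain ⟨hrI, hrlast⟩ := mem_filter.1 hr
      obtain ⟨hqP, -, hqℓ⟩ := mem_incidences.1 hqI
      obtain ⟨hrP, -, hrℓ⟩ := mem_incidences.1 hrI
      have hfst : q.1.1 = r.1.1 :=
        (hrlast q.1 hqP (hline ▸ hqℓ)).antisymm (hqlast r.1 hrP (hline ▸ hrℓ))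
      exact Prod.ext (Prod.ext hfst (by rw [hqℓ, hrℓ, hline, hfst])) hline
  · refine (card_le_card (fun q hq => ?_)).trans
      (card_image_le (f := fun e : LineSegment 𝕜 => (e.leftPt, e.line)))
    obtain ⟨hqI, hqlast⟩ := mem_filter.1 hq
    obtain ⟨hqP, hqL, hqℓ⟩ := mem_incidences.1 hqI
    simp only [IsLast, not_forall, not_le] at hqlast
    obtain ⟨w, hw, hwℓ, hlt⟩ := hqlast
    obtain ⟨e, he, hleft, hline⟩ := exists_mem_consecutiveSegments hqL hqP hqℓ hw hwℓ hlt
    exact mem_image.2 ⟨e, he, Prod.ext hleft hline⟩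

end Consecutive

variable [IsStrictOrderedRing 𝕜]

/-- The **Szemerédi–Trotter theorem**, for non-vertical lines over an ordered field. -/
theorem card_incidences_le (P : Finset (𝕜 × 𝕜)) (L : Finset (NonverticalLine 𝕜)) :
    (#(incidences P L) : ℝ) ≤
      4 * ((#P : ℝ) ^ (2 / 3 : ℝ) * (#L : ℝ) ^ (2 / 3 : ℝ) + #P) + #L := by
  rcases P.eq_empty_or_nonempty with rfl | hP
  · simp only [incidences, empty_product, filter_empty, card_empty, Nat.cast_zero]
    positivity
  have hpow (m k : ℕ) : ((m : ℝ) ^ (1 / 3 : ℝ)) ^ k = (m : ℝ) ^ (k / 3 : ℝ) := by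
    rw [← Real.rpow_mul_natCast m.cast_nonneg, one_div_mul_eq_div]
  have hsample : ∀ p ∈ Set.Icc (0 : ℝ) 1, p ^ 2 * #(consecutiveSegments P L) ≤
      3 * p * ((#P : ℝ) ^ (1 / 3 : ℝ)) ^ 3 + p ^ 4 * ((#L : ℝ) ^ (1 / 3 : ℝ)) ^ 6 := by
    intro p hp
    have hcross : (#(LineSegment.crossings (consecutiveSegments P L)) : ℝ) ≤ (#L : ℝ) ^ 2 :=
      mod_cast card_crossings_consecutiveSegments_le P L
    have hP3 : ((#P : ℝ) ^ (1 / 3 : ℝ)) ^ 3 = #P := by rw [hpow]; norm_num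
    have hL6 : ((#L : ℝ) ^ (1 / 3 : ℝ)) ^ 6 = (#L : ℝ) ^ 2 := by rw [hpow]; norm_num
    rw [hP3, hL6]
    refine (LineSegment.sq_mul_card_le_add_pow_four_mul_card_crossings
      (fun e he => (mem_consecutiveSegments.1 he).2.1)
      (fun q hq => line_ne_of_mem_crossings_consecutiveSegments hq) hp).trans ?_
    gcongr
  have hsegments := le_of_forall_sq_mul_le (by have := hP.card_pos; positivity) hsample
  simp only [hpow] at hsegments
  norm_num at hsegments
  have hinc : (#(incidences P L) : ℝ) ≤ #L + #(consecutiveSegments P L) :=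
    mod_cast card_incidences_le_card_add_card_consecutiveSegments P L
  linarith

end NonverticalLine

section Minors

open NonverticalLine

variable {𝕜 ι : Type*} [Field 𝕜]

/-- The line on which a column of a two-row matrix must lie for its minor with the column `i` of `A`
to equal `α`. The division is by zero unless `A 0 i ≠ 0`, which is the case where that line is
non-vertical. -/
def minorLine (A : Matrix (Fin 2) ι 𝕜) (α : 𝕜) (i : ι) : NonverticalLine 𝕜 :=
  ⟨A 1 i / A 0 i, α / A 0 i⟩

lemma eq_eval_minorLine_iff {A : Matrix (Fin 2) ι 𝕜} {α : 𝕜} {i j : ι} (hi : A 0 i ≠ 0) :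
    A 1 j = (minorLine A α i).eval (A 0 j) ↔ A 0 i * A 1 j - A 0 j * A 1 i = α := by
  simp only [minorLine, eval]
  field_simp
  constructor <;> intro h <;> linear_combination h

lemma injOn_minorLine {A : Matrix (Fin 2) ι 𝕜}
    (hA : Pairwise fun i j => A 0 i * A 1 j - A 0 j * A 1 i ≠ 0) (α : 𝕜) :
    Set.InjOn (minorLine A α) {i | A 0 i ≠ 0} := by
  intro i hi j hj hij
  by_contra hne
  have hslope := congrArg slope hij
  simp only [minorLine, div_eq_div_iff hi hj] at hslope
  exact hA hne (by linear_combination -hslope)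

lemma injective_column {A : Matrix (Fin 2) ι 𝕜}
    (hA : Pairwise fun i j => A 0 i * A 1 j - A 0 j * A 1 i ≠ 0) :
    Function.Injective fun j => (A 0 j, A 1 j) := by
  intro i j hij
  by_contra hne
  obtain ⟨h0, h1⟩ := Prod.mk.inj hij
  exact hA hne (by rw [h0, h1, mul_comm, sub_self])

lemma subsingleton_setOf_apply_zero_eq_zero {A : Matrix (Fin 2) ι 𝕜}
    (hA : Pairwise fun i j => A 0 i * A 1 j - A 0 j * A 1 i ≠ 0) :
    {i | A 0 i = 0}.Subsingleton := by
  intro i hi j hj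
  by_contra hne
  rw [Set.mem_ofPred_eq] at hi hj
  exact hA hne (by rw [hi, hj, zero_mul, zero_mul, sub_self])

variable [LinearOrder 𝕜] [Fintype ι]

lemma exists_card_minors_eq_le_card_incidences {A : Matrix (Fin 2) ι 𝕜}
    (hA : Pairwise fun i j => A 0 i * A 1 j - A 0 j * A 1 i ≠ 0) (α : 𝕜) :
    ∃ (P : Finset (𝕜 × 𝕜)) (L : Finset (NonverticalLine 𝕜)),
      #P ≤ Fintype.card ι ∧ #L ≤ Fintype.card ι ∧
        {p : ι × ι | A 0 p.1 * A 1 p.2 - A 0 p.2 * A 1 p.1 = α}.ncard ≤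
          #(incidences P L) + Fintype.card ι := by
  classical
  set M := {p : ι × ι | A 0 p.1 * A 1 p.2 - A 0 p.2 * A 1 p.1 = α}
  let P : Finset (𝕜 × 𝕜) := univ.image fun j => (A 0 j, A 1 j)
  let L : Finset (NonverticalLine 𝕜) := univ.image (minorLine A α)
  have hnonvertical : {p ∈ M | A 0 p.1 ≠ 0}.ncard ≤ #(incidences P L) := by
    rw [← Set.ncard_coe_finset]
    refine Set.ncard_le_ncard_of_injOn (fun p => ((A 0 p.2, A 1 p.2), minorLine A α p.1))
      (fun p hp => ?_) (fun p hp q hq hpq => ?_) (finite_toSet _)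
    · exact mem_incidences.2 ⟨mem_image_of_mem _ (mem_univ _), mem_image_of_mem _ (mem_univ _),
        (eq_eval_minorLine_iff hp.2).2 hp.1⟩
    · obtain ⟨hpt, hline⟩ := Prod.mk.inj hpq
      exact Prod.ext (injOn_minorLine hA α hp.2 hq.2 hline) (injective_column hA hpt)
  have hvertical : {p ∈ M | A 0 p.1 = 0}.ncard ≤ Fintype.card ι := by
    rw [← Nat.card_eq_fintype_card, ← Set.ncard_univ]
    exact Set.ncard_le_ncard_of_injOn Prod.snd (fun _ _ => Set.mem_univ _) fun p hp q hq hpq =>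
      Prod.ext (subsingleton_setOf_apply_zero_eq_zero hA hp.2 hq.2) hpq
  refine ⟨P, L, card_image_le, card_image_le, ?_⟩
  calc M.ncard = ({p ∈ M | A 0 p.1 ≠ 0} ∪ {p ∈ M | A 0 p.1 = 0}).ncard := by
        congr 1
        ext p
        simp only [Set.mem_union, Set.mem_ofPred_eq, ← and_or_left, ne_eq, em', and_true]
    _ ≤ {p ∈ M | A 0 p.1 ≠ 0}.ncard + {p ∈ M | A 0 p.1 = 0}.ncard := Set.ncard_union_le _ _
    _ ≤ #(incidences P L) + Fintype.card ι := Nat.add_le_add hnonvertical hvertical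

theorem repeated_two_by_two_minors_upper_bound_general [IsStrictOrderedRing 𝕜]
    (A : Matrix (Fin 2) ι 𝕜) (hA : Pairwise fun i j => A 0 i * A 1 j - A 0 j * A 1 i ≠ 0) (α : 𝕜) :
    ({p : ι × ι | A 0 p.1 * A 1 p.2 - A 0 p.2 * A 1 p.1 = α}.ncard : ℝ) ≤
      10 * (Fintype.card ι : ℝ) ^ (4 / 3 : ℝ) := by
  obtain ⟨P, L, hP, hL, hM⟩ := exists_card_minors_eq_le_card_incidences hA α
  set n := Fintype.card ι
  have hn : (n : ℝ) ≤ (n : ℝ) ^ (4 / 3 : ℝ) := by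
    rcases n.eq_zero_or_pos with h0 | hpos
    · rw [h0, Nat.cast_zero, Real.zero_rpow (by norm_num)]
    · exact Real.self_le_rpow_of_one_le (mod_cast hpos) (by norm_num)
  calc _ ≤ (#(incidences P L) : ℝ) + n := mod_cast hM
    _ ≤ 4 * ((#P : ℝ) ^ (2 / 3 : ℝ) * (#L : ℝ) ^ (2 / 3 : ℝ) + #P) + #L + n := by
        gcongr
        exact card_incidences_le P L
    _ ≤ 4 * ((n : ℝ) ^ (2 / 3 : ℝ) * (n : ℝ) ^ (2 / 3 : ℝ) + n) + n + n := by gcongr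
    _ = 4 * (n : ℝ) ^ (4 / 3 : ℝ) + 6 * n := by
        rw [← Real.rpow_add' n.cast_nonneg (by norm_num)]
        norm_num
        ring
    _ ≤ 10 * (n : ℝ) ^ (4 / 3 : ℝ) := by linarith

end Minors

lemma IsTotallyPositive.minor_pos {n : ℕ} {A : Matrix (Fin 2) (Fin n) ℝ} (hA : IsTotallyPositive A)
    {i j : Fin n} (hij : i < j) : 0 < A 0 i * A 1 j - A 0 j * A 1 i := by
  have := hA 2 ![0, 1] ![i, j] (by simp [Fin.strictMono_iff_lt_succ])
    (by simpa [Fin.strictMono_iff_lt_succ])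
  rwa [Matrix.det_fin_two] at this

lemma IsTotallyPositive.pairwise_minor_ne_zero {n : ℕ} {A : Matrix (Fin 2) (Fin n) ℝ}
    (hA : IsTotallyPositive A) : Pairwise fun i j => A 0 i * A 1 j - A 0 j * A 1 i ≠ 0 := by
  intro i j hij
  rcases hij.lt_or_gt with h | h
  · exact (hA.minor_pos h).ne'
  · have := hA.minor_pos h
    linarith

theorem repeated_two_by_two_minors_upper_bound :
    ∃ C : ℝ, 0 < C ∧ ∀ (n : ℕ), 2 ≤ n →
      ∀ A : Matrix (Fin 2) (Fin n) ℝ, IsTotallyPositive A →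
        ∀ α : ℝ,
          (({p : Fin n × Fin n | p.1 < p.2 ∧
              A 0 p.1 * A 1 p.2 - A 0 p.2 * A 1 p.1 = α} : Set (Fin n × Fin n)).ncard : ℝ)
            ≤ C * (n : ℝ) ^ ((4 : ℝ) / 3) := by
  refine ⟨10, by norm_num, fun n _ A hA α => ?_⟩
  have hsub := Set.ncard_le_ncard (fun p hp => hp.2 : {p : Fin n × Fin n | p.1 < p.2 ∧
    A 0 p.1 * A 1 p.2 - A 0 p.2 * A 1 p.1 = α} ⊆ {p | A 0 p.1 * A 1 p.2 - A 0 p.2 * A 1 p.1 = α})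
  have := repeated_two_by_two_minors_upper_bound_general A hA.pairwise_minor_ne_zero α
  rw [Fintype.card_fin] at this
  exact (Nat.cast_le.2 hsub).trans this
end

section
/- There exists a constant c > 0 such that for every sufficiently large n there exists a 2×n totally positive real matrix A with at least c·n^(4/3) pairs of column indices 1 ≤ i < j ≤ n for which the 2×2 minor of A on columns i and j equals 1. -/
open Filter Function

/-- The pairs `i < j` of columns of a `2 × n` matrix whose minor is `1`; this is the quantity to be
made large. -/
def unitMinorPairs {R : Type*} [CommRing R] {n : ℕ} (A : Matrix (Fin 2) (Fin n) R) :
    Set (Fin n × Fin n) :=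
  {p | p.1 < p.2 ∧ A 0 p.1 * A 1 p.2 - A 0 p.2 * A 1 p.1 = 1}

lemma isTotallyPositive_of_entries_pos_of_minors_pos {n : ℕ} {A : Matrix (Fin 2) (Fin n) ℝ}
    (hentry : ∀ a i, 0 < A a i)
    (hminor : ∀ i j, i < j → 0 < A 0 i * A 1 j - A 0 j * A 1 i) : IsTotallyPositive A := by
  intro k r c hr hc
  have hk : k ≤ 2 := by simpa using Fintype.card_le_of_injective r hr.injective
  interval_cases k
  · simp
  · simpa only [Matrix.det_fin_one, Matrix.submatrix_apply] using hentry _ _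
  · have hlt : r 0 < r 1 := hr (by decide)
    have hr0 : r 0 = 0 := by omega
    have hr1 : r 1 = 1 := by omega
    simpa only [Matrix.det_fin_two, Matrix.submatrix_apply, hr0, hr1]
      using hminor _ _ (hc (by decide))

lemma exists_isTotallyPositive_minor_eq {n : ℕ} {w s : Fin n → ℝ} (hw : ∀ i, 0 < w i)
    (hs : StrictMono s) :
    ∃ A : Matrix (Fin 2) (Fin n) ℝ, IsTotallyPositive A ∧
      ∀ i j, A 0 i * A 1 j - A 0 j * A 1 i = w i * w j * (s j - s i) := by
  -- Shifting all slopes by `L` makes the second row positive without changing any minor.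
  obtain ⟨L, hL⟩ : ∃ L, ∀ i, L < s i :=
    (eventually_all.2 fun i => eventually_lt_atBot (s i)).exists
  let A : Matrix (Fin 2) (Fin n) ℝ := Matrix.of ![w, fun i => w i * (s i - L)]
  have hminor (i j : Fin n) : A 0 i * A 1 j - A 0 j * A 1 i = w i * w j * (s j - s i) := by
    change w i * (w j * (s j - L)) - w j * (w i * (s i - L)) = _
    ring
  refine ⟨A, isTotallyPositive_of_entries_pos_of_minors_pos ?_ fun i j hij => ?_, hminor⟩
  · exact Fin.forall_fin_two.2 ⟨hw, fun i => mul_pos (hw i) (sub_pos.2 (hL i))⟩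
  · rw [hminor]
    exact mul_pos (mul_pos (hw i) (hw j)) (sub_pos.2 (hs hij))

lemma exists_orderEmbedding_extending {α β : Type*} [Finite α] [LinearOrder β] [Infinite β]
    {s : α → β} (hs : Injective s) {n : ℕ} (hn : Nat.card α ≤ n) :
    ∃ (σ : Fin n ↪o β) (f : α → Fin n), ∀ a, σ (f a) = s a := by
  have := Fintype.ofFinite α
  obtain ⟨S, hsub, hS⟩ := Infinite.exists_superset_card_eq (Finset.univ.image s) n <| by
    rwa [Finset.card_image_of_injective _ hs, Finset.card_univ, ← Nat.card_eq_fintype_card]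
  have hrange (a : α) : s a ∈ Set.range (S.orderEmbOfFin hS) := by
    rw [S.range_orderEmbOfFin hS]
    exact hsub (Finset.mem_image_of_mem s (Finset.mem_univ a))
  choose f hf using hrange
  exact ⟨S.orderEmbOfFin hS, f, hf⟩

lemma exists_isTotallyPositive_ncard_le_unitMinorPairs {α : Type*} [Finite α] {w s : α → ℝ}
    (hw : ∀ a, 0 < w a) (hs : Injective s) {n : ℕ} (hn : Nat.card α ≤ n) :
    ∃ A : Matrix (Fin 2) (Fin n) ℝ, IsTotallyPositive A ∧
      {q : α × α | w q.1 * w q.2 * (s q.2 - s q.1) = 1}.ncard ≤ (unitMinorPairs A).ncard := by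
  obtain ⟨σ, f, hf⟩ := exists_orderEmbedding_extending hs hn
  have hfinj : Injective f := fun a b hab => hs <| by rw [← hf, ← hf, hab]
  have hextend (i : Fin n) : 0 < extend f w 1 i := by
    classical rw [extend_def]
    split_ifs
    exacts [hw _, one_pos]
  obtain ⟨A, hA, hminor⟩ := exists_isTotallyPositive_minor_eq hextend σ.strictMono
  refine ⟨A, hA, Set.ncard_le_ncard_of_injOn (Prod.map f f) ?_ (hfinj.prodMap hfinj).injOn⟩
  rintro ⟨a, b⟩ (hab : w a * w b * (s b - s a) = 1)
  have hlt : s a < s b :=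
    sub_pos.1 (pos_of_mul_pos_right (hab ▸ one_pos) (mul_pos (hw a) (hw b)).le)
  refine ⟨σ.lt_iff_lt.1 ?_, ?_⟩
  · simpa only [Prod.map_fst, Prod.map_snd, hf] using hlt
  · simpa only [hminor, Prod.map_fst, Prod.map_snd, hf, hfinj.extend_apply] using hab

lemma eventually_mul_add_pos {a : ℝ} (ha : 0 < a) (b : ℝ) : ∀ᶠ K in atTop, 0 < a * K + b :=
  (tendsto_atTop_add_const_right _ b (tendsto_id.const_mul_atTop ha)).eventually_gt_atTop 0

lemma eventually_mul_add_ne_zero {a b : ℝ} (h : a ≠ 0 ∨ b ≠ 0) :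
    ∀ᶠ K in atTop, a * K + b ≠ 0 := by
  rcases eq_or_ne a 0 with rfl | ha
  · filter_upwards with K
    simpa using h
  · filter_upwards [eventually_ne_atTop (-b / a)] with K hK hzero
    exact hK ((eq_div_iff ha).2 (by linarith))

lemma eventually_injective {ι β γ : Type*} [Finite ι] {F : Filter γ} {f : γ → ι → β}
    (h : ∀ i j, i ≠ j → ∀ᶠ K in F, f K i ≠ f K j) : ∀ᶠ K in F, Injective (f K) := by
  have hall : ∀ᶠ K in F, ∀ i j, i ≠ j → f K i ≠ f K j := by
    simpa only [eventually_all] using h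
  filter_upwards [hall] with K hK i j
  exact not_imp_not.1 (hK i j)

section Incidences

variable {ι κ : Type*}

/-- The incidences between the points `p i = (x, y)` and the nonvertical lines `y = m * x + b`,
where the line `ℓ j` is encoded as the pair `(m, b)`. -/
def incidences (p : ι → ℝ × ℝ) (ℓ : κ → ℝ × ℝ) : Set (ι × κ) :=
  {t | (p t.1).2 = (ℓ t.2).1 * (p t.1).1 + (ℓ t.2).2}

/-- The slope of the vector attached to a line (left summand) or a point (right summand). The
formulas for slope and weight dehomogenise the identity
`(K + m) * ((K + 1) * x + y) + b = (K + 1 + m) * (K * x + y) + (m * x + b - y)`. -/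
noncomputable def incidenceSlope (K : ℝ) : (ℝ × ℝ) ⊕ (ℝ × ℝ) → ℝ
  | .inl (m, b) => -b / (K + m)
  | .inr (x, y) => (K + 1) * x + y

/-- The weight of the vector attached to a line (left summand) or a point (right summand), chosen so
that the minor of an incident line and point is `1`. -/
noncomputable def incidenceWeight (K : ℝ) : (ℝ × ℝ) ⊕ (ℝ × ℝ) → ℝ
  | .inl (m, _) => (K + m) / (K + 1 + m)
  | .inr (x, y) => 1 / (K * x + y)

lemma incidenceWeight_mul_mul_sub_eq_one {K : ℝ} {ℓ p : ℝ × ℝ}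
    (hℓ : incidenceWeight K (.inl ℓ) ≠ 0) (hp : incidenceWeight K (.inr p) ≠ 0)
    (h : p.2 = ℓ.1 * p.1 + ℓ.2) :
    incidenceWeight K (.inl ℓ) * incidenceWeight K (.inr p) *
      (incidenceSlope K (.inr p) - incidenceSlope K (.inl ℓ)) = 1 := by
  obtain ⟨m, b⟩ := ℓ
  obtain ⟨x, y⟩ := p
  simp only [incidenceWeight, incidenceSlope] at *
  obtain ⟨hnum, hden⟩ := div_ne_zero_iff.1 hℓ
  have hheight := (div_ne_zero_iff.1 hp).2
  field_simp
  linear_combination -h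

lemma eventually_incidenceWeight_inl_pos (ℓ : ℝ × ℝ) :
    ∀ᶠ K in atTop, 0 < incidenceWeight K (.inl ℓ) := by
  filter_upwards [eventually_gt_atTop (-ℓ.1)] with K hK
  exact div_pos (by linarith) (by linarith)

lemma eventually_incidenceWeight_inr_pos {p : ℝ × ℝ} (hp : 0 < p.1) :
    ∀ᶠ K in atTop, 0 < incidenceWeight K (.inr p) := by
  filter_upwards [eventually_mul_add_pos hp p.2] with K hK
  exact one_div_pos.2 (by linarith)

lemma eventually_incidenceSlope_inl_ne {ℓ ℓ' : ℝ × ℝ} (hℓ : ℓ.2 ≠ 0) (hne : ℓ ≠ ℓ') :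
    ∀ᶠ K in atTop, incidenceSlope K (.inl ℓ) ≠ incidenceSlope K (.inl ℓ') := by
  obtain ⟨m, b⟩ := ℓ
  obtain ⟨m', b'⟩ := ℓ'
  have hcoeff : b - b' ≠ 0 ∨ b * m' - b' * m ≠ 0 := by
    by_contra! hzero
    obtain rfl : b = b' := sub_eq_zero.1 hzero.1
    exact hne (by rw [mul_left_cancel₀ hℓ (sub_eq_zero.1 hzero.2)])
  filter_upwards [eventually_mul_add_ne_zero hcoeff, eventually_gt_atTop (-m),
    eventually_gt_atTop (-m')] with K hK hm hm' heq
  have hcross := (div_eq_div_iff (show K + m ≠ 0 by linarith) (show K + m' ≠ 0 by linarith)).1 heq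
  exact hK (by linear_combination -hcross)

lemma eventually_incidenceSlope_inr_ne {p p' : ℝ × ℝ} (hne : p ≠ p') :
    ∀ᶠ K in atTop, incidenceSlope K (.inr p) ≠ incidenceSlope K (.inr p') := by
  obtain ⟨x, y⟩ := p
  obtain ⟨x', y'⟩ := p'
  have hcoeff : x - x' ≠ 0 ∨ x + y - (x' + y') ≠ 0 := by
    by_contra! hzero
    exact hne (Prod.ext (sub_eq_zero.1 hzero.1) (by dsimp only; linarith))
  filter_upwards [eventually_mul_add_ne_zero hcoeff] with K hK
    (heq : (K + 1) * x + y = (K + 1) * x' + y')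
  exact hK (by linear_combination heq)

lemma eventually_incidenceSlope_inl_lt_inr {ℓ p : ℝ × ℝ} (hℓ : 0 < ℓ.2) (hp : 0 < p.1) :
    ∀ᶠ K in atTop, incidenceSlope K (.inl ℓ) < incidenceSlope K (.inr p) := by
  filter_upwards [eventually_gt_atTop (-ℓ.1), eventually_mul_add_pos hp (p.1 + p.2)]
    with K hden hnum
  calc incidenceSlope K (.inl ℓ) < 0 := div_neg_of_neg_of_pos (neg_lt_zero.2 hℓ) (by linarith)
    _ < K * p.1 + (p.1 + p.2) := by linarith
    _ = incidenceSlope K (.inr p) := by simp only [incidenceSlope]; ring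

variable [Finite ι] [Finite κ] {p : ι → ℝ × ℝ} {ℓ : κ → ℝ × ℝ}

lemma eventually_injective_incidenceSlope (hp : Injective p) (hℓ : Injective ℓ)
    (hp_pos : ∀ i, 0 < (p i).1) (hℓ_pos : ∀ j, 0 < (ℓ j).2) :
    ∀ᶠ K in atTop, Injective (incidenceSlope K ∘ Sum.map ℓ p) := by
  apply eventually_injective
  rintro (j | i) (j' | i') hne
  · exact eventually_incidenceSlope_inl_ne (hℓ_pos j).ne' (hℓ.ne (ne_of_apply_ne Sum.inl hne))
  · exact (eventually_incidenceSlope_inl_lt_inr (hℓ_pos j) (hp_pos i')).mono fun _ => ne_of_lt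
  · exact (eventually_incidenceSlope_inl_lt_inr (hℓ_pos j') (hp_pos i)).mono fun _ => ne_of_gt
  · exact eventually_incidenceSlope_inr_ne (hp.ne (ne_of_apply_ne Sum.inr hne))

lemma eventually_incidenceWeight_pos (ℓ : κ → ℝ × ℝ) (hp_pos : ∀ i, 0 < (p i).1) :
    ∀ᶠ K in atTop, ∀ q, 0 < incidenceWeight K (Sum.map ℓ p q) := by
  rw [eventually_all]
  rintro (j | i)
  exacts [eventually_incidenceWeight_inl_pos (ℓ j), eventually_incidenceWeight_inr_pos (hp_pos i)]

lemma exists_isTotallyPositive_ncard_incidences_le_of_pos (hp : Injective p) (hℓ : Injective ℓ)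
    (hp_pos : ∀ i, 0 < (p i).1) (hℓ_pos : ∀ j, 0 < (ℓ j).2) {n : ℕ}
    (hn : Nat.card ι + Nat.card κ ≤ n) :
    ∃ A : Matrix (Fin 2) (Fin n) ℝ, IsTotallyPositive A ∧
      (incidences p ℓ).ncard ≤ (unitMinorPairs A).ncard := by
  obtain ⟨K, hslope, hweight⟩ := ((eventually_injective_incidenceSlope hp hℓ hp_pos hℓ_pos).and
    (eventually_incidenceWeight_pos ℓ hp_pos)).exists
  obtain ⟨A, hA, hcard⟩ := exists_isTotallyPositive_ncard_le_unitMinorPairs hweight hslope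
    (n := n) (by rwa [Nat.card_sum, add_comm])
  refine ⟨A, hA, le_trans ?_ hcard⟩
  refine Set.ncard_le_ncard_of_injOn (fun t => (.inl t.2, .inr t.1)) ?_ ?_
  · rintro ⟨i, j⟩ hij
    exact incidenceWeight_mul_mul_sub_eq_one (hweight (.inl j)).ne' (hweight (.inr i)).ne' hij
  · rintro ⟨i, j⟩ - ⟨i', j'⟩ - heq
    obtain ⟨hj, hi⟩ := Prod.mk.inj heq
    exact Prod.ext (Sum.inr_injective hi) (Sum.inl_injective hj)

lemma exists_translation_pos (p : ι → ℝ × ℝ) (ℓ : κ → ℝ × ℝ) :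
    ∃ u v : ℝ, (∀ i, 0 < (p i).1 + u) ∧ ∀ j, 0 < (ℓ j).2 + v - (ℓ j).1 * u := by
  obtain ⟨u, hu⟩ : ∃ u, ∀ i, -(p i).1 < u :=
    (eventually_all.2 fun i => eventually_gt_atTop _).exists
  obtain ⟨v, hv⟩ : ∃ v, ∀ j, (ℓ j).1 * u - (ℓ j).2 < v :=
    (eventually_all.2 fun j => eventually_gt_atTop _).exists
  exact ⟨u, v, fun i => by linarith [hu i], fun j => by linarith [hv j]⟩

theorem exists_isTotallyPositive_ncard_incidences_le (hp : Injective p) (hℓ : Injective ℓ) {n : ℕ}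
    (hn : Nat.card ι + Nat.card κ ≤ n) :
    ∃ A : Matrix (Fin 2) (Fin n) ℝ, IsTotallyPositive A ∧
      (incidences p ℓ).ncard ≤ (unitMinorPairs A).ncard := by
  obtain ⟨u, v, hu, hv⟩ := exists_translation_pos p ℓ
  let movePoint (z : ℝ × ℝ) : ℝ × ℝ := (z.1 + u, z.2 + v)
  let moveLine (z : ℝ × ℝ) : ℝ × ℝ := (z.1, z.2 + v - z.1 * u)
  have hpoint : Injective movePoint := fun z z' h => by
    obtain ⟨h₁, h₂⟩ := Prod.mk.inj h
    exact Prod.ext (add_right_cancel h₁) (add_right_cancel h₂)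
  have hline : Injective moveLine := fun z z' h => by
    obtain ⟨h₁, h₂⟩ := Prod.mk.inj h
    exact Prod.ext h₁ (by rw [h₁] at h₂; linarith)
  have hinc : incidences p ℓ = incidences (movePoint ∘ p) (moveLine ∘ ℓ) := by
    ext ⟨i, j⟩
    change (p i).2 = (ℓ j).1 * (p i).1 + (ℓ j).2 ↔
      (p i).2 + v = (ℓ j).1 * ((p i).1 + u) + ((ℓ j).2 + v - (ℓ j).1 * u)
    constructor <;> intro h <;> linarith
  rw [hinc]
  exact exists_isTotallyPositive_ncard_incidences_le_of_pos (hpoint.comp hp) (hline.comp hℓ) hu hv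
    hn

end Incidences

/-- The `a × b` grid of natural numbers in the plane, serving in Elekes' construction both as the
set of points and, read as pairs (slope, intercept), as the set of lines. -/
def natGrid (a b : ℕ) (t : Fin a × Fin b) : ℝ × ℝ := ((t.1 : ℕ), (t.2 : ℕ))

lemma natGrid_injective (a b : ℕ) : Injective (natGrid a b) := by
  rintro ⟨x, y⟩ ⟨x', y'⟩ h
  simpa only [natGrid, Prod.mk.injEq, Nat.cast_inj, Fin.val_inj] using h

lemma mul_mul_le_ncard_incidences_natGrid {a b c d : ℕ} (h : a * c + d ≤ b) :
    a * (c * d) ≤ (incidences (natGrid a b) (natGrid c d)).ncard := by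
  have hheight (x : Fin a) (m : Fin c) (i : Fin d) : (m * x + i : ℕ) < b := calc
    (m * x + i : ℕ) < x * m + d := by rw [mul_comm (m : ℕ)]; exact Nat.add_lt_add_left i.2 _
    _ ≤ a * c + d := Nat.add_le_add_right (Nat.mul_le_mul x.2.le m.2.le) d
    _ ≤ b := h
  let incidence (t : Fin a × Fin c × Fin d) : (Fin a × Fin b) × (Fin c × Fin d) :=
    ((t.1, ⟨t.2.1 * t.1 + t.2.2, hheight _ _ _⟩), t.2)
  have hinj : Injective incidence := fun t t' heq =>
    Prod.ext (congrArg (fun q => q.1.1) heq) (congrArg (fun q => q.2) heq)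
  have hmem (t : Fin a × Fin c × Fin d) :
      incidence t ∈ incidences (natGrid a b) (natGrid c d) := by
    simp [incidences, incidence, natGrid]
  calc a * (c * d) = (Set.range incidence).ncard := by
        simp [Set.ncard_range_of_injective hinj]
    _ ≤ _ := Set.ncard_le_ncard (Set.range_subset_iff.2 hmem)

lemma exists_three_mul_cube_le_and_le_cube {n : ℕ} (hn : 3 ≤ n) :
    ∃ k : ℕ, 3 * k ^ 3 ≤ n ∧ n ≤ (3 * k) ^ 3 := by
  set k := Nat.nthRoot 3 (n / 3)
  have hle : k ^ 3 ≤ n / 3 := Nat.pow_nthRoot_le (.inl three_ne_zero)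
  have hlt : n / 3 < (k + 1) ^ 3 := Nat.lt_pow_nthRoot_add_one three_ne_zero _
  have hk : 1 ≤ k := by
    by_contra! hzero
    rw [Nat.lt_one_iff.1 hzero] at hlt
    omega
  have hdouble : (k + 1) ^ 3 ≤ (2 * k) ^ 3 := Nat.pow_le_pow_left (by omega) 3
  simp only [mul_pow] at hdouble ⊢
  exact ⟨k, by omega, by omega⟩

lemma rpow_four_thirds_le_pow_four {x y : ℝ} (hx : 0 ≤ x) (hy : 0 ≤ y) (h : x ≤ y ^ 3) :
    x ^ ((4 : ℝ) / 3) ≤ y ^ 4 := calc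
  x ^ ((4 : ℝ) / 3) ≤ (y ^ 3) ^ ((4 : ℝ) / 3) := Real.rpow_le_rpow hx h (by norm_num)
  _ = y ^ ((3 : ℕ) * ((4 : ℝ) / 3)) := (Real.rpow_natCast_mul hy 3 _).symm
  _ = y ^ 4 := by rw [← Real.rpow_natCast]; norm_num

theorem repeated_two_by_two_minors_lower_bound :
    ∃ c : ℝ, 0 < c ∧ ∃ N : ℕ, ∀ n : ℕ, N ≤ n →
      ∃ A : Matrix (Fin 2) (Fin n) ℝ, IsTotallyPositive A ∧
        c * (n : ℝ) ^ ((4 : ℝ) / 3) ≤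
          (({p : Fin n × Fin n | p.1 < p.2 ∧
              A 0 p.1 * A 1 p.2 - A 0 p.2 * A 1 p.1 = 1} : Set (Fin n × Fin n)).ncard : ℝ) := by
  refine ⟨1 / 81, by norm_num, 3, fun n hn => ?_⟩
  obtain ⟨k, hk, hnk⟩ := exists_three_mul_cube_le_and_le_cube hn
  have hcard : Nat.card (Fin k × Fin (2 * k ^ 2)) + Nat.card (Fin k × Fin (k ^ 2)) ≤ n := by
    simp only [Nat.card_prod, Nat.card_fin]
    linarith
  obtain ⟨A, hA, hminors⟩ := exists_isTotallyPositive_ncard_incidences_le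
    (natGrid_injective k (2 * k ^ 2)) (natGrid_injective k (k ^ 2)) hcard
  refine ⟨A, hA, ?_⟩
  have hgrid := mul_mul_le_ncard_incidences_natGrid (show k * k + k ^ 2 ≤ 2 * k ^ 2 by linarith)
  calc 1 / 81 * (n : ℝ) ^ ((4 : ℝ) / 3) ≤ 1 / 81 * (3 * (k : ℝ)) ^ 4 := by
        gcongr
        exact rpow_four_thirds_le_pow_four (by positivity) (by positivity) (mod_cast hnk)
    _ = (k * (k * k ^ 2) : ℕ) := by push_cast; ring
    _ ≤ ((unitMinorPairs A).ncard : ℝ) := mod_cast hgrid.trans hminors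
end

section
/- There exists a constant C > 0 such that for every n ≥ 3 and every 3×n totally positive real matrix A, the number of 3-element column index sets S ⊆ {1,...,n} for which the 3×3 minor of A on the columns S equals 1 is at most C·n^(11/5). -/
/-! Each pair `i < j` of columns of `A` gives a curve `k ↦ det (aᵢ, aⱼ, aₖ)`, and the minors equal
to `x` are incidences of these `N ≤ n ^ 2` curves with the level `x`. Positivity of the `3 × 3`
minors is a variation diminishing property: the difference of two distinct curves vanishes at no
more than two abscissae and changes sign at most twice. Hence two curves share at most two
incidences, and if the curves are ranked by value at each abscissa, the ranks have total variation
at most `2 * N ^ 2`.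

The curves on the level `x` at a given abscissa have consecutive ranks. Slice the ranks into bands
of width `M ^ 3`, at an offset for which curves rarely change band, and cut each band along the
abscissae into cells containing `O(M ^ 3)` curves and at most `M` abscissae with incidences. The
Kővári–Sós–Turán theorem bounds the incidences in a cell by `O(M ^ 3)`. Curves change band
`O(N ^ 2 / M ^ 3)` times, and an abscissa with many incidences meets few bands; choosing `M` of
order `n ^ (3 / 5)` gives `O(n ^ (11 / 5))` incidences. -/

section Incidences

open Finset

variable {P κ : Type*}

lemma le_add_choose_succ (d t : ℕ) : d ≤ t + d.choose (t + 1) := by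
  induction d with
  | zero => exact Nat.zero_le _
  | succ d ih =>
    rcases Nat.lt_or_ge d t with hdt | hdt
    · lia
    · have hpos : 0 < d.choose t := Nat.choose_pos hdt
      have hpascal : (d + 1).choose (t + 1) = d.choose t + d.choose (t + 1) :=
        Nat.choose_succ_succ' d t
      lia

-- Kővári–Sós–Turán: a `(t + 1)`-subset of `K` lies in the neighbourhood of at most one element
-- of `Q`.
theorem sum_card_inter_le_mul_add_choose [DecidableEq P] {Q : Finset P} {K : Finset κ}
    {E : κ → Finset P} {t : ℕ}
    (hE : (Q : Set P).Pairwise fun p q => #{k ∈ K | p ∈ E k ∧ q ∈ E k} ≤ t) :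
    ∑ k ∈ K, #(Q ∩ E k) ≤ t * #Q + (#K).choose (t + 1) := by
  classical
  set nbhd : P → Finset κ := fun p => {k ∈ K | p ∈ E k} with hnbhd
  have hdisjoint : (Q : Set P).PairwiseDisjoint fun p => (nbhd p).powersetCard (t + 1) := by
    refine fun p hp q hq hpq => disjoint_left.2 fun T hTp hTq => ?_
    obtain ⟨hTp, hT⟩ := mem_powersetCard.1 hTp
    obtain ⟨hTq, -⟩ := mem_powersetCard.1 hTq
    have hTpq : T ⊆ {k ∈ K | p ∈ E k ∧ q ∈ E k} := fun k hk => by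
      have hkp := mem_filter.1 (hTp hk)
      exact mem_filter.2 ⟨hkp.1, hkp.2, (mem_filter.1 (hTq hk)).2⟩
    have := (card_le_card hTpq).trans (hE hp hq hpq)
    lia
  have hchoose : ∑ p ∈ Q, (#(nbhd p)).choose (t + 1) ≤ (#K).choose (t + 1) := by
    simp_rw [← card_powersetCard]
    rw [← card_biUnion hdisjoint]
    exact card_le_card (biUnion_subset.2 fun p _ => powersetCard_mono (filter_subset _ _))
  calc ∑ k ∈ K, #(Q ∩ E k) = ∑ p ∈ Q, #(nbhd p) := by
        simp_rw [hnbhd, ← filter_mem_eq_inter]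
        exact (sum_card_bipartiteAbove_eq_sum_card_bipartiteBelow fun p k => p ∈ E k).symm
    _ ≤ ∑ p ∈ Q, (t + (#(nbhd p)).choose (t + 1)) := sum_le_sum fun p _ => le_add_choose_succ _ t
    _ ≤ t * #Q + (#K).choose (t + 1) := by
        rw [sum_add_distrib, sum_const, smul_eq_mul, mul_comm]
        gcongr

lemma card_biUnion_Icc_le [DecidableEq P] (X : ℕ → Finset P) {s e : ℕ} (hse : s ≤ e) :
    #((Icc s e).biUnion X) ≤ #(X s) + ∑ k ∈ Ico s e, #(X (k + 1) \ X k) := by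
  induction e, hse using Nat.le_induction with
  | base => simp
  | succ e hse ih =>
    have hnew : #(X (e + 1) \ (Icc s e).biUnion X) ≤ #(X (e + 1) \ X e) :=
      card_le_card (sdiff_subset_sdiff le_rfl (subset_biUnion_of_mem X (by simpa)))
    rw [← insert_Icc_right_eq_Icc_add_one (by lia), biUnion_insert, ← card_sdiff_add_card,
      sum_Ico_succ_top hse]
    lia

lemma card_le_of_sum_Ico_lt {K : Finset ℕ} {w : ℕ → ℕ} {s e M a : ℕ} (hK : K ⊆ Icc s e)
    (hw : ∀ k ∈ K, a ≤ w k) (hsum : ∑ k ∈ Ico s e, w k < M * a) : #K ≤ M := by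
  have hsub : K.erase e ⊆ Ico s e := fun k hk => by
    have hke := ne_of_mem_erase hk
    have hkK := mem_Icc.1 (hK (mem_of_mem_erase hk))
    exact mem_Ico.2 ⟨hkK.1, lt_of_le_of_ne hkK.2 hke⟩
  have herase : #(K.erase e) * a < M * a :=
    calc #(K.erase e) * a ≤ ∑ k ∈ K.erase e, w k := by
          simpa using card_nsmul_le_sum _ w a fun k hk => hw k (mem_of_mem_erase hk)
      _ ≤ ∑ k ∈ Ico s e, w k := sum_le_sum_of_subset hsub
      _ < M * a := hsum
  have := Nat.lt_of_mul_lt_mul_right herase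
  have := pred_card_le_card_erase (s := K) (a := e)
  lia

-- Cut `{0, …, m}` where the partial sums of `w` pass a multiple of `L`.
lemma sum_range_le_mul_sum_div_add_one {c w : ℕ → ℕ} {L D m : ℕ} (hL : 0 < L)
    (hcell : ∀ s e, s ≤ e → e ≤ m → ∑ k ∈ Ico s e, w k < L → ∑ k ∈ Icc s e, c k ≤ D) :
    ∑ k ∈ range (m + 1), c k ≤ D * ((∑ k ∈ range m, w k) / L + 1) := by
  set W : ℕ → ℕ := fun k => ∑ i ∈ range k, w i
  have hmaps : ∀ k ∈ range (m + 1), W k / L ∈ range (W m / L + 1) := fun k hk => by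
    have hkm : k ≤ m := by simpa [Nat.lt_succ_iff] using hk
    exact mem_range.2 (Nat.lt_succ_of_le (Nat.div_le_div_right
      (sum_le_sum_of_subset (range_subset_range.2 hkm))))
  have hfiber : ∀ j, ∑ k ∈ range (m + 1) with W k / L = j, c k ≤ D := fun j => by
    set F := {k ∈ range (m + 1) | W k / L = j}
    rcases F.eq_empty_or_nonempty with hempty | hne
    · simp [hempty]
    have hmin := mem_filter.1 (F.min'_mem hne)
    have hmax := mem_filter.1 (F.max'_mem hne)
    have hle := F.min'_le_max' hne
    have hsum : W (F.min' hne) + ∑ k ∈ Ico (F.min' hne) (F.max' hne), w k = W (F.max' hne) :=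
      sum_range_add_sum_Ico w hle
    refine (sum_le_sum_of_subset fun k hk => mem_Icc.2 ⟨F.min'_le k hk, F.le_max' k hk⟩).trans
      (hcell _ _ hle (by simpa [Nat.lt_succ_iff] using hmax.1) ?_)
    have hlow := Nat.div_mul_le_self (W (F.min' hne)) L
    have hupp := Nat.lt_mul_div_succ (W (F.max' hne)) hL
    rw [hmin.2] at hlow
    rw [hmax.2] at hupp
    lia
  calc ∑ k ∈ range (m + 1), c k
      = ∑ j ∈ range (W m / L + 1), ∑ k ∈ range (m + 1) with W k / L = j, c k :=
        (sum_fiberwise_of_maps_to hmaps c).symm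
    _ ≤ ∑ _j ∈ range (W m / L + 1), D := sum_le_sum fun j _ => hfiber j
    _ = D * (W m / L + 1) := by rw [sum_const, card_range, smul_eq_mul, mul_comm]

variable [DecidableEq P] {X E : ℕ → Finset P} {t m M : ℕ}

lemma sum_card_inter_le_of_cell {s e : ℕ}
    (hE : Pairwise fun p q => #{k ∈ Icc s e | p ∈ E k ∧ q ∈ E k} ≤ t)
    (hX : #((Icc s e).biUnion X) ≤ 2 * M ^ (t + 1))
    (hactive : #{k ∈ Icc s e | (X k ∩ E k).Nonempty} ≤ M) :
    ∑ k ∈ Icc s e, #(X k ∩ E k) ≤ (2 * t + 1) * M ^ (t + 1) := by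
  classical
  set Q := (Icc s e).biUnion X
  set K := {k ∈ Icc s e | (X k ∩ E k).Nonempty}
  have hKst : ∑ k ∈ K, #(Q ∩ E k) ≤ t * #Q + (#K).choose (t + 1) := by
    refine sum_card_inter_le_mul_add_choose fun p _ q _ hpq => (card_le_card ?_).trans (hE hpq)
    exact filter_subset_filter _ (filter_subset _ _)
  calc ∑ k ∈ Icc s e, #(X k ∩ E k) = ∑ k ∈ K, #(X k ∩ E k) :=
        (sum_filter_of_ne fun k _ hk => card_pos.1 (Nat.pos_of_ne_zero hk)).symm
    _ ≤ ∑ k ∈ K, #(Q ∩ E k) := sum_le_sum fun k hk => card_le_card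
        (inter_subset_inter_right (subset_biUnion_of_mem X (mem_of_mem_filter k hk)))
    _ ≤ t * #Q + (#K).choose (t + 1) := hKst
    _ ≤ t * (2 * M ^ (t + 1)) + M ^ (t + 1) := by
        gcongr
        exact (Nat.choose_le_pow _ _).trans (Nat.pow_le_pow_left hactive _)
    _ = (2 * t + 1) * M ^ (t + 1) := by ring

-- Weight an abscissa by the number of curves entering the band, plus `M ^ t` if it is active. Cells
-- of weight `M ^ (t + 1)` then contain `O(M ^ (t + 1))` curves and at most `M` active abscissae,
-- which balances the two terms of the Kővári–Sós–Turán bound.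
theorem sum_card_inter_le_of_band (hM : 0 < M) (hX : ∀ k, #(X k) ≤ M ^ (t + 1))
    (hE : Pairwise fun p q => #{k ∈ range (m + 1) | p ∈ E k ∧ q ∈ E k} ≤ t) :
    ∑ k ∈ range (m + 1), #(X k ∩ E k) ≤
      (2 * t + 1) * (∑ k ∈ range m, #(X (k + 1) \ X k) +
        M ^ t * #{k ∈ range (m + 1) | (X k ∩ E k).Nonempty} + M ^ (t + 1)) := by
  set w : ℕ → ℕ := fun k =>
    #(X (k + 1) \ X k) + if (X k ∩ E k).Nonempty then M ^ t else 0 with hw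
  have hcell : ∀ s e, s ≤ e → e ≤ m → ∑ k ∈ Ico s e, w k < M ^ (t + 1) →
      ∑ k ∈ Icc s e, #(X k ∩ E k) ≤ (2 * t + 1) * M ^ (t + 1) := by
    intro s e hse hem hweight
    refine sum_card_inter_le_of_cell (fun p q hpq => (card_le_card ?_).trans (hE hpq)) ?_ ?_
    · exact filter_subset_filter _ fun k hk => by
        simp only [mem_Icc, mem_range] at hk ⊢
        lia
    · have henter : ∑ k ∈ Ico s e, #(X (k + 1) \ X k) ≤ ∑ k ∈ Ico s e, w k :=
        sum_le_sum fun k _ => Nat.le_add_right _ _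
      have := card_biUnion_Icc_le X hse
      have := hX s
      lia
    · refine card_le_of_sum_Ico_lt (a := M ^ t) (filter_subset _ _) (fun k hk => ?_)
        (by rwa [← pow_succ'])
      simp [hw, (mem_filter.1 hk).2]
  have htotal : ∑ k ∈ range m, w k ≤ ∑ k ∈ range m, #(X (k + 1) \ X k) +
      M ^ t * #{k ∈ range (m + 1) | (X k ∩ E k).Nonempty} := by
    rw [sum_add_distrib, ← sum_filter, sum_const, smul_eq_mul, mul_comm (M ^ t)]
    gcongr
    lia
  calc ∑ k ∈ range (m + 1), #(X k ∩ E k)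
      ≤ (2 * t + 1) * M ^ (t + 1) * ((∑ k ∈ range m, w k) / M ^ (t + 1) + 1) :=
        sum_range_le_mul_sum_div_add_one (by positivity) hcell
    _ = (2 * t + 1) * ((∑ k ∈ range m, w k) / M ^ (t + 1) * M ^ (t + 1) + M ^ (t + 1)) := by ring
    _ ≤ _ := by
        gcongr
        exact (Nat.div_mul_le_self _ _).trans htotal

theorem sum_card_le_of_bands [Fintype P] {B : ℕ → P → ℕ} {R : ℕ} (hM : 0 < M)
    (hB : ∀ k b, #{p | B k p = b} ≤ M ^ (t + 1)) (hR : ∀ k p, B k p < R)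
    (hE : Pairwise fun p q => #{k ∈ range (m + 1) | p ∈ E k ∧ q ∈ E k} ≤ t) :
    ∑ k ∈ range (m + 1), #(E k) ≤
      (2 * t + 1) * (∑ k ∈ range m, #{p | B k p ≠ B (k + 1) p} +
        M ^ t * ∑ k ∈ range (m + 1), #((E k).image (B k)) + R * M ^ (t + 1)) := by
  set X : ℕ → ℕ → Finset P := fun b k => {p | B k p = b} with hX
  have hsplit : ∀ k, #(E k) = ∑ b ∈ range R, #(X b k ∩ E k) := fun k => by
    rw [card_eq_sum_card_fiberwise (f := B k) fun p _ => mem_range.2 (hR k p)]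
    simp only [hX, filter_inter, univ_inter]
  have hchange : ∀ k, ∑ b ∈ range R, #(X b (k + 1) \ X b k) = #{p | B k p ≠ B (k + 1) p} :=
    fun k => by
      rw [card_eq_sum_card_fiberwise (f := B (k + 1)) fun p _ => mem_range.2 (hR (k + 1) p)]
      refine sum_congr rfl fun b _ => congrArg card ?_
      ext p
      simp only [hX, mem_sdiff, mem_filter, ne_eq]
      lia
  have hactive : ∀ k, #{b ∈ range R | (X b k ∩ E k).Nonempty} = #((E k).image (B k)) := fun k => by
    congr 1
    ext b
    simp only [hX, Finset.Nonempty, mem_filter, mem_inter, mem_univ, true_and, mem_image, mem_range]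
    refine ⟨fun ⟨_, p, hpb, hp⟩ => ⟨p, hp, hpb⟩, fun ⟨p, hp, hpb⟩ => ⟨hpb ▸ hR k p, p, hpb, hp⟩⟩
  have hcount : ∑ b ∈ range R, #{k ∈ range (m + 1) | (X b k ∩ E k).Nonempty} =
      ∑ k ∈ range (m + 1), #{b ∈ range R | (X b k ∩ E k).Nonempty} :=
    sum_card_bipartiteAbove_eq_sum_card_bipartiteBelow fun b k => (X b k ∩ E k).Nonempty
  calc ∑ k ∈ range (m + 1), #(E k)
      = ∑ b ∈ range R, ∑ k ∈ range (m + 1), #(X b k ∩ E k) := by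
        simp_rw [hsplit]
        exact sum_comm
    _ ≤ ∑ b ∈ range R, (2 * t + 1) * (∑ k ∈ range m, #(X b (k + 1) \ X b k) +
          M ^ t * #{k ∈ range (m + 1) | (X b k ∩ E k).Nonempty} + M ^ (t + 1)) :=
        sum_le_sum fun b _ => sum_card_inter_le_of_band hM (fun k => hB k b) hE
    _ = _ := by
        simp_rw [← hchange, ← hactive, ← mul_sum, sum_add_distrib, ← mul_sum, sum_const, card_range,
          smul_eq_mul]
        rw [sum_comm, hcount]

end Incidences

section Banding

open Finset

lemma sum_range_add_div {L : ℕ} (hL : 0 < L) (a : ℕ) : ∑ o ∈ range L, (a + o) / L = a := by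
  induction a with
  | zero => exact sum_eq_zero fun o ho => by simpa using Or.inr (mem_range.1 ho)
  | succ a ih =>
    have hshift : ∑ o ∈ range L, (a + 1 + o) / L = ∑ o ∈ range L, (a + (o + 1)) / L :=
      sum_congr rfl fun o _ => by rw [add_right_comm, add_assoc]
    have hlast := sum_range_succ (fun o => (a + o) / L) L
    have hfirst := sum_range_succ' (fun o => (a + o) / L) L
    simp only [add_zero, Nat.add_div_right a hL] at hlast hfirst
    rw [hshift]
    lia

lemma card_add_div_ne_le_dist {L : ℕ} (hL : 0 < L) (a b : ℕ) :
    #{o ∈ range L | (a + o) / L ≠ (b + o) / L} ≤ Nat.dist a b := by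
  wlog hab : a ≤ b generalizing a b
  · simpa only [Nat.dist_comm, ne_comm] using this b a (by lia)
  have hsum : ∑ o ∈ range L, ((a + o) / L + if (a + o) / L ≠ (b + o) / L then 1 else 0) ≤
      ∑ o ∈ range L, (b + o) / L := sum_le_sum fun o _ => by
    have : (a + o) / L ≤ (b + o) / L := Nat.div_le_div_right (by lia)
    split_ifs <;> lia
  rw [sum_add_distrib, sum_range_add_div hL, sum_range_add_div hL, ← card_filter] at hsum
  rw [Nat.dist_eq_sub_of_le hab]
  lia

lemma exists_offset_mul_card_add_div_ne_le {ι : Type*} (s : Finset ι) (a b : ι → ℕ) {L : ℕ}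
    (hL : 0 < L) :
    ∃ o < L, L * #{i ∈ s | (a i + o) / L ≠ (b i + o) / L} ≤ ∑ i ∈ s, Nat.dist (a i) (b i) := by
  suffices h : ∑ o ∈ range L, L * #{i ∈ s | (a i + o) / L ≠ (b i + o) / L} ≤
      ∑ _o ∈ range L, ∑ i ∈ s, Nat.dist (a i) (b i) by
    simpa using exists_le_of_sum_le (nonempty_range_iff.2 hL.ne') h
  have hcount : ∑ o ∈ range L, #{i ∈ s | (a i + o) / L ≠ (b i + o) / L} =
      ∑ i ∈ s, #{o ∈ range L | (a i + o) / L ≠ (b i + o) / L} :=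
    sum_card_bipartiteAbove_eq_sum_card_bipartiteBelow fun o i => (a i + o) / L ≠ (b i + o) / L
  rw [← mul_sum, sum_const, card_range, smul_eq_mul, hcount]
  gcongr with i
  exact card_add_div_ne_le_dist hL (a i) (b i)

lemma card_image_div_Ico_le (a d L : ℕ) :
    #((Ico a (a + d)).image (· / L)) ≤ d / L + 2 := by
  have hsub : (Ico a (a + d)).image (· / L) ⊆ Icc (a / L) (a / L + d / L + 1) := by
    refine image_subset_iff.2 fun x hx => ?_
    rw [mem_Ico] at hx
    exact mem_Icc.2 ⟨Nat.div_le_div_right hx.1,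
      (Nat.div_le_div_right hx.2.le).trans (Nat.add_div_le_div_add_div_add_one a d L)⟩
  refine (card_le_card hsub).trans ?_
  rw [Nat.card_Icc]
  lia

lemma card_add_div_eq_le {P : Type*} [Fintype P] {r : P → ℕ} (hr : Function.Injective r) {L : ℕ}
    (hL : 0 < L) (o b : ℕ) : #{p | (r p + o) / L = b} ≤ L := by
  have hmaps : ∀ p ∈ ({p | (r p + o) / L = b} : Finset P),
      r p + o ∈ Ico (b * L) (b * L + L) := fun p hp => by
    have hpb := (mem_filter_univ p).1 hp
    exact mem_Ico.2 ⟨(Nat.le_div_iff_mul_le hL).1 hpb.ge,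
      by simpa [add_mul] using (Nat.div_lt_iff_lt_mul hL).1 (Nat.lt_succ_of_le hpb.le)⟩
  simpa using card_le_card_of_injOn (fun p => r p + o) hmaps
    fun p _ q _ hpq => hr (Nat.add_right_cancel hpq)

end Banding

section Ranking

open Finset

variable {P α : Type*} [Fintype P]

/-- The value of `g` at `p` paired with the label of `p` in a fixed enumeration of `P`; comparing
keys lexicographically ranks the elements of `P` by value and makes ties impossible. -/
noncomputable def rankKey (g : P → α) (p : P) : α ×ₗ Fin (Fintype.card P) :=
  toLex (g p, Fintype.equivFin P p)

lemma rankKey_injective (g : P → α) : Function.Injective (rankKey g) := fun _ _ h =>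
  (Fintype.equivFin P).injective (congrArg Prod.snd (toLex.injective h))

variable [LinearOrder α]

/-- The rank of `p` when the elements of `P` are sorted by increasing value of `g`, ties being
broken by a fixed enumeration of `P`. -/
noncomputable def valueRank (g : P → α) (p : P) : ℕ :=
  #{q | rankKey g q < rankKey g p}

lemma le_of_rankKey_le {g : P → α} {p q : P} (h : rankKey g p ≤ rankKey g q) : g p ≤ g q :=
  Prod.Lex.monotone_fst _ _ h

lemma valueRank_lt_valueRank {g : P → α} {p q : P} (h : rankKey g p < rankKey g q) :
    valueRank g p < valueRank g q := by
  refine card_lt_card (ssubset_iff_of_subset ?_ |>.2 ⟨p, by simpa using h, by simp⟩)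
  exact monotone_filter_right _ fun r _ hr => hr.trans h

lemma valueRank_injective (g : P → α) : Function.Injective (valueRank g) := fun p q h => by
  rcases lt_trichotomy (rankKey g p) (rankKey g q) with hlt | heq | hlt
  · exact absurd h (valueRank_lt_valueRank hlt).ne
  · exact rankKey_injective g heq
  · exact absurd h (valueRank_lt_valueRank hlt).ne'

lemma valueRank_lt_card (g : P → α) (p : P) : valueRank g p < Fintype.card P :=
  card_lt_univ_of_notMem (x := p) (by simp)

lemma valueRank_mem_Ico {g : P → α} {p : P} {x : α} (hp : g p = x) :
    valueRank g p ∈ Ico #{q | g q < x} (#{q | g q < x} + #{q | g q = x}) := by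
  classical
  have hlt : ∀ q, g q < x → rankKey g q < rankKey g p := fun q hq =>
    Prod.Lex.toLex_lt_toLex.2 (Or.inl (hp ▸ hq))
  have hle : ∀ q, rankKey g q < rankKey g p → g q < x ∨ g q = x := fun q hq =>
    hp ▸ (le_of_rankKey_le hq.le).lt_or_eq
  have hdisj : Disjoint ({q | g q < x} : Finset P) ({q | g q = x} : Finset P) :=
    disjoint_filter.2 fun q _ hq => hq.ne
  rw [mem_Ico, ← card_union_of_disjoint hdisj, ← filter_or]
  refine ⟨card_le_card (monotone_filter_right _ fun q _ => hlt q), card_lt_card ?_⟩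
  exact (ssubset_iff_of_subset (monotone_filter_right _ fun q _ => hle q)).2
    ⟨p, by simp [hp], by simp⟩

lemma dist_valueRank_le (g h : P → α) (p : P) :
    Nat.dist (valueRank g p) (valueRank h p) ≤
      #{q | ¬(rankKey g q < rankKey g p ↔ rankKey h q < rankKey h p)} := by
  classical
  set G : Finset P := {q | rankKey g q < rankKey g p}
  set H : Finset P := {q | rankKey h q < rankKey h p}
  have hsymm : ({q | ¬(rankKey g q < rankKey g p ↔ rankKey h q < rankKey h p)} : Finset P) =
      G \ H ∪ H \ G := by
    ext q
    simp only [G, H, mem_filter_univ, mem_union, mem_sdiff]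
    tauto
  rw [hsymm, card_union_of_disjoint (disjoint_sdiff.mono_left sdiff_subset)]
  exact Nat.add_le_add (le_card_sdiff H G) (le_card_sdiff G H)

/-- The graph of `u` goes from weakly below that of `v` to weakly above it, back below and above
again nowhere on the abscissae `0, …, m`. Common values count for either side. -/
def CrossAtMostTwice (m : ℕ) (u v : ℕ → α) : Prop :=
  ∀ ⦃a b c d⦄, a < b → b < c → c < d → d ≤ m →
    u a ≤ v a → v b ≤ u b → u c ≤ v c → ¬ v d ≤ u d

lemma card_ascents_le_one {D : ℕ → Prop} [DecidablePred D] {m : ℕ}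
    (hD : ∀ a b c d, a < b → b < c → c < d → d ≤ m → ¬D a → D b → ¬D c → ¬D d) :
    #{k ∈ range m | ¬D k ∧ D (k + 1)} ≤ 1 := by
  have hnot_lt : ∀ a b, b < m → ¬D a → D (a + 1) → ¬D b → D (b + 1) → ¬a < b := by
    intro a b hbm ha ha' hb hb' hab
    have hne : a + 1 ≠ b := fun h => hb (h ▸ ha')
    exact hD a (a + 1) b (b + 1) (by lia) (by lia) (by lia) hbm ha ha' hb hb'
  refine card_le_one.2 fun a ha b hb => ?_
  simp only [mem_filter, mem_range] at ha hb
  exact le_antisymm (not_lt.1 (hnot_lt b a ha.1 hb.2.1 hb.2.2 ha.2.1 ha.2.2))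
    (not_lt.1 (hnot_lt a b hb.1 ha.2.1 ha.2.2 hb.2.1 hb.2.2))

variable {f : ℕ → P → α} {m : ℕ}

lemma card_order_changes_le_two
    (hf : Pairwise fun p q => CrossAtMostTwice m (f · p) (f · q)) (p q : P) :
    #{k ∈ range m | ¬(rankKey (f k) q < rankKey (f k) p ↔
      rankKey (f (k + 1)) q < rankKey (f (k + 1)) p)} ≤ 2 := by
  rcases eq_or_ne p q with rfl | hpq
  · simp
  set D : ℕ → Prop := fun k => rankKey (f k) q < rankKey (f k) p
  have hle : ∀ {k}, D k → f k q ≤ f k p := fun h => le_of_rankKey_le h.le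
  have hge : ∀ {k}, ¬D k → f k p ≤ f k q := fun h => le_of_rankKey_le (not_lt.1 h)
  have hup : #{k ∈ range m | ¬D k ∧ D (k + 1)} ≤ 1 :=
    card_ascents_le_one fun a b c d hab hbc hcd hd ha hb hc hd' =>
      hf hpq hab hbc hcd hd (hge ha) (hle hb) (hge hc) (hle hd')
  have hdown : #{k ∈ range m | ¬¬D k ∧ ¬D (k + 1)} ≤ 1 :=
    card_ascents_le_one fun a b c d hab hbc hcd hd ha hb hc hd' =>
      hf hpq.symm hab hbc hcd hd (hle (not_not.1 ha)) (hge hb) (hle (not_not.1 hc)) (hge hd')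
  calc _ = #({k ∈ range m | ¬D k ∧ D (k + 1)} ∪ {k ∈ range m | ¬¬D k ∧ ¬D (k + 1)}) := by
        rw [← filter_or]
        congr! 2
        simp only [D]
        tauto
    _ ≤ 2 := (card_union_le _ _).trans (Nat.add_le_add hup hdown)

theorem sum_dist_valueRank_le
    (hf : Pairwise fun p q => CrossAtMostTwice m (f · p) (f · q)) :
    ∑ k ∈ range m, ∑ p, Nat.dist (valueRank (f k) p) (valueRank (f (k + 1)) p) ≤
      2 * Fintype.card P ^ 2 := by
  set changes : ℕ → P → P → Prop := fun k p q =>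
    ¬(rankKey (f k) q < rankKey (f k) p ↔ rankKey (f (k + 1)) q < rankKey (f (k + 1)) p)
  calc ∑ k ∈ range m, ∑ p, Nat.dist (valueRank (f k) p) (valueRank (f (k + 1)) p)
      ≤ ∑ k ∈ range m, ∑ p, #{q | changes k p q} :=
        sum_le_sum fun k _ => sum_le_sum fun p _ => dist_valueRank_le (f k) (f (k + 1)) p
    _ = ∑ p, ∑ q, #{k ∈ range m | changes k p q} := by
        rw [sum_comm]
        exact sum_congr rfl fun p _ =>
          sum_card_bipartiteAbove_eq_sum_card_bipartiteBelow fun k q => changes k p q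
    _ ≤ ∑ _p : P, ∑ _q : P, 2 :=
        sum_le_sum fun p _ => sum_le_sum fun q _ => card_order_changes_le_two hf p q
    _ = 2 * Fintype.card P ^ 2 := by
        simp only [sum_const, card_univ, smul_eq_mul]
        ring

lemma card_image_band_le (g : P → α) (x : α) (o L : ℕ) :
    #(({p | g p = x} : Finset P).image fun p => (valueRank g p + o) / L) ≤
      #{p | g p = x} / L + 2 := by
  have hmem : ∀ p ∈ ({p | g p = x} : Finset P),
      valueRank g p + o ∈ Ico (#{q | g q < x} + o) (#{q | g q < x} + o + #{q | g q = x}) :=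
    fun p hp => by
      have hpx : g p = x := (mem_filter_univ p).1 hp
      have := mem_Ico.1 (valueRank_mem_Ico hpx)
      exact mem_Ico.2 (by lia)
  exact (card_le_card (image_subset_iff.2 fun p hp => mem_image_of_mem (· / L) (hmem p hp))).trans
    (card_image_div_Ico_le _ _ L)

-- Slice the ranking at every abscissa into bands of `M ^ (t + 1)` consecutive ranks, shifted by an
-- offset for which few curves change band.
theorem mul_sum_card_level_le {t M V : ℕ} (hM : 0 < M) (x : α)
    (hagree : Pairwise fun p q => #{k ∈ range (m + 1) | f k p = f k q} ≤ t)
    (hV : ∑ k ∈ range m, ∑ p, Nat.dist (valueRank (f k) p) (valueRank (f (k + 1)) p) ≤ V) :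
    M ^ (t + 1) * ∑ k ∈ range (m + 1), #{p | f k p = x} ≤
      (2 * t + 1) * (V + M ^ t * (∑ k ∈ range (m + 1), #{p | f k p = x} +
        2 * (m + 1) * M ^ (t + 1)) + (Fintype.card P + 2 * M ^ (t + 1)) * M ^ (t + 1)) := by
  classical
  set L := M ^ (t + 1)
  set N := Fintype.card P
  set I := ∑ k ∈ range (m + 1), #{p | f k p = x}
  have hL : 0 < L := by positivity
  obtain ⟨o, hoL, ho⟩ := exists_offset_mul_card_add_div_ne_le (range m ×ˢ univ)
    (fun z : ℕ × P => valueRank (f z.1) z.2) (fun z => valueRank (f (z.1 + 1)) z.2) hL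
  set B : ℕ → P → ℕ := fun k p => (valueRank (f k) p + o) / L with hB
  set T := ∑ k ∈ range m, #{p | B k p ≠ B (k + 1) p}
  set S := ∑ k ∈ range (m + 1), #(({p | f k p = x} : Finset P).image (B k))
  have hT : L * T ≤ V := by
    refine le_trans ?_ ((ho.trans_eq (sum_product _ _ _)).trans hV)
    simp only [T, hB, card_filter, sum_product, le_refl]
  have hS : L * S ≤ I + 2 * (m + 1) * L := by
    calc L * S ≤ L * ∑ k ∈ range (m + 1), (#{p | f k p = x} / L + 2) :=
          Nat.mul_le_mul_left L (sum_le_sum fun k _ => card_image_band_le (f k) x o L)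
      _ = ∑ k ∈ range (m + 1), L * (#{p | f k p = x} / L) + 2 * (m + 1) * L := by
          rw [sum_add_distrib, mul_add, mul_sum, sum_const, card_range, smul_eq_mul]
          ring
      _ ≤ I + 2 * (m + 1) * L :=
          Nat.add_le_add_right (sum_le_sum fun k _ => Nat.mul_div_le _ _) _
  have hbands : I ≤ (2 * t + 1) * (T + M ^ t * S + ((N + L) / L + 1) * L) := by
    refine sum_card_le_of_bands hM
      (fun k b => card_add_div_eq_le (valueRank_injective (f k)) hL o b)
      (fun k p => Nat.lt_succ_of_le (Nat.div_le_div_right ?_))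
      (fun p q hpq => (card_le_card ?_).trans (hagree hpq))
    · have := valueRank_lt_card (f k) p
      lia
    · refine monotone_filter_right _ fun k _ hk => ?_
      simp only [mem_filter_univ] at hk
      exact hk.1.trans hk.2.symm
  have hR : ((N + L) / L + 1) * L ≤ N + 2 * L := by
    have := Nat.div_mul_le_self (N + L) L
    lia
  calc L * I ≤ L * ((2 * t + 1) * (T + M ^ t * S + ((N + L) / L + 1) * L)) :=
        Nat.mul_le_mul_left L hbands
    _ = (2 * t + 1) * (L * T + M ^ t * (L * S) + ((N + L) / L + 1) * L * L) := by ring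
    _ ≤ _ := by gcongr

end Ranking

section PositiveMinors

open Finset Matrix

variable {R : Type*} [CommRing R] {d n : ℕ}

lemma sum_alternating_vecMul_mul_det_eq_zero (A : Matrix (Fin d) (Fin (d + 1)) R) (w : Fin d → R) :
    ∑ j : Fin (d + 1), (-1) ^ (j : ℕ) * (w ᵥ* A) j * (A.submatrix id j.succAbove).det = 0 := by
  set B : Matrix (Fin (d + 1)) (Fin (d + 1)) R := of (vecCons (w ᵥ* A) A)
  have hdependent : (vecCons (-1) w : Fin (d + 1) → R) ᵥ* B = 0 := by
    refine (cons_vecMul_cons (-1) w (w ᵥ* A) A).trans ?_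
    rw [neg_one_smul]
    exact neg_add_cancel _
  have hsingular : B.det = 0 := by
    have hker : (vecCons (-1) w : Fin (d + 1) → R) ᵥ* (B * B.adjugate) = 0 := by
      rw [← vecMul_vecMul, hdependent, zero_vecMul]
    rw [mul_adjugate, vecMul_smul, vecMul_one] at hker
    simpa using congrFun hker 0
  rw [← hsingular, det_succ_row_zero]
  rfl

variable [LinearOrder R]

/-- Every minor of `A` on all of its rows is positive: the part of total positivity on which the
intersection properties of the minor curves rest. -/
def HasPosMaximalMinors (A : Matrix (Fin d) (Fin n) R) : Prop :=
  ∀ c : Fin d → Fin n, StrictMono c → 0 < (A.submatrix id c).det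

lemma IsTotallyPositive.hasPosMaximalMinors {A : Matrix (Fin d) (Fin n) ℝ}
    (hA : IsTotallyPositive A) : HasPosMaximalMinors A :=
  fun c hc => hA d id c strictMono_id hc

namespace HasPosMaximalMinors

variable {A : Matrix (Fin d) (Fin n) R} {w : Fin d → R}

lemma det_submatrix_ne_zero (hA : HasPosMaximalMinors A) {c : Fin d → Fin n}
    (hc : Function.Injective c) : (A.submatrix id c).det ≠ 0 := by
  have hsorted : StrictMono (c ∘ Tuple.sort c) :=
    (Tuple.monotone_sort c).strictMono_of_injective (hc.comp (Tuple.sort c).injective)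
  have hdet := hA _ hsorted
  rw [← Function.comp_id id, ← submatrix_submatrix, det_permute'] at hdet
  exact right_ne_zero_of_mul hdet.ne'

variable [IsStrictOrderedRing R]

lemma eq_zero_of_vecMul_comp_eq_zero (hA : HasPosMaximalMinors A) {c : Fin d → Fin n}
    (hc : Function.Injective c) (hw : ∀ i, (w ᵥ* A) (c i) = 0) : w = 0 :=
  eq_zero_of_vecMul_eq_zero (hA.det_submatrix_ne_zero hc) (funext hw)

lemma card_zeros_lt (hA : HasPosMaximalMinors A) (hw : w ≠ 0) :
    #{k | (w ᵥ* A) k = 0} < d := by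
  by_contra! hcard
  obtain ⟨s, hs, hsd⟩ := exists_subset_card_eq hcard
  have hzero : ∀ k ∈ s, (w ᵥ* A) k = 0 := fun k hk => by simpa using hs hk
  exact hw (hA.eq_zero_of_vecMul_comp_eq_zero (s.orderEmbOfFin hsd).injective fun i =>
    hzero _ (s.orderEmbOfFin_mem hsd i))

-- The alternating sum of the values at `d + 1` abscissae with the complementary minors vanishes, so
-- values of alternating sign are all zero.
theorem eq_zero_of_alternating (hA : HasPosMaximalMinors A) {c : Fin (d + 1) → Fin n}
    (hc : StrictMono c) (hw : ∀ j : Fin (d + 1), 0 ≤ (-1) ^ (j : ℕ) * (w ᵥ* A) (c j)) :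
    w = 0 := by
  have hminor : ∀ j : Fin (d + 1), 0 < ((A.submatrix id c).submatrix id j.succAbove).det :=
    fun j => hA _ (hc.comp j.strictMono_succAbove)
  have hterms := (sum_eq_zero_iff_of_nonneg
    fun (j : Fin (d + 1)) _ => mul_nonneg (hw j) (hminor j).le).1
    (sum_alternating_vecMul_mul_det_eq_zero (A.submatrix id c) w)
  refine hA.eq_zero_of_vecMul_comp_eq_zero
    (hc.injective.comp (Fin.castSucc_injective d)) fun i => ?_
  have hterm := hterms i.castSucc (mem_univ _)
  simpa using (mul_eq_zero.1 hterm).resolve_right (hminor i.castSucc).ne'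

end HasPosMaximalMinors

end PositiveMinors

section MinorCurves

open Finset Matrix

variable {R : Type*} [CommRing R] {n : ℕ}

lemma det_submatrix_id_fin_three (A : Matrix (Fin 3) (Fin n) R) (c : Fin 3 → Fin n) :
    (A.submatrix id c).det = ((A.col (c 0) ⨯₃ A.col (c 1)) ᵥ* A) (c 2) := by
  simp only [det_fin_three, Fin.isValue, submatrix_apply, id_eq, vecMul, dotProduct, col,
    cross_apply, Nat.succ_eq_add_one, Nat.reduceAdd, transpose_apply, Fin.sum_univ_three,
    cons_val_zero, cons_val_one, Matrix.cons_val]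
  ring

/-- A pair `i < j` of column indices of a matrix with `n` columns; it labels a curve in the
incidence problem. -/
abbrev ColumnPair (n : ℕ) : Type :=
  {p : Fin n × Fin n // p.1 < p.2}

lemma card_columnPair_le (n : ℕ) : Fintype.card (ColumnPair n) ≤ n ^ 2 := by
  simpa [sq] using Fintype.card_subtype_le fun p : Fin n × Fin n => p.1 < p.2

/-- The cross product of the columns of `A` with indices in `p`. The curve labelled by `p` is
`p.normal A ᵥ* A`, whose value at `k` is the determinant of the columns `p.1.1`, `p.1.2`, `k`. -/
def ColumnPair.normal (A : Matrix (Fin 3) (Fin n) R) (p : ColumnPair n) : Fin 3 → R :=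
  A.col p.1.1 ⨯₃ A.col p.1.2

namespace HasPosMaximalMinors

variable [LinearOrder R] {A : Matrix (Fin 3) (Fin n) R}

lemma normal_vecMul_eq_zero_iff (hA : HasPosMaximalMinors A) (p : ColumnPair n) (k : Fin n) :
    (p.normal A ᵥ* A) k = 0 ↔ k = p.1.1 ∨ k = p.1.2 := by
  have hdet := det_submatrix_id_fin_three A ![p.1.1, p.1.2, k]
  change _ = (p.normal A ᵥ* A) k at hdet
  rw [← hdet]
  refine ⟨fun h => ?_, ?_⟩
  · by_contra! hk
    refine hA.det_submatrix_ne_zero (fun i j hij => ?_) h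
    have := p.2.ne
    fin_cases i <;> fin_cases j <;> simp_all
  · rintro (rfl | rfl)
    · exact det_zero_of_column_eq (i := 0) (j := 2) (by decide) fun i => rfl
    · exact det_zero_of_column_eq (i := 1) (j := 2) (by decide) fun i => rfl

lemma normal_injective (hA : HasPosMaximalMinors A) :
    Function.Injective (ColumnPair.normal A) := fun p q hpq => by
  have hzeros : ∀ k, (k = p.1.1 ∨ k = p.1.2) ↔ (k = q.1.1 ∨ k = q.1.2) := fun k => by
    rw [← hA.normal_vecMul_eq_zero_iff, hpq, hA.normal_vecMul_eq_zero_iff]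
  have := p.2
  have := q.2
  have := hzeros p.1.1
  have := hzeros p.1.2
  have := hzeros q.1.1
  have := hzeros q.1.2
  refine Subtype.ext (Prod.ext ?_ ?_) <;> lia

variable [IsStrictOrderedRing R]

lemma card_normal_vecMul_eq_le_two (hA : HasPosMaximalMinors A) {p q : ColumnPair n}
    (hpq : p ≠ q) : #{k | (p.normal A ᵥ* A) k = (q.normal A ᵥ* A) k} ≤ 2 := by
  have hzeros := hA.card_zeros_lt (sub_ne_zero.2 (hA.normal_injective.ne hpq))
  simp only [sub_vecMul, Pi.sub_apply, sub_eq_zero] at hzeros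
  exact Nat.le_of_lt_succ hzeros

lemma not_normal_vecMul_alternate (hA : HasPosMaximalMinors A) {p q : ColumnPair n} (hpq : p ≠ q)
    {a b c d : Fin n} (hab : a < b) (hbc : b < c) (hcd : c < d)
    (ha : (p.normal A ᵥ* A) a ≤ (q.normal A ᵥ* A) a)
    (hb : (q.normal A ᵥ* A) b ≤ (p.normal A ᵥ* A) b)
    (hc : (p.normal A ᵥ* A) c ≤ (q.normal A ᵥ* A) c) :
    ¬(q.normal A ᵥ* A) d ≤ (p.normal A ᵥ* A) d := fun hd => by
  have hmono : StrictMono ![a, b, c, d] := by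
    simp [Fin.strictMono_iff_lt_succ, Fin.forall_fin_succ, hab, hbc, hcd]
  refine sub_ne_zero.2 (hA.normal_injective.ne hpq.symm) (hA.eq_zero_of_alternating hmono ?_)
  simp [Fin.forall_fin_succ, sub_vecMul, pow_succ, ha, hb, hc, hd]

end HasPosMaximalMinors

end MinorCurves

section Counting

open Finset Matrix

variable {R : Type*} [CommRing R]

lemma ncard_minors_eq_le [DecidableEq R] {n : ℕ} (A : Matrix (Fin 3) (Fin n) R) (x : R) :
    {S : Finset (Fin n) | ∃ h : #S = 3, (A.submatrix id (S.orderEmbOfFin h)).det = x}.ncard ≤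
      ∑ k, #{p : ColumnPair n | (p.normal A ᵥ* A) k = x} := by
  set incidences : Finset ((_ : Fin n) × ColumnPair n) :=
    univ.sigma fun k => {p | (p.normal A ᵥ* A) k = x}
  set columns : (_ : Fin n) × ColumnPair n → Finset (Fin n) := fun z => {z.2.1.1, z.2.1.2, z.1}
  have hsub : {S : Finset (Fin n) | ∃ h : #S = 3, (A.submatrix id (S.orderEmbOfFin h)).det = x} ⊆
      ↑(incidences.image columns) := by
    rintro S ⟨h, hx⟩
    set c := S.orderEmbOfFin h
    rw [det_submatrix_id_fin_three] at hx
    refine mem_image.2 ⟨⟨c 2, (c 0, c 1), c.strictMono (by decide)⟩, ?_, ?_⟩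
    · exact mem_sigma.2 ⟨mem_univ _, mem_filter_univ _ |>.2 hx⟩
    · calc {c 0, c 1, c 2} = ({0, 1, 2} : Finset (Fin 3)).image c := by simp
        _ = S := S.image_orderEmbOfFin_univ h
  calc _ ≤ (↑(incidences.image columns) : Set (Finset (Fin n))).ncard := Set.ncard_le_ncard hsub
    _ = #(incidences.image columns) := Set.ncard_coe_finset _
    _ ≤ #incidences := card_image_le
    _ = _ := card_sigma _ _

lemma sum_range_ofNat {M : Type*} [AddCommMonoid M] {m : ℕ} (g : Fin (m + 1) → M) :
    ∑ k ∈ range (m + 1), g (Fin.ofNat (m + 1) k) = ∑ k, g k := by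
  simp [sum_range]

/-- The curves of a matrix with `m + 1` columns as functions on `ℕ`; only their values at the
abscissae `0, …, m` are meaningful. -/
def minorCurve {m : ℕ} (A : Matrix (Fin 3) (Fin (m + 1)) R) (k : ℕ) (p : ColumnPair (m + 1)) : R :=
  (p.normal A ᵥ* A) (Fin.ofNat (m + 1) k)

namespace HasPosMaximalMinors

variable [LinearOrder R] [IsStrictOrderedRing R] {m : ℕ} {A : Matrix (Fin 3) (Fin (m + 1)) R}

lemma card_minorCurve_eq_le_two (hA : HasPosMaximalMinors A) :
    Pairwise fun p q => #{k ∈ range (m + 1) | minorCurve A k p = minorCurve A k q} ≤ 2 :=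
  fun p q hpq => by
    refine le_of_eq_of_le ?_ (hA.card_normal_vecMul_eq_le_two hpq)
    rw [card_filter, card_filter]
    exact sum_range_ofNat fun k => if (p.normal A ᵥ* A) k = (q.normal A ᵥ* A) k then 1 else 0

lemma crossAtMostTwice_minorCurve (hA : HasPosMaximalMinors A) :
    Pairwise fun p q => CrossAtMostTwice m (minorCurve A · p) (minorCurve A · q) :=
  fun p q hpq a b c d hab hbc hcd hdm => by
    have hlt : ∀ {i j : ℕ}, i < j → j ≤ m → Fin.ofNat (m + 1) i < Fin.ofNat (m + 1) j :=
      fun hij hjm => by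
        simpa [Fin.lt_def, Nat.mod_eq_of_lt (Nat.lt_succ_of_le hjm),
          Nat.mod_eq_of_lt (Nat.lt_succ_of_le (hij.le.trans hjm))] using hij
    exact hA.not_normal_vecMul_alternate hpq (hlt hab (by lia)) (hlt hbc (by lia)) (hlt hcd hdm)

theorem mul_sum_card_minor_eq_le (hA : HasPosMaximalMinors A) (x : R) {M : ℕ} (hM : 0 < M) :
    M ^ 3 * ∑ k, #{p : ColumnPair (m + 1) | (p.normal A ᵥ* A) k = x} ≤
      5 * (2 * Fintype.card (ColumnPair (m + 1)) ^ 2 +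
        M ^ 2 * (∑ k, #{p : ColumnPair (m + 1) | (p.normal A ᵥ* A) k = x} +
          2 * (m + 1) * M ^ 3) +
        (Fintype.card (ColumnPair (m + 1)) + 2 * M ^ 3) * M ^ 3) := by
  rw [← sum_range_ofNat]
  exact mul_sum_card_level_le (t := 2) hM x hA.card_minorCurve_eq_le_two
    (sum_dist_valueRank_le hA.crossAtMostTwice_minorCurve)

end HasPosMaximalMinors

-- Apart from `5 * (M ^ 2 * I) ≤ M ^ 3 * I / 2`, every term on the right is `O(M ^ 3 * s ^ 11)`.
lemma le_of_pow_three_mul_le {M I N s : ℝ} (hs : 1 ≤ s) (hI : 0 ≤ I) (hN : 0 ≤ N)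
    (hNs : N ≤ s ^ 10) (hMlow : 10 * s ^ 3 ≤ M) (hMupp : M ≤ 11 * s ^ 3)
    (h : M ^ 3 * I ≤ 5 * (2 * N ^ 2 + M ^ 2 * (I + 2 * s ^ 5 * M ^ 3) + (N + 2 * M ^ 3) * M ^ 3)) :
    I ≤ 30000 * s ^ 11 := by
  have hs0 : 0 < s := by linarith
  have hM0 : 0 < M := lt_of_lt_of_le (by positivity) hMlow
  have habsorb : 10 * (M ^ 2 * I) ≤ M ^ 3 * I := by
    have : 10 ≤ M := by linarith [one_le_pow₀ hs (n := 3)]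
    calc 10 * (M ^ 2 * I) ≤ M * (M ^ 2 * I) := by gcongr
      _ = M ^ 3 * I := by ring
  have hsquare : N ^ 2 ≤ M ^ 3 * s ^ 11 := by
    calc N ^ 2 ≤ (s ^ 10) ^ 2 := by gcongr
      _ = (s ^ 3) ^ 3 * s ^ 11 := by ring
      _ ≤ M ^ 3 * s ^ 11 := by
          gcongr
          linarith [pow_pos hs0 3]
  have hactive : s ^ 5 * M ^ 2 ≤ 121 * s ^ 11 := by
    calc s ^ 5 * M ^ 2 ≤ s ^ 5 * (11 * s ^ 3) ^ 2 := by gcongr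
      _ = 121 * s ^ 11 := by ring
  have hcurves : N ≤ s ^ 11 := hNs.trans (pow_le_pow_right₀ hs (by norm_num))
  have hwidth : M ^ 3 ≤ 1331 * s ^ 11 := by
    calc M ^ 3 ≤ (11 * s ^ 3) ^ 3 := by gcongr
      _ = 1331 * s ^ 9 := by ring
      _ ≤ 1331 * s ^ 11 := by
          gcongr 1331 * ?_
          exact pow_le_pow_right₀ hs (by norm_num)
  have hlower : 10 * (s ^ 5 * M ^ 2) + 5 * N + 10 * M ^ 3 ≤ 14525 * s ^ 11 := by linarith
  refine le_of_mul_le_mul_left ?_ (pow_pos hM0 3)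
  have := mul_le_mul_of_nonneg_left hlower (pow_pos hM0 3).le
  have : 0 ≤ M ^ 3 * s ^ 11 := by positivity
  linarith

theorem le_mul_rpow_of_forall_pow_three_mul_le {n N I : ℕ} (hn : 1 ≤ n) (hN : N ≤ n ^ 2)
    (h : ∀ M, 0 < M → M ^ 3 * I ≤
      5 * (2 * N ^ 2 + M ^ 2 * (I + 2 * n * M ^ 3) + (N + 2 * M ^ 3) * M ^ 3)) :
    (I : ℝ) ≤ 30000 * (n : ℝ) ^ ((11 : ℝ) / 5) := by
  obtain ⟨s, hs, hns⟩ : ∃ s : ℝ, 1 ≤ s ∧ s ^ 5 = n :=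
    ⟨(n : ℝ) ^ ((5 : ℕ) : ℝ)⁻¹, Real.one_le_rpow (mod_cast hn) (by positivity),
      Real.rpow_inv_natCast_pow n.cast_nonneg (by norm_num)⟩
  have hpow : (n : ℝ) ^ ((11 : ℝ) / 5) = s ^ 11 := by
    rw [← hns, ← Real.rpow_natCast_mul (by linarith), ← Real.rpow_natCast s 11]
    norm_num
  have hNs : (N : ℝ) ≤ s ^ 10 := by
    calc (N : ℝ) ≤ (n : ℝ) ^ 2 := mod_cast hN
      _ = s ^ 10 := by rw [← hns, ← pow_mul]
  have hceil : (⌈10 * s ^ 3⌉₊ : ℝ) ≤ 11 * s ^ 3 := by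
    linarith [Nat.ceil_lt_add_one (a := 10 * s ^ 3) (by positivity), one_le_pow₀ hs (n := 3)]
  rw [hpow]
  refine le_of_pow_three_mul_le hs I.cast_nonneg N.cast_nonneg hNs (Nat.le_ceil _) hceil ?_
  rw [hns]
  exact_mod_cast h _ (Nat.ceil_pos.2 (by positivity))

end Counting

theorem repeated_three_by_three_minors_upper_bound_general {R : Type*} [CommRing R] [LinearOrder R]
    [IsStrictOrderedRing R] {n : ℕ} {A : Matrix (Fin 3) (Fin n) R} (hA : HasPosMaximalMinors A)
    (x : R) :
    (({S : Finset (Fin n) | ∃ h : S.card = 3,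
        (A.submatrix id ⇑(S.orderEmbOfFin h)).det = x} : Set (Finset (Fin n))).ncard : ℝ)
      ≤ 30000 * (n : ℝ) ^ ((11 : ℝ) / 5) := by
  refine (Nat.cast_le.2 (ncard_minors_eq_le A x)).trans ?_
  rcases n with _ | m
  · simp
  · exact le_mul_rpow_of_forall_pow_three_mul_le (Nat.le_add_left 1 m) (card_columnPair_le (m + 1))
      fun M hM => hA.mul_sum_card_minor_eq_le x hM

theorem repeated_three_by_three_minors_upper_bound :
    ∃ C : ℝ, 0 < C ∧ ∀ (n : ℕ), 3 ≤ n →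
      ∀ A : Matrix (Fin 3) (Fin n) ℝ, IsTotallyPositive A →
        (({S : Finset (Fin n) | ∃ h : S.card = 3,
            (A.submatrix id ⇑(S.orderEmbOfFin h)).det = 1} : Set (Finset (Fin n))).ncard : ℝ)
          ≤ C * (n : ℝ) ^ ((11 : ℝ) / 5) :=
  ⟨30000, by norm_num, fun _ _ _ hA =>
    repeated_three_by_three_minors_upper_bound_general hA.hasPosMaximalMinors 1⟩
end

section
/- There exists a constant C > 0 such that for every n ≥ 2, every n×n TP₂ real matrix A, and every real number α, the number of quadruples (i, j, k, l) with 1 ≤ i < j ≤ n and 1 ≤ k < l ≤ n such that the 2×2 minor of A on rows i, j and columns k, l equals α is at most C·n^(10/3). -/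
/-- A real matrix is TP₂ if all of its entries are positive and all of its `2 × 2` minors
are positive. -/
def IsTP2 {m n : ℕ} (A : Matrix (Fin m) (Fin n) ℝ) : Prop :=
  (∀ i j, 0 < A i j) ∧
  ∀ i j k l, i < j → k < l → 0 < A i k * A j l - A i l * A j k

/-!
Fix two rows `a`, `b`. The minor on columns `k`, `l` equals `α` exactly when the point `(a k, b k)`
lies on the line `{(x, y) | x * b l - y * a l = α}`. Since no minor vanishes, the points are
distinct, the lines are distinct and at most one line is vertical, so the Szemerédi–Trotter theorem
allows only `O(n ^ (4 / 3))` pairs of columns; there are at most `n ^ 2` pairs of rows.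

The Szemerédi–Trotter theorem follows from Székely's argument: draw the segments joining consecutive
points on each line and apply the crossing lemma, two lines crossing at most once. To stay clear of
Euler's formula, the bound `3 * #V` for the number of edges of a plane drawing is proved by
charging: an edge that is neither the topmost one leaving its left end nor the topmost one entering
its right end is the first edge met when looking down from some vertex.
-/

open Finset

namespace SzemerediTrotter

/-- The non-vertical line `y = slope * x + intercept` in the plane `K × K`. -/
@[ext]
structure NonverticalLine (K : Type*) where
  slope : K
  intercept : K

namespace NonverticalLine

variable {K : Type*} [Field K]

/-- The second coordinate of the point of a line above the abscissa `x`. -/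
def height (l : NonverticalLine K) (x : K) : K := l.slope * x + l.intercept

instance : Membership (K × K) (NonverticalLine K) where
  mem l p := l.height p.1 = p.2

variable {l m : NonverticalLine K} {p q : K × K} {s t x : K}

lemma mem_def : p ∈ l ↔ l.height p.1 = p.2 := Iff.rfl

lemma eq_of_mem_of_fst_eq (hp : p ∈ l) (hq : q ∈ l) (h : p.1 = q.1) : p = q :=
  Prod.ext h (by rw [← mem_def.1 hp, ← mem_def.1 hq, h])

lemma eq_of_height_eq (hslope : l.slope = m.slope) (hx : l.height x = m.height x) : l = m := by
  refine NonverticalLine.ext hslope ?_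
  rwa [height, height, hslope, add_right_inj] at hx

lemma abscissa_unique (hslope : l.slope ≠ m.slope) (hs : l.height s = m.height s)
    (ht : l.height t = m.height t) : s = t := by
  have : (l.slope - m.slope) * (s - t) = 0 := by
    unfold height at hs ht
    linear_combination hs - ht
  exact sub_eq_zero.1 ((mul_eq_zero.1 this).resolve_left (sub_ne_zero.2 hslope))

variable [LinearOrder K] [IsStrictOrderedRing K]

lemma height_lt_height_iff_of_lt (hl : p ∈ l) (hm : p ∈ m) (hx : p.1 < x) :
    l.height x < m.height x ↔ l.slope < m.slope := by
  have hdiff : m.height x - l.height x = (m.slope - l.slope) * (x - p.1) := by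
    have := (mem_def.1 hl).trans (mem_def.1 hm).symm
    unfold height at *
    linear_combination -this
  rw [← sub_pos, hdiff, mul_pos_iff_of_pos_right (sub_pos.2 hx), sub_pos]

lemma height_lt_height_iff_of_gt (hl : p ∈ l) (hm : p ∈ m) (hx : x < p.1) :
    l.height x < m.height x ↔ m.slope < l.slope := by
  have hdiff : m.height x - l.height x = (l.slope - m.slope) * (p.1 - x) := by
    have := (mem_def.1 hl).trans (mem_def.1 hm).symm
    unfold height at *
    linear_combination -this
  rw [← sub_pos, hdiff, mul_pos_iff_of_pos_right (sub_pos.2 hx), sub_pos]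

lemma slope_ne_of_height_lt_of_height_lt (hs : l.height s < m.height s)
    (ht : m.height t < l.height t) : l.slope ≠ m.slope := by
  intro h
  rw [height, height, h, add_lt_add_iff_left] at hs ht
  exact lt_asymm hs ht

lemma exists_mem_openSegment_height_eq (hs : l.height s < m.height s)
    (ht : m.height t < l.height t) : ∃ z ∈ openSegment K s t, l.height z = m.height z := by
  obtain ⟨a, ha_def⟩ : ∃ a, a = m.height s - l.height s := ⟨_, rfl⟩
  obtain ⟨b, hb_def⟩ : ∃ b, b = l.height t - m.height t := ⟨_, rfl⟩
  have ha : 0 < a := ha_def ▸ sub_pos.2 hs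
  have hb : 0 < b := hb_def ▸ sub_pos.2 ht
  refine ⟨(b / (a + b)) • s + (a / (a + b)) • t,
    ⟨_, _, by positivity, by positivity, by field_simp; ring, rfl⟩, ?_⟩
  simp only [height, smul_eq_mul] at ha_def hb_def ⊢
  field_simp
  linear_combination b * ha_def - a * hb_def

end NonverticalLine

/-- A straight non-vertical edge of a drawing, recorded together with the line that carries it. -/
@[ext]
structure Edge (K : Type*) [Field K] [LinearOrder K] where
  left : K × K
  right : K × K
  line : NonverticalLine K
  left_lt_right : left.1 < right.1
  left_mem : left ∈ line
  right_mem : right ∈ line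

namespace Edge

variable {K : Type*} [Field K] [LinearOrder K]

/-- The abscissas of the interior points of an edge. -/
def span (e : Edge K) : Set K := Set.Ioo e.left.1 e.right.1

/-- The abscissas of the points of an edge, ends included. -/
def closedSpan (e : Edge K) : Set K := Set.Icc e.left.1 e.right.1

/-- The set of the two ends of an edge. -/
noncomputable def ends (e : Edge K) : Finset (K × K) := {e.left, e.right}

/-- Two edges cross if they share an interior point and lie on different lines. -/
def Crosses (e f : Edge K) : Prop :=
  e.line.slope ≠ f.line.slope ∧
    ∃ z ∈ e.span ∩ f.span, e.line.height z = f.line.height z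

variable {e f : Edge K} {s t x : K} {p : K × K}

lemma left_mem_closedSpan (e : Edge K) : e.left.1 ∈ e.closedSpan :=
  Set.left_mem_Icc.2 e.left_lt_right.le

lemma mem_closedSpan_of_mem_span (hx : x ∈ e.span) : x ∈ e.closedSpan :=
  Set.Ioo_subset_Icc_self hx

lemma card_ends (e : Edge K) : #e.ends = 2 :=
  card_pair fun h => e.left_lt_right.ne (congrArg Prod.fst h)

lemma mem_line_of_mem_ends (hp : p ∈ e.ends) : p ∈ e.line := by
  rcases mem_insert.1 hp with rfl | hp
  · exact e.left_mem
  · exact mem_singleton.1 hp ▸ e.right_mem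

lemma fst_notMem_span_of_mem_ends (hp : p ∈ e.ends) : p.1 ∉ e.span := by
  rcases mem_insert.1 hp with rfl | hp
  · exact fun h => lt_irrefl _ h.1
  · exact mem_singleton.1 hp ▸ fun h => lt_irrefl _ h.2

lemma Crosses.disjoint_ends (h : e.Crosses f) : Disjoint e.ends f.ends := by
  obtain ⟨hslope, z, hz, hheight⟩ := h
  refine disjoint_left.2 fun p hpe hpf => fst_notMem_span_of_mem_ends hpe ?_
  have hp : e.line.height p.1 = f.line.height p.1 :=
    (mem_line_of_mem_ends hpe).trans (mem_line_of_mem_ends hpf).symm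
  exact NonverticalLine.abscissa_unique hslope hp hheight ▸ hz.1

variable [IsStrictOrderedRing K]

lemma height_le_height_of_not_crosses (h : ¬ e.Crosses f)
    (hse : s ∈ e.closedSpan) (hsf : s ∈ f.closedSpan)
    (hte : t ∈ e.closedSpan) (htf : t ∈ f.closedSpan)
    (hs : e.line.height s < f.line.height s) : e.line.height t ≤ f.line.height t := by
  by_contra! ht
  have hst : s ≠ t := fun hst => lt_asymm hs (hst ▸ ht)
  obtain ⟨z, hz, hheight⟩ := NonverticalLine.exists_mem_openSegment_height_eq hs ht
  rw [openSegment_eq_Ioo' hst] at hz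
  have hsub {g : Edge K} (hsg : s ∈ g.closedSpan) (htg : t ∈ g.closedSpan) : z ∈ g.span :=
    Set.Ioo_subset_Ioo (le_min hsg.1 htg.1) (max_le hsg.2 htg.2) hz
  exact h ⟨NonverticalLine.slope_ne_of_height_lt_of_height_lt hs ht, z,
    ⟨hsub hse hte, hsub hsf htf⟩, hheight⟩

end Edge

/-- `E` is the edge set of a straight-line drawing with vertex set `V`: the edges join vertices and
pass through no further vertex. Edges are allowed to cross. -/
structure IsDrawing {K : Type*} [Field K] [LinearOrder K]
    (V : Finset (K × K)) (E : Finset (Edge K)) : Prop where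
  left_mem : ∀ e ∈ E, e.left ∈ V
  right_mem : ∀ e ∈ E, e.right ∈ V
  notMem_line : ∀ e ∈ E, ∀ p ∈ V, p.1 ∈ e.span → p ∉ e.line

/-- The edge `e` is the first member of `E` met when looking down from `p` that has a point below
`p` in its interior. -/
def IsVisibleFrom {K : Type*} [Field K] [LinearOrder K]
    (E : Finset (Edge K)) (p : K × K) (e : Edge K) : Prop :=
  p.1 ∈ e.span ∧ e.line.height p.1 < p.2 ∧
    ∀ f ∈ E, p.1 ∈ f.span → f.line.height p.1 < p.2 → f.line.height p.1 ≤ e.line.height p.1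

/-- The point `p` lies in the wedge above `e` and below `f`. This is meant for edges `e` and `f`
with the same left end. -/
def IsInWedge {K : Type*} [Field K] [LinearOrder K] (e f : Edge K) (p : K × K) : Prop :=
  p.1 ∈ e.span ∧ p.1 ≤ f.right.1 ∧ e.line.height p.1 < p.2 ∧ p.2 ≤ f.line.height p.1

namespace IsDrawing

variable {K : Type*} [Field K] [LinearOrder K] {V : Finset (K × K)} {E : Finset (Edge K)}
  {e f g : Edge K}

lemma eq_of_line_eq (h : IsDrawing V E) (he : e ∈ E) (hf : f ∈ E) (hline : e.line = f.line)
    (hef : e.left.1 < f.right.1) (hfe : f.left.1 < e.right.1) : e = f := by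
  have hleft : e.left = f.left := by
    rcases lt_trichotomy e.left.1 f.left.1 with hlt | heq | hgt
    · exact absurd (hline ▸ f.left_mem) (h.notMem_line e he _ (h.left_mem f hf) ⟨hlt, hfe⟩)
    · exact NonverticalLine.eq_of_mem_of_fst_eq e.left_mem (hline ▸ f.left_mem) heq
    · exact absurd (hline ▸ e.left_mem) (h.notMem_line f hf _ (h.left_mem e he) ⟨hgt, hef⟩)
  have hright : e.right = f.right := by
    rcases lt_trichotomy e.right.1 f.right.1 with hlt | heq | hgt
    · exact absurd (hline ▸ e.right_mem) (h.notMem_line f hf _ (h.right_mem e he) ⟨hfe, hlt⟩)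
    · exact NonverticalLine.eq_of_mem_of_fst_eq e.right_mem (hline ▸ f.right_mem) heq
    · exact absurd (hline ▸ f.right_mem) (h.notMem_line e he _ (h.right_mem f hf) ⟨hef, hgt⟩)
  exact Edge.ext hleft hright hline

lemma eq_of_slope_eq (h : IsDrawing V E) (he : e ∈ E) (hf : f ∈ E)
    (hslope : e.line.slope = f.line.slope) {x : K}
    (hx : e.line.height x = f.line.height x)
    (hef : e.left.1 < f.right.1) (hfe : f.left.1 < e.right.1) : e = f :=
  h.eq_of_line_eq he hf (NonverticalLine.eq_of_height_eq hslope hx) hef hfe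

lemma card_steepest_at_left_le (h : IsDrawing V E)
    [DecidablePred fun e : Edge K => ∀ f ∈ E, f.left = e.left → f.line.slope ≤ e.line.slope] :
    #{e ∈ E | ∀ f ∈ E, f.left = e.left → f.line.slope ≤ e.line.slope} ≤ #V := by
  refine card_le_card_of_injOn Edge.left (fun e he => h.left_mem e (mem_filter.1 he).1) ?_
  intro e he f hf hleft
  obtain ⟨he, he_max⟩ := mem_filter.1 he
  obtain ⟨hf, hf_max⟩ := mem_filter.1 hf
  have hheight : e.line.height e.left.1 = f.line.height e.left.1 :=
    e.left_mem.trans (hleft ▸ f.left_mem.symm)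
  exact h.eq_of_slope_eq he hf (le_antisymm (hf_max e he hleft) (he_max f hf hleft.symm)) hheight
    (hleft ▸ f.left_lt_right) (hleft ▸ e.left_lt_right)

lemma card_flattest_at_right_le (h : IsDrawing V E)
    [DecidablePred fun e : Edge K => ∀ f ∈ E, f.right = e.right → e.line.slope ≤ f.line.slope] :
    #{e ∈ E | ∀ f ∈ E, f.right = e.right → e.line.slope ≤ f.line.slope} ≤ #V := by
  refine card_le_card_of_injOn Edge.right (fun e he => h.right_mem e (mem_filter.1 he).1) ?_
  intro e he f hf hright
  obtain ⟨he, he_min⟩ := mem_filter.1 he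
  obtain ⟨hf, hf_min⟩ := mem_filter.1 hf
  have hheight : e.line.height e.right.1 = f.line.height e.right.1 :=
    e.right_mem.trans (hright ▸ f.right_mem.symm)
  exact h.eq_of_slope_eq he hf (le_antisymm (he_min f hf hright.symm) (hf_min e he hright)) hheight
    (hright ▸ e.left_lt_right) (hright ▸ f.left_lt_right)

lemma card_visible_le (h : IsDrawing V E) (hplane : ∀ e ∈ E, ∀ f ∈ E, ¬ e.Crosses f)
    [DecidablePred fun e : Edge K => ∃ p ∈ V, IsVisibleFrom E p e] :
    #{e ∈ E | ∃ p ∈ V, IsVisibleFrom E p e} ≤ #V := by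
  refine card_le_card_of_forall_subsingleton (fun e p => IsVisibleFrom E p e)
    (fun e he => (mem_filter.1 he).2) ?_
  rintro p - e ⟨he, hpe, hep, he_top⟩ f ⟨hf, hpf, hfp, hf_top⟩
  have he := (mem_filter.1 he).1
  have hf := (mem_filter.1 hf).1
  have hheight : e.line.height p.1 = f.line.height p.1 :=
    le_antisymm (hf_top e he hpe hep) (he_top f hf hpf hfp)
  have hslope : e.line.slope = f.line.slope := by
    by_contra hne
    exact hplane e he f hf ⟨hne, p.1, ⟨hpe, hpf⟩, hheight⟩
  exact h.eq_of_slope_eq he hf hslope hheight (hpe.1.trans hpf.2) (hpf.1.trans hpe.2)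

variable [IsStrictOrderedRing K]

lemma exists_isInWedge (h : IsDrawing V E) (hplane : ∀ e ∈ E, ∀ f ∈ E, ¬ e.Crosses f)
    (hf : f ∈ E) (hleft : f.left = e.left) (hef : e.line.slope < f.line.slope)
    (hg : g ∈ E) (hright : g.right = e.right) (hge : g.line.slope < e.line.slope) :
    ∃ p ∈ V, IsInWedge e f p := by
  have e_lt_f {x : K} (hx : e.left.1 < x) : e.line.height x < f.line.height x :=
    (NonverticalLine.height_lt_height_iff_of_lt e.left_mem (hleft ▸ f.left_mem) hx).2 hef
  have e_lt_g {x : K} (hx : x < e.right.1) : e.line.height x < g.line.height x :=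
    (NonverticalLine.height_lt_height_iff_of_gt e.right_mem (hright ▸ g.right_mem) hx).2 hge
  rcases lt_or_ge f.right.1 e.right.1 with hfe | hfe
  · have hf_right : e.left.1 < f.right.1 := hleft ▸ f.left_lt_right
    exact ⟨f.right, h.right_mem f hf, ⟨hf_right, hfe⟩, le_rfl,
      (e_lt_f hf_right).trans_eq f.right_mem, f.right_mem.ge⟩
  have hg_left : g.left.1 < e.right.1 := hright ▸ g.left_lt_right
  have hfspan {x : K} (hx : x ∈ e.closedSpan) : x ∈ f.closedSpan :=
    ⟨hleft ▸ hx.1, hx.2.trans hfe⟩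
  have hgf : g.line.height e.right.1 < f.line.height e.right.1 :=
    ((hright ▸ g.right_mem).trans e.right_mem.symm).trans_lt (e_lt_f e.left_lt_right)
  have g_le_f {x : K} (hx : x ∈ e.closedSpan) (hgx : g.left.1 ≤ x) :
      g.line.height x ≤ f.line.height x :=
    Edge.height_le_height_of_not_crosses (hplane g hg f hf)
      ⟨hg_left.le, hright ▸ le_rfl⟩ (hfspan ⟨e.left_lt_right.le, le_rfl⟩)
      ⟨hgx, hright ▸ hx.2⟩ (hfspan hx) hgf
  have heg : e.left.1 < g.left.1 := by
    by_contra! hle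
    have hfe_left : f.line.height e.left.1 = e.line.height e.left.1 :=
      (hleft ▸ f.left_mem).trans e.left_mem.symm
    exact (e_lt_g e.left_lt_right).not_ge ((g_le_f e.left_mem_closedSpan hle).trans_eq hfe_left)
  exact ⟨g.left, h.left_mem g hg, ⟨heg, hg_left⟩, hg_left.le.trans hfe,
    (e_lt_g hg_left).trans_eq g.left_mem,
    g.left_mem.ge.trans (g_le_f ⟨heg.le, hg_left.le⟩ le_rfl)⟩

lemma isVisibleFrom_of_isInWedge (h : IsDrawing V E)
    (hplane : ∀ e ∈ E, ∀ f ∈ E, ¬ e.Crosses f) (he : e ∈ E) (hf : f ∈ E) (hleft : f.left = e.left)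
    (hnext : ∀ k ∈ E, k.left = e.left → e.line.slope < k.line.slope → f.line.slope ≤ k.line.slope)
    {p : K × K} (hp : IsInWedge e f p) (hp_min : ∀ q ∈ V, IsInWedge e f q → p.1 ≤ q.1) :
    IsVisibleFrom E p e := by
  obtain ⟨hpe, hpf, hep, hp_le⟩ := hp
  refine ⟨hpe, hep, fun k hk hpk hkp => ?_⟩
  by_contra! hek
  have hkf : k.line.height p.1 < f.line.height p.1 := hkp.trans_le hp_le
  have between {x : K} (hex : e.left.1 ≤ x) (hkx : k.left.1 ≤ x) (hxp : x ≤ p.1) :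
      e.line.height x ≤ k.line.height x ∧ k.line.height x ≤ f.line.height x := by
    have hxe : x ∈ e.closedSpan := ⟨hex, hxp.trans hpe.2.le⟩
    have hxk : x ∈ k.closedSpan := ⟨hkx, hxp.trans hpk.2.le⟩
    have hxf : x ∈ f.closedSpan := ⟨hleft ▸ hex, hxp.trans hpf⟩
    have hpf' : p.1 ∈ f.closedSpan := ⟨hleft ▸ hpe.1.le, hpf⟩
    exact ⟨Edge.height_le_height_of_not_crosses (hplane e he k hk)
        (Edge.mem_closedSpan_of_mem_span hpe) (Edge.mem_closedSpan_of_mem_span hpk) hxe hxk hek,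
      Edge.height_le_height_of_not_crosses (hplane k hk f hf)
        (Edge.mem_closedSpan_of_mem_span hpk) hpf' hxk hxf hkf⟩
  rcases le_or_gt k.left.1 e.left.1 with hke | hke
  · obtain ⟨hek_left, hkf_left⟩ := between le_rfl hke hpe.1.le
    have hfe_left : f.line.height e.left.1 = e.left.2 := hleft ▸ f.left_mem
    have hmem : e.left ∈ k.line :=
      le_antisymm (hkf_left.trans_eq hfe_left) (e.left_mem.ge.trans hek_left)
    rcases hke.lt_or_eq with hlt | heq
    · exact h.notMem_line k hk _ (h.left_mem e he) ⟨hlt, hpe.1.trans hpk.2⟩ hmem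
    have hek_slope : e.line.slope < k.line.slope :=
      (NonverticalLine.height_lt_height_iff_of_lt e.left_mem hmem hpe.1).1 hek
    have hkf_slope : k.line.slope < f.line.slope :=
      (NonverticalLine.height_lt_height_iff_of_lt hmem (hleft ▸ f.left_mem) hpe.1).1 hkf
    exact hkf_slope.not_ge
      (hnext k hk (NonverticalLine.eq_of_mem_of_fst_eq k.left_mem hmem heq) hek_slope)
  · obtain ⟨hek_left, hkf_left⟩ := between hke.le le_rfl hpk.1.le
    have hspan : k.left.1 ∈ e.span := ⟨hke, hpk.1.trans hpe.2⟩
    have hne : e.line.height k.left.1 ≠ k.left.2 :=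
      h.notMem_line e he _ (h.left_mem k hk) hspan
    exact hpk.1.not_ge <| hp_min _ (h.left_mem k hk) ⟨hspan, hpk.1.le.trans hpf,
      (hek_left.trans_eq k.left_mem).lt_of_ne hne, k.left_mem.ge.trans hkf_left⟩

lemma exists_isVisibleFrom (h : IsDrawing V E) (hplane : ∀ e ∈ E, ∀ f ∈ E, ¬ e.Crosses f)
    (he : e ∈ E) (hleft : ∃ f ∈ E, f.left = e.left ∧ e.line.slope < f.line.slope)
    (hright : ∃ g ∈ E, g.right = e.right ∧ g.line.slope < e.line.slope) :
    ∃ p ∈ V, IsVisibleFrom E p e := by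
  classical
  obtain ⟨f₀, hf₀, hf₀'⟩ := hleft
  obtain ⟨f, hf, hf_min⟩ := exists_min_image
    {f ∈ E | f.left = e.left ∧ e.line.slope < f.line.slope} (fun f => f.line.slope)
    ⟨f₀, mem_filter.2 ⟨hf₀, hf₀'⟩⟩
  obtain ⟨hf, hfe, hef⟩ := mem_filter.1 hf
  obtain ⟨g, hg, hg_right, hge⟩ := hright
  obtain ⟨p₀, hp₀, hp₀'⟩ := h.exists_isInWedge hplane hf hfe hef hg hg_right hge
  obtain ⟨p, hp, hp_min⟩ := exists_min_image {p ∈ V | IsInWedge e f p} Prod.fst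
    ⟨p₀, mem_filter.2 ⟨hp₀, hp₀'⟩⟩
  obtain ⟨hp, hp_wedge⟩ := mem_filter.1 hp
  exact ⟨p, hp, h.isVisibleFrom_of_isInWedge hplane he hf hfe
    (fun k hk hke hek => hf_min k (mem_filter.2 ⟨hk, hke, hek⟩)) hp_wedge
    (fun q hq hq_wedge => hp_min q (mem_filter.2 ⟨hq, hq_wedge⟩))⟩

theorem card_le_three_mul_card (h : IsDrawing V E)
    (hplane : ∀ e ∈ E, ∀ f ∈ E, ¬ e.Crosses f) : #E ≤ 3 * #V := by
  classical
  have hcover : E ⊆ {e ∈ E | ∀ f ∈ E, f.left = e.left → f.line.slope ≤ e.line.slope} ∪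
      {e ∈ E | ∀ f ∈ E, f.right = e.right → e.line.slope ≤ f.line.slope} ∪
      {e ∈ E | ∃ p ∈ V, IsVisibleFrom E p e} := by
    intro e he
    simp only [mem_union, mem_filter, he, true_and]
    by_contra! hcon
    exact (h.exists_isVisibleFrom hplane he hcon.1.1 hcon.1.2).elim fun p hp => hcon.2 p hp.1 hp.2
  calc #E ≤ _ := card_le_card hcover
    _ ≤ #V + #V + #V := (card_union_le _ _).trans <| add_le_add
      ((card_union_le _ _).trans <|
        add_le_add h.card_steepest_at_left_le h.card_flattest_at_right_le)
      (h.card_visible_le hplane)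
    _ = 3 * #V := by ring

end IsDrawing

section RandomSubset

variable {σ τ : Type*} {V S : Finset σ} {p : ℝ}

/-- The probability that a random subset of `V` containing each element independently with
probability `p` is equal to `W`. -/
def randomSubsetWeight (p : ℝ) (V W : Finset σ) : ℝ := p ^ #W * (1 - p) ^ (#V - #W)

lemma randomSubsetWeight_nonneg (hp₀ : 0 ≤ p) (hp₁ : p ≤ 1) (V W : Finset σ) :
    0 ≤ randomSubsetWeight p V W :=
  mul_nonneg (pow_nonneg hp₀ _) (pow_nonneg (sub_nonneg.2 hp₁) _)

variable [DecidableEq σ]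

lemma sum_randomSubsetWeight_superset (p : ℝ) (hS : S ⊆ V) :
    ∑ W ∈ V.powerset with S ⊆ W, randomSubsetWeight p V W = p ^ #S := by
  have hIcc : ({W ∈ V.powerset | S ⊆ W} : Finset (Finset σ)) = Icc S V := by
    ext W
    simp only [mem_filter, mem_powerset, mem_Icc, and_comm]
  have hdisj {T : Finset σ} (hT : T ∈ (V \ S).powerset) : Disjoint S T :=
    disjoint_sdiff.mono_right (mem_powerset.1 hT)
  have hinj : Set.InjOn (S ∪ ·) ((V \ S).powerset : Set (Finset σ)) := by
    intro T hT U hU hTU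
    rw [← union_sdiff_cancel_left (hdisj hT), ← union_sdiff_cancel_left (hdisj hU)]
    exact congrArg (· \ S) hTU
  have hterm {T : Finset σ} (hT : T ∈ (V \ S).powerset) :
      randomSubsetWeight p V (S ∪ T) = p ^ #S * (p ^ #T * (1 - p) ^ (#(V \ S) - #T)) := by
    rw [randomSubsetWeight, card_union_of_disjoint (hdisj hT), card_sdiff_of_subset hS, pow_add,
      Nat.sub_sub, mul_assoc]
  rw [hIcc, Icc_eq_image_powerset hS, sum_image hinj, sum_congr rfl fun T hT => hterm hT,
    ← mul_sum, sum_pow_mul_eq_add_pow, add_sub_cancel, one_pow, mul_one]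

lemma sum_randomSubsetWeight_mul_card (p : ℝ) {A : Finset τ} {g : τ → Finset σ} {k : ℕ}
    (hsub : ∀ a ∈ A, g a ⊆ V) (hcard : ∀ a ∈ A, #(g a) = k) :
    ∑ W ∈ V.powerset, randomSubsetWeight p V W * #{a ∈ A | g a ⊆ W} = p ^ k * #A := by
  simp only [card_filter, Nat.cast_sum, Nat.cast_ite, Nat.cast_one, Nat.cast_zero, mul_sum,
    mul_ite, mul_one, mul_zero]
  rw [sum_comm, sum_congr rfl fun a ha => (sum_filter _ _).symm.trans
    ((sum_randomSubsetWeight_superset p (hsub a ha)).trans (by rw [hcard a ha])), sum_const,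
    nsmul_eq_mul, mul_comm]

end RandomSubset

section CrossingLemma

open scoped Classical in
/-- The ordered pairs of crossing edges; each crossing is therefore counted twice. -/
noncomputable def crossingPairs {K : Type*} [Field K] [LinearOrder K] (E : Finset (Edge K)) :
    Finset (Edge K × Edge K) :=
  {q ∈ E ×ˢ E | q.1.Crosses q.2}

variable {K : Type*} [Field K] [LinearOrder K] {V W : Finset (K × K)} {E : Finset (Edge K)}

lemma mem_crossingPairs {q : Edge K × Edge K} :
    q ∈ crossingPairs E ↔ (q.1 ∈ E ∧ q.2 ∈ E) ∧ q.1.Crosses q.2 := by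
  simp only [crossingPairs, mem_filter, mem_product]

lemma IsDrawing.ends_subset (h : IsDrawing V E) {e : Edge K} (he : e ∈ E) : e.ends ⊆ V :=
  insert_subset (h.left_mem e he) (singleton_subset_iff.2 (h.right_mem e he))

lemma IsDrawing.induce (h : IsDrawing V E) (hW : W ⊆ V) {F : Finset (Edge K)} (hF : F ⊆ E)
    (hends : ∀ e ∈ F, e.ends ⊆ W) : IsDrawing W F where
  left_mem e he := hends e he (mem_insert_self _ _)
  right_mem e he := hends e he (mem_insert_of_mem (mem_singleton_self _))
  notMem_line e he p hp := h.notMem_line e (hF he) p (hW hp)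

variable [IsStrictOrderedRing K]

lemma IsDrawing.card_le_add_card_crossingPairs (h : IsDrawing V E) :
    #E ≤ 3 * #V + #(crossingPairs E) := by
  classical
  set F := {e ∈ E | ∀ f ∈ E, ¬ e.Crosses f}
  have hF : F ⊆ E := filter_subset _ _
  have hFcard : #F ≤ 3 * #V :=
    (h.induce subset_rfl hF fun e he => h.ends_subset (hF he)).card_le_three_mul_card
      fun e he f hf => (mem_filter.1 he).2 f (hF hf)
  have hcover : E ⊆ F ∪ (crossingPairs E).image Prod.fst := by
    intro e he
    by_cases heF : e ∈ F
    · exact mem_union_left _ heF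
    obtain ⟨f, hf, hef⟩ : ∃ f ∈ E, e.Crosses f := by
      by_contra! hcon
      exact heF (mem_filter.2 ⟨he, hcon⟩)
    exact mem_union_right _ <|
      mem_image.2 ⟨(e, f), mem_crossingPairs.2 ⟨⟨he, hf⟩, hef⟩, rfl⟩
  calc #E ≤ _ := card_le_card hcover
    _ ≤ #F + #((crossingPairs E).image Prod.fst) := card_union_le _ _
    _ ≤ 3 * #V + #(crossingPairs E) := add_le_add hFcard card_image_le

theorem IsDrawing.crossing_lemma (h : IsDrawing V E) {p : ℝ} (hp₀ : 0 ≤ p) (hp₁ : p ≤ 1) :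
    p ^ 2 * #E ≤ 3 * (p * #V) + p ^ 4 * #(crossingPairs E) := by
  classical
  have hsample (W : Finset (K × K)) (hW : W ∈ V.powerset) :
      (#{e ∈ E | e.ends ⊆ W} : ℝ) ≤
        3 * #{v ∈ V | {v} ⊆ W} + #{q ∈ crossingPairs E | q.1.ends ∪ q.2.ends ⊆ W} := by
    have hVW : ({v ∈ V | {v} ⊆ W} : Finset (K × K)) = W := by
      simp only [singleton_subset_iff, filter_mem_eq_inter,
        inter_eq_right.2 (mem_powerset.1 hW)]
    have hpairs : crossingPairs {e ∈ E | e.ends ⊆ W} =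
        {q ∈ crossingPairs E | q.1.ends ∪ q.2.ends ⊆ W} := by
      ext q
      simp only [mem_crossingPairs, mem_filter, union_subset_iff]
      tauto
    have := (h.induce (mem_powerset.1 hW) (filter_subset (fun e => e.ends ⊆ W) E)
      fun e he => (mem_filter.1 he).2).card_le_add_card_crossingPairs
    rw [hVW, ← hpairs]
    exact_mod_cast this
  have hexp := sum_le_sum fun W hW =>
    mul_le_mul_of_nonneg_left (hsample W hW) (randomSubsetWeight_nonneg hp₀ hp₁ V W)
  simp only [mul_add, mul_left_comm _ (3 : ℝ), sum_add_distrib, ← mul_sum] at hexp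
  rw [sum_randomSubsetWeight_mul_card p (fun e he => h.ends_subset he) fun e _ => e.card_ends,
    sum_randomSubsetWeight_mul_card p (k := 1) (fun v hv => singleton_subset_iff.2 hv)
      fun v _ => card_singleton v,
    sum_randomSubsetWeight_mul_card p (k := 4)] at hexp
  · rwa [pow_one] at hexp
  · intro q hq
    obtain ⟨⟨hq₁, hq₂⟩, -⟩ := mem_crossingPairs.1 hq
    exact union_subset (h.ends_subset hq₁) (h.ends_subset hq₂)
  · intro q hq
    rw [card_union_of_disjoint (mem_crossingPairs.1 hq).2.disjoint_ends, Edge.card_ends,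
      Edge.card_ends]

end CrossingLemma

section Incidences

variable {K : Type*} [Field K]

open scoped Classical in
/-- The pairs consisting of a point of `P` and a line of `L` through it. -/
noncomputable def incidences (P : Finset (K × K)) (L : Finset (NonverticalLine K)) :
    Finset ((K × K) × NonverticalLine K) :=
  {i ∈ P ×ˢ L | i.1 ∈ i.2}

variable {P : Finset (K × K)} {L : Finset (NonverticalLine K)}

lemma mem_incidences {i : (K × K) × NonverticalLine K} :
    i ∈ incidences P L ↔ (i.1 ∈ P ∧ i.2 ∈ L) ∧ i.1 ∈ i.2 := by
  simp only [incidences, mem_filter, mem_product]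

variable [LinearOrder K]

lemma finite_consecutiveEdges (P : Finset (K × K)) (L : Finset (NonverticalLine K)) :
    {e : Edge K | e.left ∈ P ∧ e.right ∈ P ∧ e.line ∈ L ∧
      ∀ p ∈ P, p.1 ∈ e.span → p ∉ e.line}.Finite := by
  refine Set.Finite.of_injOn (f := fun e : Edge K => (e.left, e.right, e.line))
    (t := (P ×ˢ P ×ˢ L : Finset _)) ?_ ?_ (finite_toSet _)
  · rintro e ⟨hleft, hright, hline, -⟩
    exact mem_product.2 ⟨hleft, mem_product.2 ⟨hright, hline⟩⟩
  · intro e _ f _ hef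
    simp only [Prod.mk.injEq] at hef
    exact Edge.ext hef.1 hef.2.1 hef.2.2

/-- The edges joining consecutive points of `P` along the lines of `L`. -/
noncomputable def consecutiveEdges (P : Finset (K × K)) (L : Finset (NonverticalLine K)) :
    Finset (Edge K) :=
  (finite_consecutiveEdges P L).toFinset

lemma mem_consecutiveEdges {e : Edge K} :
    e ∈ consecutiveEdges P L ↔ e.left ∈ P ∧ e.right ∈ P ∧ e.line ∈ L ∧
      ∀ p ∈ P, p.1 ∈ e.span → p ∉ e.line := by
  rw [consecutiveEdges, Set.Finite.mem_toFinset, Set.mem_ofPred_eq]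

lemma isDrawing_consecutiveEdges (P : Finset (K × K)) (L : Finset (NonverticalLine K)) :
    IsDrawing P (consecutiveEdges P L) where
  left_mem _ he := (mem_consecutiveEdges.1 he).1
  right_mem _ he := (mem_consecutiveEdges.1 he).2.1
  notMem_line _ he := (mem_consecutiveEdges.1 he).2.2.2

lemma exists_consecutiveEdge {p q : K × K} {l : NonverticalLine K} (hp : p ∈ P) (hq : q ∈ P)
    (hl : l ∈ L) (hpl : p ∈ l) (hql : q ∈ l) (hpq : p.1 < q.1) :
    ∃ e ∈ consecutiveEdges P L, e.left = p ∧ e.line = l := by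
  classical
  obtain ⟨r, hr, hr_min⟩ := exists_min_image {r ∈ P | r ∈ l ∧ p.1 < r.1} Prod.fst
    ⟨q, mem_filter.2 ⟨hq, hql, hpq⟩⟩
  obtain ⟨hr, hrl, hpr⟩ := mem_filter.1 hr
  refine ⟨⟨p, r, l, hpr, hpl, hrl⟩, mem_consecutiveEdges.2 ⟨hp, hr, hl, fun s hs hspan hsl => ?_⟩,
    rfl, rfl⟩
  exact hspan.2.not_ge (hr_min s (mem_filter.2 ⟨hs, hsl, hspan.1⟩))

lemma card_incidences_le_card_consecutiveEdges_add (P : Finset (K × K))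
    (L : Finset (NonverticalLine K)) :
    #(incidences P L) ≤ #(consecutiveEdges P L) + #L := by
  classical
  set last := {i ∈ incidences P L | ∀ q ∈ P, q ∈ i.2 → q.1 ≤ i.1.1}
  have hlast : #last ≤ #L := by
    refine card_le_card_of_injOn Prod.snd
      (fun i hi => (mem_incidences.1 (mem_filter.1 hi).1).1.2) fun i hi j hj hij => ?_
    obtain ⟨hi, hi_last⟩ := mem_filter.1 hi
    obtain ⟨hj, hj_last⟩ := mem_filter.1 hj
    obtain ⟨⟨hiP, -⟩, hi_mem⟩ := mem_incidences.1 hi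
    obtain ⟨⟨hjP, -⟩, hj_mem⟩ := mem_incidences.1 hj
    refine Prod.ext (NonverticalLine.eq_of_mem_of_fst_eq hi_mem (hij ▸ hj_mem) ?_) hij
    exact le_antisymm (hj_last _ hiP (hij ▸ hi_mem)) (hi_last _ hjP (hij ▸ hj_mem))
  have hcover : incidences P L ⊆
      (consecutiveEdges P L).image (fun e => (e.left, e.line)) ∪ last := by
    intro i hi
    by_cases hi_last : i ∈ last
    · exact mem_union_right _ hi_last
    obtain ⟨q, hq, hqi, hlt⟩ : ∃ q ∈ P, q ∈ i.2 ∧ i.1.1 < q.1 := by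
      by_contra! hcon
      exact hi_last (mem_filter.2 ⟨hi, hcon⟩)
    obtain ⟨⟨hiP, hiL⟩, hi_mem⟩ := mem_incidences.1 hi
    obtain ⟨e, he, hleft, hline⟩ := exists_consecutiveEdge hiP hq hiL hi_mem hqi hlt
    exact mem_union_left _ (mem_image.2 ⟨e, he, Prod.ext hleft hline⟩)
  calc #(incidences P L) ≤ _ := card_le_card hcover
    _ ≤ _ := card_union_le _ _
    _ ≤ #(consecutiveEdges P L) + #L := add_le_add card_image_le hlast

lemma card_crossingPairs_consecutiveEdges_le (P : Finset (K × K))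
    (L : Finset (NonverticalLine K)) :
    #(crossingPairs (consecutiveEdges P L)) ≤ #L ^ 2 := by
  rw [sq, ← card_product]
  refine card_le_card_of_injOn (fun q => (q.1.line, q.2.line)) ?_ ?_
  · intro q hq
    obtain ⟨⟨he, hf⟩, -⟩ := mem_crossingPairs.1 hq
    exact mem_product.2 ⟨(mem_consecutiveEdges.1 he).2.2.1, (mem_consecutiveEdges.1 hf).2.2.1⟩
  · rintro ⟨e, f⟩ hq ⟨e', f'⟩ hq' hline
    obtain ⟨⟨he, hf⟩, hslope, z, ⟨hze, hzf⟩, hz⟩ := mem_crossingPairs.1 hq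
    obtain ⟨⟨he', hf'⟩, -, z', ⟨hze', hzf'⟩, hz'⟩ := mem_crossingPairs.1 hq'
    obtain ⟨hee', hff'⟩ := Prod.mk.inj hline
    dsimp only at *
    obtain rfl : z = z' :=
      NonverticalLine.abscissa_unique hslope hz (by rw [hee', hff', hz'])
    have hdraw := isDrawing_consecutiveEdges P L
    exact Prod.ext
      (hdraw.eq_of_line_eq he he' hee' (hze.1.trans hze'.2) (hze'.1.trans hze.2))
      (hdraw.eq_of_line_eq hf hf' hff' (hzf.1.trans hzf'.2) (hzf'.1.trans hzf.2))

variable [IsStrictOrderedRing K]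

lemma card_incidences_le_of_one_le (P : Finset (K × K)) (L : Finset (NonverticalLine K)) {t : ℝ}
    (ht : 1 ≤ t) : (#(incidences P L) : ℝ) ≤ 3 * t * #P + (#L / t) ^ 2 + #L := by
  have ht₀ : 0 < t := one_pos.trans_le ht
  have hincidences : (#(incidences P L) : ℝ) ≤ #(consecutiveEdges P L) + #L := by
    exact_mod_cast card_incidences_le_card_consecutiveEdges_add P L
  have hpairs : (#(crossingPairs (consecutiveEdges P L)) : ℝ) ≤ #L ^ 2 := by
    exact_mod_cast card_crossingPairs_consecutiveEdges_le P L
  have hedges : (#(consecutiveEdges P L) : ℝ) ≤ 3 * t * #P + (#L / t) ^ 2 := by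
    have hcrossing := (isDrawing_consecutiveEdges P L).crossing_lemma (inv_nonneg.2 ht₀.le)
      (inv_le_one_of_one_le₀ ht)
    calc (#(consecutiveEdges P L) : ℝ)
        = t ^ 2 * (t⁻¹ ^ 2 * #(consecutiveEdges P L)) := by field_simp
      _ ≤ t ^ 2 * (3 * (t⁻¹ * #P) + t⁻¹ ^ 4 * #L ^ 2) := by
        gcongr
        exact hcrossing.trans (by gcongr)
      _ = 3 * t * #P + (#L / t) ^ 2 := by field_simp
  linarith

theorem card_incidences_le (P : Finset (K × K)) (L : Finset (NonverticalLine K)) :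
    (#(incidences P L) : ℝ) ≤ 4 * (#P * #L : ℝ) ^ (2 / 3 : ℝ) + 3 * #P + #L := by
  rcases P.eq_empty_or_nonempty with rfl | hP
  · simp only [incidences, empty_product, filter_empty, card_empty, Nat.cast_zero]
    positivity
  have hP₀ : (0 : ℝ) < #P := by exact_mod_cast hP.card_pos
  set b : ℝ := (#P * #L : ℝ) ^ (2 / 3 : ℝ) with hb_def
  have hb : 0 ≤ b := by positivity
  have hb_cube : b ^ 3 = (#P * #L) ^ 2 := by
    rw [hb_def, ← Real.rpow_mul_natCast (by positivity), ← Real.rpow_natCast]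
    norm_num
  -- `x` balances the two main terms: `x * #P = b` and `(#L / x) ^ 2 = b`.
  set x : ℝ := b / #P
  have hx : 0 ≤ x := by positivity
  have hxP : x * #P = b := div_mul_cancel₀ b hP₀.ne'
  have hL : (#L : ℝ) ^ 2 = b * x ^ 2 := by
    rw [div_pow, mul_div_assoc', ← pow_succ', hb_cube]
    field_simp
  have hbalance : (#L / (1 + x)) ^ 2 ≤ b := by
    rw [div_pow, div_le_iff₀ (by positivity), hL]
    gcongr
    exact le_add_of_nonneg_left zero_le_one
  linarith [card_incidences_le_of_one_le P L (le_add_of_nonneg_right hx)]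

end Incidences

section Determinants

variable {K : Type*} [Field K]

/-- The line of all `p` for which the determinant with rows `p`, `v` equals `α`. It is vertical if
`v.1 = 0`, and then the value of `detLine` is junk. -/
def detLine (α : K) (v : K × K) : NonverticalLine K := ⟨v.2 / v.1, -α / v.1⟩

lemma mem_detLine {α : K} {p v : K × K} (hv : v.1 ≠ 0) :
    p ∈ detLine α v ↔ p.1 * v.2 - v.1 * p.2 = α := by
  rw [NonverticalLine.mem_def, NonverticalLine.height, detLine]
  field_simp
  constructor <;> intro h <;> linear_combination h

variable {κ : Type*} {v : κ → K × K}

lemma eq_of_det_eq_zero (hdet : ∀ k l, k ≠ l → (v k).1 * (v l).2 - (v l).1 * (v k).2 ≠ 0)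
    {k l : κ} (h : (v k).1 * (v l).2 - (v l).1 * (v k).2 = 0) : k = l :=
  by_contra fun hkl => hdet k l hkl h

variable [Fintype κ] [DecidableEq K]

lemma card_det_eq_vertical_le
    (hdet : ∀ k l, k ≠ l → (v k).1 * (v l).2 - (v l).1 * (v k).2 ≠ 0) (α : K) :
    #{q : κ × κ | (v q.1).1 * (v q.2).2 - (v q.2).1 * (v q.1).2 = α ∧ (v q.2).1 = 0} ≤
      Fintype.card κ := by
  refine card_le_card_of_injOn Prod.fst (t := univ) (fun q _ => mem_univ _) ?_
  intro q hq r hr hqr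
  have hq₀ : (v q.2).1 = 0 := (mem_filter.1 hq).2.2
  have hr₀ : (v r.2).1 = 0 := (mem_filter.1 hr).2.2
  refine Prod.ext hqr (eq_of_det_eq_zero hdet ?_)
  rw [hq₀, hr₀, zero_mul, zero_mul, sub_zero]

open scoped Classical in
lemma card_det_eq_nonvertical_le
    (hdet : ∀ k l, k ≠ l → (v k).1 * (v l).2 - (v l).1 * (v k).2 ≠ 0) (α : K) :
    #{q : κ × κ | (v q.1).1 * (v q.2).2 - (v q.2).1 * (v q.1).2 = α ∧ (v q.2).1 ≠ 0} ≤
      #(incidences (univ.image v) (univ.image (detLine α ∘ v))) := by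
  refine card_le_card_of_injOn (fun q => (v q.1, detLine α (v q.2))) ?_ ?_
  · intro q hq
    obtain ⟨hα, hq₀⟩ := (mem_filter.1 hq).2
    exact mem_incidences.2 ⟨⟨mem_image_of_mem v (mem_univ q.1),
      mem_image_of_mem (detLine α ∘ v) (mem_univ q.2)⟩, (mem_detLine hq₀).2 hα⟩
  · intro q hq r hr hqr
    obtain ⟨hpoint, hline⟩ := Prod.mk.inj hqr
    have hslope : (v q.2).2 / (v q.2).1 = (v r.2).2 / (v r.2).1 :=
      congrArg NonverticalLine.slope hline
    rw [div_eq_div_iff (mem_filter.1 hq).2.2 (mem_filter.1 hr).2.2] at hslope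
    exact Prod.ext (eq_of_det_eq_zero hdet (by rw [hpoint]; ring))
      (eq_of_det_eq_zero hdet (by linear_combination -hslope))

variable [LinearOrder K] [IsStrictOrderedRing K]

theorem card_det_eq_le (hdet : ∀ k l, k ≠ l → (v k).1 * (v l).2 - (v l).1 * (v k).2 ≠ 0) (α : K) :
    (#{q : κ × κ | (v q.1).1 * (v q.2).2 - (v q.2).1 * (v q.1).2 = α} : ℝ) ≤
      9 * (Fintype.card κ : ℝ) ^ (4 / 3 : ℝ) := by
  classical
  set n := Fintype.card κ
  set P := univ.image v
  set L := univ.image (detLine α ∘ v)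
  have hP : #P ≤ n := card_image_le
  have hL : #L ≤ n := card_image_le
  have hsplit : #{q : κ × κ | (v q.1).1 * (v q.2).2 - (v q.2).1 * (v q.1).2 = α} ≤
      n + #(incidences P L) := by
    rw [← card_filter_add_card_filter_not (fun q => (v q.2).1 = 0), filter_filter, filter_filter]
    exact add_le_add (card_det_eq_vertical_le hdet α) (card_det_eq_nonvertical_le hdet α)
  have hmain : (#P * #L : ℝ) ^ (2 / 3 : ℝ) ≤ (n : ℝ) ^ (4 / 3 : ℝ) := by
    calc (#P * #L : ℝ) ^ (2 / 3 : ℝ) ≤ ((n : ℝ) ^ 2) ^ (2 / 3 : ℝ) := by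
          rw [sq]
          gcongr
      _ = (n : ℝ) ^ (4 / 3 : ℝ) := by
          rw [← Real.rpow_natCast_mul n.cast_nonneg]
          norm_num
  have hlinear : (n : ℝ) ≤ (n : ℝ) ^ (4 / 3 : ℝ) := by
    obtain hn | hn := n.eq_zero_or_pos
    · rw [hn, Nat.cast_zero]
      positivity
    · exact Real.self_le_rpow_of_one_le (Nat.one_le_cast.2 hn) (by norm_num)
  rify at hP hL hsplit
  linarith [card_incidences_le P L]

end Determinants

end SzemerediTrotter

theorem repeated_two_by_two_minors_TP2_upper_bound_general {K ι κ : Type*}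
    [Field K] [LinearOrder K] [IsStrictOrderedRing K] [Fintype ι] [Fintype κ] {A : Matrix ι κ K}
    (hA : ∀ i j k l, i ≠ j → k ≠ l → A i k * A j l - A i l * A j k ≠ 0) (α : K) :
    ({q : (ι × ι) × κ × κ | q.1.1 ≠ q.1.2 ∧ q.2.1 ≠ q.2.2 ∧
        A q.1.1 q.2.1 * A q.1.2 q.2.2 - A q.1.1 q.2.2 * A q.1.2 q.2.1 = α}.ncard : ℝ) ≤
      9 * ((Fintype.card ι : ℝ) ^ 2 * (Fintype.card κ : ℝ) ^ (4 / 3 : ℝ)) := by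
  classical
  set bound : ℝ := 9 * (Fintype.card κ : ℝ) ^ (4 / 3 : ℝ)
  have hrows (p : ι × ι) : (#{q : κ × κ | p.1 ≠ p.2 ∧ q.1 ≠ q.2 ∧
      A p.1 q.1 * A p.2 q.2 - A p.1 q.2 * A p.2 q.1 = α} : ℝ) ≤ bound := by
    by_cases hp : p.1 = p.2
    · simp only [hp, ne_eq, not_true_eq_false, false_and, filter_false, card_empty, Nat.cast_zero]
      positivity
    · refine le_trans ?_ (SzemerediTrotter.card_det_eq_le (v := fun k => (A p.1 k, A p.2 k))
        (fun k l => hA p.1 p.2 k l hp) α)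
      exact Nat.cast_le.2 <| card_le_card fun q hq =>
        mem_filter.2 ⟨mem_univ q, (mem_filter.1 hq).2.2.2⟩
  rw [Set.ncard_eq_toFinset_card']
  simp only [Set.toFinset_ofPred, card_filter]
  rw [Fintype.sum_prod_type]
  simp only [← card_filter, Nat.cast_sum]
  calc _ ≤ ∑ _p : ι × ι, bound := sum_le_sum fun p _ => hrows p
    _ = _ := by
      rw [sum_const, card_univ, Fintype.card_prod, nsmul_eq_mul]
      push_cast
      ring

lemma IsTP2.minor_ne_zero {m n : ℕ} {A : Matrix (Fin m) (Fin n) ℝ} (hA : IsTP2 A)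
    (i j : Fin m) (k l : Fin n) (hij : i ≠ j) (hkl : k ≠ l) :
    A i k * A j l - A i l * A j k ≠ 0 := by
  rcases hij.lt_or_gt with hij | hij <;> rcases hkl.lt_or_gt with hkl | hkl <;>
    linarith [hA.2 _ _ _ _ hij hkl]

theorem repeated_two_by_two_minors_TP2_upper_bound :
    ∃ C : ℝ, 0 < C ∧ ∀ (n : ℕ), 2 ≤ n →
      ∀ A : Matrix (Fin n) (Fin n) ℝ, IsTP2 A →
        ∀ α : ℝ,
          (({q : (Fin n × Fin n) × Fin n × Fin n | q.1.1 < q.1.2 ∧ q.2.1 < q.2.2 ∧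
              A q.1.1 q.2.1 * A q.1.2 q.2.2 - A q.1.1 q.2.2 * A q.1.2 q.2.1 = α} :
              Set ((Fin n × Fin n) × Fin n × Fin n)).ncard : ℝ)
            ≤ C * (n : ℝ) ^ ((10 : ℝ) / 3) := by
  refine ⟨9, by norm_num, fun n _ A hA α => ?_⟩
  have hpow : (n : ℝ) ^ ((10 : ℝ) / 3) = (n : ℝ) ^ 2 * (n : ℝ) ^ (4 / 3 : ℝ) := by
    rw [← Real.rpow_natCast, ← Real.rpow_add_of_nonneg n.cast_nonneg (by norm_num) (by norm_num)]
    norm_num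
  have hgeneral := repeated_two_by_two_minors_TP2_upper_bound_general hA.minor_ne_zero α
  rw [Fintype.card_fin, ← hpow] at hgeneral
  refine le_trans ?_ hgeneral
  exact Nat.cast_le.2 (Set.ncard_le_ncard fun q hq => ⟨hq.1.ne, hq.2.1.ne, hq.2.2⟩)
end

section
/- Let k ≥ 2 and let a_1, ..., a_k and b_1, ..., b_k be real numbers with 0 < a_1 < a_2 < ... < a_k and b_1 > b_2 > ... > b_k > 0. Let A be the k×k matrix with entries A_{ij} = (b_i + a_j)^(k-1). Then det(A) = (∏_{i=0}^{k-1} binom(k-1, i)) · (∏_{1 ≤ t < l ≤ k} (a_l − a_t)) · (∏_{1 ≤ w < u ≤ k} (b_w − b_u)). -/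
/-!
By the binomial theorem, the matrix `(bᵢ + aⱼ) ^ n` factors as a Vandermonde matrix of `b` with its
columns reversed, times the diagonal matrix of the binomial coefficients `n.choose m`, times the
transposed Vandermonde matrix of `a`. The column reversal turns the factors `b u - b w`, `w < u`, of
the usual Vandermonde determinant into `b w - b u`. Homogenizing to `(vᵢ xⱼ + wᵢ yⱼ) ^ n` makes both
Vandermonde matrices instances of the projective one.
-/

section

open Finset Matrix

theorem prod_filter_fst_lt_snd {ι M : Type*} [Fintype ι] [Preorder ι] [DecidableLT ι]
    [LocallyFiniteOrderTop ι] [CommMonoid M] (f : ι × ι → M) :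
    ∏ p with p.1 < p.2, f p = ∏ i, ∏ j ∈ Ioi i, f (i, j) :=
  prod_finset_product _ univ Ioi (by simp)

variable {R : Type*} [CommRing R]

theorem det_projVandermonde_eq_prod_filter {n : ℕ} (v w : Fin n → R) :
    (projVandermonde v w).det =
      ∏ p : Fin n × Fin n with p.1 < p.2, (v p.2 * w p.1 - v p.1 * w p.2) := by
  rw [det_projVandermonde, prod_filter_fst_lt_snd]

theorem of_mul_add_mul_pow_eq_rectVandermonde_mul {α β : Type*} (n : ℕ) (v w : α → R)
    (x y : β → R) :
    (of fun i j => (v i * x j + w i * y j) ^ n) =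
      rectVandermonde v w (n + 1) * diagonal (fun m : Fin (n + 1) => (n.choose m : R)) *
        (rectVandermonde x y (n + 1))ᵀ := by
  ext i j
  calc (v i * x j + w i * y j) ^ n
      = ∑ m : Fin (n + 1),
          (v i * x j) ^ (m : ℕ) * (w i * y j) ^ (n - m) * (n.choose m : R) := by
        rw [add_pow, Fin.sum_univ_eq_sum_range
          (fun m => (v i * x j) ^ m * (w i * y j) ^ (n - m) * (n.choose m : R))]
    _ = ∑ m : Fin (n + 1),
          rectVandermonde v w (n + 1) i m * (n.choose m : R) * rectVandermonde x y (n + 1) j m := by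
        refine sum_congr rfl fun m _ => ?_
        simp only [rectVandermonde_apply, Fin.val_rev, Nat.add_sub_add_right, mul_pow]
        ring
    _ = _ := by
        rw [mul_apply]
        simp only [mul_diagonal, transpose_apply]

theorem det_of_mul_add_mul_pow (n : ℕ) (v w x y : Fin (n + 1) → R) :
    (of fun i j => (v i * x j + w i * y j) ^ n).det =
      (∏ i ∈ range (n + 1), (n.choose i : R)) *
        (projVandermonde x y).det * (projVandermonde v w).det := by
  rw [of_mul_add_mul_pow_eq_rectVandermonde_mul, det_mul, det_mul, det_transpose, det_diagonal,
    Fin.prod_univ_eq_prod_range (fun i => (n.choose i : R)), projVandermonde, projVandermonde]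
  ring

theorem det_power_sum_matrix_general (n : ℕ) (a b : Fin (n + 1) → R) :
    (of fun i j => (b i + a j) ^ n).det =
      (∏ i ∈ range (n + 1), (n.choose i : R)) *
        (∏ p : Fin (n + 1) × Fin (n + 1) with p.1 < p.2, (a p.2 - a p.1)) *
        (∏ p : Fin (n + 1) × Fin (n + 1) with p.1 < p.2, (b p.1 - b p.2)) := by
  simpa only [det_projVandermonde_eq_prod_filter, Pi.one_apply, one_mul, mul_one, add_comm] using
    det_of_mul_add_mul_pow n 1 b a 1

end

theorem det_power_sum_matrix (k : ℕ) (hk : 2 ≤ k) (a b : Fin k → ℝ)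
    (ha : StrictMono a) (ha0 : ∀ i, 0 < a i)
    (hb : StrictAnti b) (hb0 : ∀ i, 0 < b i) :
    (Matrix.of fun i j : Fin k => (b i + a j) ^ (k - 1)).det =
      (∏ i ∈ Finset.range k, ((k - 1).choose i : ℝ)) *
        (∏ p ∈ Finset.univ.filter (fun p : Fin k × Fin k => p.1 < p.2),
          (a p.2 - a p.1)) *
        (∏ p ∈ Finset.univ.filter (fun p : Fin k × Fin k => p.1 < p.2),
          (b p.1 - b p.2)) := by
  obtain ⟨n, rfl⟩ := Nat.exists_eq_add_of_le' (one_le_two.trans hk)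
  exact det_power_sum_matrix_general n a b
end

section
/- There exists a constant c > 0 such that for all sufficiently large n the following holds: let A be the n×n matrix with entries A_{ij} = i + j for 1 ≤ i, j ≤ n. Then there exists a real value v such that the number of quadruples (i, j, k, l) with 1 ≤ i < j ≤ n and 1 ≤ k < l ≤ n for which the 2×2 minor of A on rows i, j and columns k, l equals v is at least n^(2 + c/(log log n)). -/
/-!
Rows `i < j` and columns `k < l` give the minor `-(j - i) * (l - k)`, so the number of minors equal
to `-m` is `∑ (n - d) * (n - e)` over the factorisations `m = d * e`. For `m ≤ √n` every summand is
at least `(n / 2) ^ 2`, and it remains to choose an `m ≤ √n` with many divisors. The primorial `y#`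
with `y = log √n / log 4` works: it has at least `2 ^ π(y)` divisors, and Chebyshev's bounds show
that it is at most `√n` and that `π(y)` is of order `log n / log log n`.
-/

open Filter Real

section Minors

/-- The positions, as rows `i < j` and columns `k < l` in `{1, …, n}`, of the `2 × 2` minors of the
`n × n` matrix with entries `i + j` that are equal to `v`; a position is encoded as the tuple
`(i, j, k, l)`. -/
def gridMinorPositions (n : ℕ) (v : ℝ) : Set (ℕ × ℕ × ℕ × ℕ) :=
  {q | 1 ≤ q.1 ∧ q.1 < q.2.1 ∧ q.2.1 ≤ n ∧ 1 ≤ q.2.2.1 ∧ q.2.2.1 < q.2.2.2 ∧ q.2.2.2 ≤ n ∧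
    ((q.1 + q.2.2.1 : ℝ) * (q.2.1 + q.2.2.2) - (q.1 + q.2.2.2 : ℝ) * (q.2.1 + q.2.2.1) = v)}

lemma mem_gridMinorPositions_neg_natCast {n m i j k l : ℕ} :
    (i, j, k, l) ∈ gridMinorPositions n (-m) ↔
      (1 ≤ i ∧ i < j ∧ j ≤ n) ∧ (1 ≤ k ∧ k < l ∧ l ≤ n) ∧ (j - i) * (l - k) = m := by
  have minor_eq : (i + k : ℝ) * (j + l) - (i + l) * (j + k) = -((j - i) * (l - k)) := by ring
  have minor_eq_iff (hij : i < j) (hkl : k < l) :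
      (i + k : ℝ) * (j + l) - (i + l) * (j + k) = -m ↔ (j - i) * (l - k) = m := by
    rw [minor_eq, neg_inj, ← Nat.cast_sub hij.le, ← Nat.cast_sub hkl.le]
    norm_cast
  simp only [gridMinorPositions, Set.mem_ofPred_eq]
  grind

/-- By truncated subtraction, a factorisation with a factor above `n` contributes `0`. -/
lemma ncard_gridMinorPositions_neg_natCast (n : ℕ) {m : ℕ} (hm : m ≠ 0) :
    (gridMinorPositions n (-m)).ncard =
      ∑ p ∈ m.divisorsAntidiagonal, (n - p.1) * (n - p.2) := by
  let position (x : (_ : ℕ × ℕ) × ℕ × ℕ) : ℕ × ℕ × ℕ × ℕ :=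
    (x.2.1, x.2.1 + x.1.1, x.2.2, x.2.2 + x.1.2)
  have position_injective : position.Injective := by
    rintro ⟨⟨d, e⟩, i, k⟩ ⟨⟨d', e'⟩, i', k'⟩ h
    grind
  have eq_image_position : gridMinorPositions n (-m) = position '' (m.divisorsAntidiagonal.sigma
      fun p ↦ Finset.Icc 1 (n - p.1) ×ˢ Finset.Icc 1 (n - p.2)) := by
    ext ⟨i, j, k, l⟩
    simp only [mem_gridMinorPositions_neg_natCast, Set.mem_image, Finset.mem_coe,
      Finset.mem_sigma, Nat.mem_divisorsAntidiagonal, Finset.mem_product, Finset.mem_Icc]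
    constructor
    · rintro ⟨hij, hkl, hprod⟩
      refine ⟨⟨(j - i, l - k), i, k⟩, ⟨⟨hprod, hm⟩, ?_⟩, ?_⟩ <;> grind
    · rintro ⟨⟨⟨d, e⟩, i', k'⟩, ⟨⟨hprod, -⟩, hi, hk⟩, h⟩
      have hde : d ≠ 0 ∧ e ≠ 0 := mul_ne_zero_iff.mp (hprod ▸ hm)
      grind
  rw [eq_image_position, Set.ncard_image_of_injective _ position_injective, Set.ncard_coe_finset,
    Finset.card_sigma]
  simp

lemma card_divisors_mul_sq_le_ncard_gridMinorPositions (n : ℕ) {m : ℕ} (hm : m ≠ 0) :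
    m.divisors.card * (n - m) ^ 2 ≤ (gridMinorPositions n (-m)).ncard := by
  rw [ncard_gridMinorPositions_neg_natCast n hm,
    Nat.sum_divisorsAntidiagonal fun d e ↦ (n - d) * (n - e), ← smul_eq_mul]
  refine Finset.card_nsmul_le_sum _ _ _ fun d hd ↦ ?_
  rw [sq]
  gcongr
  · exact Nat.divisor_le hd
  · exact Nat.div_le_self m d

end Minors

section Divisors

open Chebyshev
open scoped Nat.Prime

lemma two_pow_card_primeFactors_le_card_divisors {m : ℕ} (hm : m ≠ 0) :
    2 ^ m.primeFactors.card ≤ m.divisors.card := by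
  rw [Nat.card_divisors hm]
  refine Finset.pow_card_le_prod _ _ _ fun p hp ↦ ?_
  have := (Nat.prime_of_mem_primeFactors hp).factorization_pos_of_dvd hm
    (Nat.dvd_of_mem_primeFactors hp)
  omega

lemma two_pow_primeCounting_le_card_divisors_primorial (y : ℕ) :
    2 ^ π y ≤ (primorial y).divisors.card := by
  rw [← Nat.primesLE_card_eq_primeCounting, ← primeFactors_primorial]
  exact two_pow_card_primeFactors_le_card_divisors (primorial_ne_zero y)

lemma eventually_mul_log_le_mul (C : ℝ) {ε : ℝ} (hε : 0 < ε) :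
    ∀ᶠ x : ℝ in atTop, C * log x ≤ ε * x := by
  filter_upwards [(isLittleO_log_id_atTop.const_mul_left C).def hε, eventually_ge_atTop 0]
    with x hx hx₀
  simpa [abs_of_nonneg hx₀] using (le_abs_self _).trans hx

lemma eventually_mul_div_log_le_primeCounting {c : ℝ} (hc : c < log 2) :
    ∀ᶠ x : ℝ in atTop, c * x / log x ≤ π ⌊x⌋₊ := by
  set ε := (log 2 - c) / 2 with hε
  have ε_pos : 0 < ε := by linarith
  have log_add_two_le : ∀ᶠ x : ℝ in atTop, 1 * log (x + 2) ≤ ε * (x + 2) :=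
    (tendsto_atTop_add_const_right _ 2 tendsto_id).eventually (eventually_mul_log_le_mul 1 ε_pos)
  have const_le : ∀ᶠ x : ℝ in atTop, log 2 + 2 * ε ≤ ε * x :=
    (tendsto_id.const_mul_atTop ε_pos).eventually_ge_atTop _
  filter_upwards [log_add_two_le, const_le, eventually_gt_atTop 1] with x hlog hconst hx
  have mul_eq : c * x = x * log 2 - 2 * (ε * x) := by rw [hε]; ring
  refine le_trans ?_ (pi_ge' hx)
  gcongr
  · exact (log_pos hx).le
  · linarith

/-- Wigert's theorem, which rests on the prime number theorem, allows any `c < log 2`; the factor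
`1 / 2` is the loss in Chebyshev's bounds. -/
lemma eventually_exists_rpow_le_card_divisors {c : ℝ} (hc₀ : 0 ≤ c) (hc : c < log 2 / 2) :
    ∀ᶠ x : ℝ in atTop, ∃ m : ℕ, m ≠ 0 ∧ (m : ℝ) ≤ x ∧
      x ^ (c / log (log x)) ≤ (m.divisors.card : ℝ) := by
  have log_four : log 4 = 2 * log 2 := by
    rw [show (4 : ℝ) = 2 ^ 2 by norm_num, log_pow, Nat.cast_ofNat]
  have one_lt_log_four : 1 < log 4 := by linarith [log_two_gt_d9]
  have tendsto_y : Tendsto (fun x ↦ log x / log 4) atTop atTop :=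
    tendsto_log_atTop.atTop_div_const (by linarith)
  filter_upwards [tendsto_y.eventually
    (eventually_mul_div_log_le_primeCounting (c := 2 * c) (by linarith)),
    tendsto_y.eventually_gt_atTop 1, eventually_gt_atTop 1] with x hpi hy hx
  set y := log x / log 4 with hy_def
  have log_x_eq : log x = log 4 * y := by rw [hy_def]; field_simp
  refine ⟨primorial ⌊y⌋₊, primorial_ne_zero _, ?_, ?_⟩
  · rw [← log_le_log_iff (mod_cast primorial_pos _) (by linarith), ← theta_eq_log_primorial,
      log_x_eq]
    exact theta_le_log4_mul_x (by linarith)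
  · have log_y_pos : 0 < log y := log_pos hy
    calc x ^ (c / log (log x))
        ≤ x ^ (c / log y) := by
          gcongr
          · exact hx.le
          · rw [log_x_eq]; nlinarith
      _ = exp (log 2 * (2 * c * y / log y)) := by
          rw [rpow_def_of_pos (by linarith), log_x_eq, log_four]; ring_nf
      _ ≤ exp (log 2 * π ⌊y⌋₊) := by gcongr
      _ = 2 ^ π ⌊y⌋₊ := by rw [← rpow_def_of_pos two_pos, rpow_natCast]
      _ ≤ _ := mod_cast two_pow_primeCounting_le_card_divisors_primorial _

lemma eventually_mul_rpow_div_log_log_le (C : ℝ) {c c' : ℝ} (hc : c < c') :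
    ∀ᶠ x : ℝ in atTop, C * x ^ (c / log (log x)) ≤ x ^ (c' / log (log x)) := by
  have log_log_le : ∀ᶠ x : ℝ in atTop, log C * log (log x) ≤ (c' - c) * log x :=
    tendsto_log_atTop.eventually (eventually_mul_log_le_mul (log C) (sub_pos.mpr hc))
  filter_upwards [log_log_le, eventually_gt_atTop 0,
    (tendsto_log_atTop.comp tendsto_log_atTop).eventually_gt_atTop 0] with x hlog hx hll
  replace hll : 0 < log (log x) := hll
  have log_C_le : log C ≤ log x * ((c' - c) / log (log x)) := by
    rw [← mul_div_assoc, le_div_iff₀ hll]; linarith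
  calc C * x ^ (c / log (log x))
      ≤ exp (log C) * x ^ (c / log (log x)) := by gcongr; exact le_exp_log C
    _ ≤ x ^ ((c' - c) / log (log x)) * x ^ (c / log (log x)) := by
        rw [rpow_def_of_pos hx ((c' - c) / log (log x))]; gcongr
    _ = x ^ (c' / log (log x)) := by rw [← rpow_add hx, ← add_div, sub_add_cancel]

lemma eventually_exists_sq_le_mul_rpow_le_card_divisors (C : ℝ) {c : ℝ} (hc : c < log 2 / 4) :
    ∀ᶠ x : ℝ in atTop, ∃ m : ℕ, m ≠ 0 ∧ (m : ℝ) ^ 2 ≤ x ∧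
      C * x ^ (c / log (log x)) ≤ (m.divisors.card : ℝ) := by
  obtain ⟨c', hmax, hc'⟩ := exists_between (max_lt hc (by positivity : 0 < log 2 / 4))
  obtain ⟨hcc', hc₀'⟩ := max_lt_iff.mp hmax
  filter_upwards [tendsto_sqrt_atTop.eventually (eventually_exists_rpow_le_card_divisors
      (c := 2 * c') (by linarith) (by linarith)),
    eventually_mul_rpow_div_log_log_le C hcc', eventually_ge_atTop 1,
    (tendsto_log_atTop.comp tendsto_sqrt_atTop).eventually_gt_atTop 1]
    with x ⟨m, hm, hmx, hdiv⟩ habsorb hx hlog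
  replace hlog : 1 < log √x := hlog
  refine ⟨m, hm, (le_sqrt (by positivity) (by positivity)).mp hmx, ?_⟩
  calc C * x ^ (c / log (log x))
      ≤ x ^ (c' / log (log x)) := habsorb
    _ ≤ x ^ (c' / log (log √x)) := by
        have := log_pos hlog
        gcongr
        exact sqrt_le_self_iff.mpr (.inr hx)
    _ = √x ^ (2 * c' / log (log √x)) := by
        rw [sqrt_eq_rpow, ← rpow_mul (by linarith), mul_div_assoc, ← mul_assoc]; norm_num
    _ ≤ m.divisors.card := hdiv

end Divisors

theorem grid_matrix_repeated_minors_lower_bound :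
    ∃ c : ℝ, 0 < c ∧ ∃ N : ℕ, ∀ n : ℕ, N ≤ n →
      ∃ v : ℝ,
        (n : ℝ) ^ (2 + c / Real.log (Real.log n)) ≤
          (({q : ℕ × ℕ × ℕ × ℕ | 1 ≤ q.1 ∧ q.1 < q.2.1 ∧ q.2.1 ≤ n ∧
              1 ≤ q.2.2.1 ∧ q.2.2.1 < q.2.2.2 ∧ q.2.2.2 ≤ n ∧
              ((q.1 + q.2.2.1 : ℝ) * (q.2.1 + q.2.2.2) -
                (q.1 + q.2.2.2 : ℝ) * (q.2.1 + q.2.2.1) = v)} :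
              Set (ℕ × ℕ × ℕ × ℕ)).ncard : ℝ) := by
  refine ⟨1 / 8, by norm_num, ?_⟩
  obtain ⟨N, hN⟩ := eventually_atTop.mp <| (tendsto_natCast_atTop_atTop (R := ℝ)).eventually <|
    (eventually_exists_sq_le_mul_rpow_le_card_divisors 4
      (c := 1 / 8) (by linarith [log_two_gt_d9])).and (eventually_ge_atTop 4)
  refine ⟨N, fun n hn ↦ ?_⟩
  obtain ⟨⟨m, hm, hmn, hdiv⟩, hn⟩ := hN n hn
  have half_le : (n : ℝ) / 2 ≤ n - m := by nlinarith
  have cast_sub : ((n - m : ℕ) : ℝ) = n - m :=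
    Nat.cast_sub <| Nat.cast_le.mp (by linarith : (m : ℝ) ≤ n)
  refine ⟨-m, ?_⟩
  calc (n : ℝ) ^ (2 + 1 / 8 / log (log n))
      = 4 * (n : ℝ) ^ (1 / 8 / log (log n)) * (n / 2) ^ 2 := by
        rw [rpow_add (by linarith), rpow_two]; ring
    _ ≤ m.divisors.card * (n - m : ℕ) ^ 2 := by rw [cast_sub]; gcongr
    _ ≤ (gridMinorPositions n (-m)).ncard :=
        mod_cast card_divisors_mul_sq_le_ncard_gridMinorPositions n hm
end

section
/- There exists a constant C > 0 such that for every n ≥ 1 and all finite sets A, B of real numbers with |A| = |B| = n, the number of quadruples (a, c, b, d) with a, c ∈ A, a < c, b, d ∈ B, b < d, and (c − a)(d − b) = 1 is at most C·n^(8/3). -/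
/-!
Fix the bottom-left corner `(a, b)`: the top-right corners completing a rectangle of area `s` lie
on a branch of the hyperbola `(x - a) * (y - b) = s`, which is a decreasing curve, and two distinct
points lie on at most one such branch. So it suffices to bound the incidences between `n ^ 2`
decreasing curves and the points of an `n × n` grid. Cut the grid into blocks of `k × k` points. A
decreasing curve meets each diagonal of blocks in at most one block, so at most
`n ^ 2 * (2 * (n / k) + 1)` pairs (curve, block) carry an incidence. Every further incidence in such
a pair exhibits two distinct points of a common block, which determine the curve, so there are at
most `(n * k) ^ 2` further incidences. Take `k` close to `n ^ (1 / 3)`.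
-/

open Finset

theorem card_le_card_image_add_card_collisions {σ τ : Type*} [DecidableEq τ] (s : Finset σ)
    (f : σ → τ) :
    #s ≤ #(s.image f) + #{p ∈ s.offDiag | f p.1 = f p.2} := by
  classical
  obtain ⟨t, hts, hinj, himage⟩ :=
    exists_subset_injOn_image_eq_of_surjOn (f := f) s (s.image f) (by simp [Set.SurjOn])
  have hrep : ∀ x ∈ s, ∃ y ∈ t, f y = f x := fun x hx ↦
    mem_image.1 (himage ▸ mem_image_of_mem f hx)
  choose! rep hrep_mem hrep_eq using hrep
  have hcollide : #(s \ t) ≤ #{p ∈ s.offDiag | f p.1 = f p.2} := by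
    refine card_le_card_of_injOn (fun x ↦ (x, rep x)) (fun x hx ↦ ?_)
      fun x _ y _ hxy ↦ congrArg Prod.fst hxy
    obtain ⟨hxs, hxt⟩ := mem_sdiff.1 hx
    have hne : x ≠ rep x := fun h ↦ hxt (h ▸ hrep_mem x hxs)
    exact mem_filter.2
      ⟨mem_offDiag.2 ⟨hxs, hts (hrep_mem x hxs), hne⟩, (hrep_eq x hxs).symm⟩
  calc #s = #t + #(s \ t) := by rw [add_comm, card_sdiff_add_card_eq_card hts]
    _ = #(s.image f) + #(s \ t) := by rw [← himage, card_image_of_injOn hinj]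
    _ ≤ #(s.image f) + #{p ∈ s.offDiag | f p.1 = f p.2} := by gcongr

section Blocks

variable {α : Type*} [LinearOrder α]

/-- The number of elements of `A` strictly below `x`, used to number the elements of `A` in
increasing order, starting from `0`. -/
def rankIn (A : Finset α) (x : α) : ℕ := #{y ∈ A | y < x}

theorem rankIn_mono (A : Finset α) : Monotone (rankIn A) := fun _ _ hxy ↦
  card_le_card (monotone_filter_right A fun _ _ hz ↦ lt_of_lt_of_le hz hxy)

theorem rankIn_strictMonoOn (A : Finset α) : StrictMonoOn (rankIn A) A := by
  intro x hx y _ hxy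
  have hsub : {z ∈ A | z < x} ⊆ {z ∈ A | z < y} :=
    monotone_filter_right A fun _ _ hz ↦ lt_trans hz hxy
  exact card_lt_card <| (ssubset_iff_of_subset hsub).2
    ⟨x, mem_filter.2 ⟨hx, hxy⟩, fun hmem ↦ lt_irrefl x (mem_filter.1 hmem).2⟩

/-- The index of the block containing `x` when `A` is cut, in increasing order, into blocks of `k`
consecutive elements. -/
def blockIndex (A : Finset α) (k : ℕ) (x : α) : ℕ := rankIn A x / k

theorem blockIndex_mono (A : Finset α) (k : ℕ) : Monotone (blockIndex A k) := fun _ _ hxy ↦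
  Nat.div_le_div_right (rankIn_mono A hxy)

theorem blockIndex_le (A : Finset α) (k : ℕ) (x : α) : blockIndex A k x ≤ #A / k :=
  Nat.div_le_div_right (card_filter_le _ _)

/-- The pairs of elements of `A` lying in a common block of `k` consecutive elements. -/
def blockPairs (A : Finset α) (k : ℕ) : Finset (α × α) :=
  {p ∈ A ×ˢ A | blockIndex A k p.1 = blockIndex A k p.2}

theorem mem_blockPairs {A : Finset α} {k : ℕ} {x y : α} :
    (x, y) ∈ blockPairs A k ↔ (x ∈ A ∧ y ∈ A) ∧ blockIndex A k x = blockIndex A k y := by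
  simp only [blockPairs, mem_filter, mem_product]

theorem card_blockPairs_le (A : Finset α) {k : ℕ} (hk : 0 < k) : #(blockPairs A k) ≤ #A * k := by
  rw [← card_range k, ← card_product, card_range]
  refine card_le_card_of_injOn (fun p ↦ (p.1, rankIn A p.2 % k)) ?_ ?_
  · rintro ⟨x, y⟩ hxy
    exact mk_mem_product (mem_blockPairs.1 hxy).1.1 (mem_range.2 (Nat.mod_lt _ hk))
  · rintro ⟨x, y⟩ hxy ⟨x', y'⟩ hxy' heq
    obtain ⟨rfl, hmod⟩ := Prod.mk.inj heq
    obtain ⟨⟨-, hy⟩, hblock⟩ := mem_blockPairs.1 hxy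
    obtain ⟨⟨-, hy'⟩, hblock'⟩ := mem_blockPairs.1 hxy'
    have hrank : rankIn A y = rankIn A y' := Nat.ext_div_mod (hblock.symm.trans hblock') hmod
    rw [(rankIn_strictMonoOn A).injOn hy hy' hrank]

end Blocks

section Incidences

variable {ι α β : Type*} [LinearOrder α] [LinearOrder β]

/-- A family of curves in `α × β`, given by the incidence relation `inc i p` ("the curve `i` passes
through the point `p`"), in which every curve is weakly decreasing and two distinct points lie on at
most one common curve. Vertical and horizontal pieces are allowed. -/
structure IsDecreasingPseudolines (inc : ι → α × β → Prop) : Prop where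
  antitone : ∀ {i p q}, inc i p → inc i q → p.1 < q.1 → q.2 ≤ p.2
  eq_of_ne : ∀ {i j p q}, p ≠ q → inc i p → inc i q → inc j p → inc j q → i = j

/-- The curve of an incidence together with the diagonal of blocks containing its point. Diagonals
are indexed by the difference of the two block indices, which is monotone along a decreasing curve
and hence separates the blocks it meets. -/
def curveDiagonal (A : Finset α) (B : Finset β) (k l : ℕ) (x : ι × α × β) : ι × ℤ :=
  (x.1, (blockIndex A k x.2.1 : ℤ) - blockIndex B l x.2.2)

theorem card_image_curveDiagonal_le [DecidableEq ι] {T : Finset ι} {I : Finset (ι × α × β)}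
    (hI : ∀ x ∈ I, x.1 ∈ T) (A : Finset α) (B : Finset β) (k l : ℕ) :
    #(I.image (curveDiagonal A B k l)) ≤ #T * (#A / k + #B / l + 1) := by
  have hsub : I.image (curveDiagonal A B k l) ⊆
      T ×ˢ Icc (-(#B / l : ℕ) : ℤ) (#A / k : ℕ) := by
    refine image_subset_iff.2 fun x hx ↦ mk_mem_product (hI x hx) (mem_Icc.2 ?_)
    have hA := blockIndex_le A k x.2.1
    have hB := blockIndex_le B l x.2.2
    lia
  calc #(I.image (curveDiagonal A B k l))
      ≤ #(T ×ˢ Icc (-(#B / l : ℕ) : ℤ) (#A / k : ℕ)) := card_le_card hsub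
    _ = #T * (#A / k + #B / l + 1) := by
      rw [card_product, Int.card_Icc]
      congr 1
      lia

namespace IsDecreasingPseudolines

variable {inc : ι → α × β → Prop} (h : IsDecreasingPseudolines inc)
include h

theorem blockIndex_eq_of_curveDiagonal_eq {A : Finset α} {B : Finset β} {k l : ℕ} {i j : ι}
    {p q : α × β} (hp : inc i p) (hq : inc j q)
    (heq : curveDiagonal A B k l (i, p) = curveDiagonal A B k l (j, q)) :
    blockIndex A k p.1 = blockIndex A k q.1 ∧ blockIndex B l p.2 = blockIndex B l q.2 := by
  obtain ⟨rfl, hdiag⟩ := Prod.mk.inj heq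
  rcases lt_trichotomy p.1 q.1 with hlt | hfst | hlt
  · have hA := blockIndex_mono A k hlt.le
    have hB := blockIndex_mono B l (h.antitone hp hq hlt)
    lia
  · rw [hfst] at hdiag ⊢
    lia
  · have hA := blockIndex_mono A k hlt.le
    have hB := blockIndex_mono B l (h.antitone hq hp hlt)
    lia

theorem card_collisions_le [DecidableEq ι] {I : Finset (ι × α × β)} {A : Finset α} {B : Finset β}
    {k l : ℕ} (hinc : ∀ x ∈ I, inc x.1 x.2) (hgrid : ∀ x ∈ I, x.2 ∈ A ×ˢ B) :
    #{z ∈ I.offDiag | curveDiagonal A B k l z.1 = curveDiagonal A B k l z.2} ≤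
      #(blockPairs A k) * #(blockPairs B l) := by
  rw [← card_product]
  refine card_le_card_of_injOn (fun z ↦ ((z.1.2.1, z.2.2.1), (z.1.2.2, z.2.2.2))) ?_ ?_
  · rintro ⟨⟨i, p⟩, j, q⟩ hz
    obtain ⟨hmem, heq⟩ := mem_filter.1 hz
    obtain ⟨hp, hq, -⟩ := mem_offDiag.1 hmem
    obtain ⟨hpA, hpB⟩ := mem_product.1 (hgrid _ hp)
    obtain ⟨hqA, hqB⟩ := mem_product.1 (hgrid _ hq)
    obtain ⟨hA, hB⟩ := h.blockIndex_eq_of_curveDiagonal_eq (hinc _ hp) (hinc _ hq) heq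
    exact mk_mem_product (mem_blockPairs.2 ⟨⟨hpA, hqA⟩, hA⟩) (mem_blockPairs.2 ⟨⟨hpB, hqB⟩, hB⟩)
  · rintro ⟨⟨i, c, d⟩, i', c', d'⟩ hz ⟨⟨j, e, f⟩, j', e', f'⟩ hw hzw
    obtain ⟨hzmem, hzdiag⟩ := mem_filter.1 hz
    obtain ⟨hwmem, hwdiag⟩ := mem_filter.1 hw
    obtain ⟨hz₁, hz₂, hne⟩ := mem_offDiag.1 hzmem
    obtain ⟨hw₁, hw₂, -⟩ := mem_offDiag.1 hwmem
    obtain rfl : i = i' := congrArg Prod.fst hzdiag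
    obtain rfl : j = j' := congrArg Prod.fst hwdiag
    simp only [Prod.mk.injEq] at hzw
    obtain ⟨⟨rfl, rfl⟩, rfl, rfl⟩ := hzw
    have hpoints : (c, d) ≠ (c', d') := fun hcd ↦ hne (congrArg (Prod.mk i) hcd)
    obtain rfl : i = j :=
      h.eq_of_ne hpoints (hinc _ hz₁) (hinc _ hz₂) (hinc _ hw₁) (hinc _ hw₂)
    rfl

theorem card_incidences_le {T : Finset ι} {A : Finset α} {B : Finset β} {I : Finset (ι × α × β)}
    (hinc : ∀ x ∈ I, inc x.1 x.2) (hI : I ⊆ T ×ˢ A ×ˢ B) {k l : ℕ} (hk : 0 < k) (hl : 0 < l) :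
    #I ≤ #T * (#A / k + #B / l + 1) + #A * k * (#B * l) := by
  classical
  have hmem : ∀ x ∈ I, x.1 ∈ T ∧ x.2 ∈ A ×ˢ B := fun x hx ↦ mem_product.1 (hI hx)
  calc #I ≤ #(I.image (curveDiagonal A B k l)) +
        #{z ∈ I.offDiag | curveDiagonal A B k l z.1 = curveDiagonal A B k l z.2} :=
        card_le_card_image_add_card_collisions I _
    _ ≤ #T * (#A / k + #B / l + 1) + #(blockPairs A k) * #(blockPairs B l) :=
        add_le_add (card_image_curveDiagonal_le (fun x hx ↦ (hmem x hx).1) A B k l)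
          (h.card_collisions_le hinc fun x hx ↦ (hmem x hx).2)
    _ ≤ #T * (#A / k + #B / l + 1) + #A * k * (#B * l) := by
        gcongr
        exacts [card_blockPairs_le A hk, card_blockPairs_le B hl]

end IsDecreasingPseudolines

theorem exists_blockSize_cost_le (n : ℕ) :
    ∃ k : ℕ, 0 < k ∧
      ((n ^ 2 * (n / k + n / k + 1) + n * k * (n * k) : ℕ) : ℝ) ≤ 7 * (n : ℝ) ^ ((8 : ℝ) / 3) := by
  rcases n.eq_zero_or_pos with rfl | hn
  · exact ⟨1, one_pos, by norm_num⟩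
  set t : ℝ := (n : ℝ) ^ ((1 : ℝ) / 3) with ht
  have ht_pow (m : ℕ) : t ^ m = (n : ℝ) ^ ((m : ℝ) / 3) := by
    rw [ht, ← Real.rpow_mul_natCast n.cast_nonneg, one_div_mul_eq_div]
  have ht_cube : t ^ 3 = n := by simp [ht_pow]
  have ht_one : 1 ≤ t := Real.one_le_rpow (mod_cast hn) (by norm_num)
  have ht_pos : 0 < t := one_pos.trans_le ht_one
  refine ⟨⌈t⌉₊, Nat.ceil_pos.2 ht_pos, ?_⟩
  have hceil : (⌈t⌉₊ : ℝ) ≤ 2 * t := by linarith [Nat.ceil_lt_add_one ht_pos.le]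
  have hquot : ((n / ⌈t⌉₊ : ℕ) : ℝ) ≤ t ^ 2 :=
    calc ((n / ⌈t⌉₊ : ℕ) : ℝ) ≤ n / ⌈t⌉₊ := Nat.cast_div_le
      _ ≤ n / t := by gcongr; exact Nat.le_ceil t
      _ = t ^ 2 := by rw [← ht_cube]; field_simp
  push_cast
  calc (n : ℝ) ^ 2 * ((n / ⌈t⌉₊ : ℕ) + (n / ⌈t⌉₊ : ℕ) + 1) + n * ⌈t⌉₊ * (n * ⌈t⌉₊)
      ≤ (n : ℝ) ^ 2 * (t ^ 2 + t ^ 2 + t ^ 2) + n * (2 * t) * (n * (2 * t)) := by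
        gcongr
        exact one_le_pow₀ ht_one
    _ = 7 * t ^ 8 := by rw [← ht_cube]; ring
    _ = 7 * (n : ℝ) ^ ((8 : ℝ) / 3) := by rw [ht_pow]; norm_num

theorem IsDecreasingPseudolines.card_incidences_le_rpow {inc : ι → α × β → Prop}
    (h : IsDecreasingPseudolines inc) {T : Finset ι} {A : Finset α} {B : Finset β}
    {I : Finset (ι × α × β)} (hinc : ∀ x ∈ I, inc x.1 x.2) (hI : I ⊆ T ×ˢ A ×ˢ B) {n : ℕ}
    (hT : #T ≤ n ^ 2) (hA : #A ≤ n) (hB : #B ≤ n) :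
    (#I : ℝ) ≤ 7 * (n : ℝ) ^ ((8 : ℝ) / 3) := by
  obtain ⟨k, hk, hcost⟩ := exists_blockSize_cost_le n
  refine le_trans (Nat.cast_le.2 ?_) hcost
  calc #I ≤ #T * (#A / k + #B / k + 1) + #A * k * (#B * k) :=
        h.card_incidences_le hinc hI hk hk
    _ ≤ n ^ 2 * (n / k + n / k + 1) + n * k * (n * k) := by gcongr

end Incidences

section Hyperbolas

variable {R : Type*} [CommRing R] [LinearOrder R]

/-- The point `p` lies on the upper right branch of the hyperbola `(x - u.1) * (y - u.2) = s` with
center `u`, that is, `u` and `p` are opposite corners of a rectangle of area `s`. -/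
def OnUpperBranch (s : R) (u p : R × R) : Prop :=
  u.1 < p.1 ∧ u.2 < p.2 ∧ (p.1 - u.1) * (p.2 - u.2) = s

namespace OnUpperBranch

variable {s : R} {u v p q : R × R}

theorem center_sub_mul_eq (hu : OnUpperBranch s u p) (hv : OnUpperBranch s v p) :
    (v.2 - u.2) * ((p.1 - u.1) * (p.1 - v.1)) = s * (u.1 - v.1) := by
  linear_combination (p.1 - v.1) * hu.2.2 - (p.1 - u.1) * hv.2.2

variable [IsStrictOrderedRing R]

theorem area_pos (hp : OnUpperBranch s u p) : 0 < s :=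
  hp.2.2 ▸ mul_pos (sub_pos.2 hp.1) (sub_pos.2 hp.2.1)

theorem snd_lt_snd (hp : OnUpperBranch s u p) (hq : OnUpperBranch s u q) (hpq : p.1 < q.1) :
    q.2 < p.2 := by
  by_contra! hle
  have hlt : (p.1 - u.1) * (p.2 - u.2) < (q.1 - u.1) * (q.2 - u.2) :=
    mul_lt_mul (sub_lt_sub_right hpq _) (sub_le_sub_right hle _) (sub_pos.2 hp.2.1)
      (sub_pos.2 hq.1).le
  exact hlt.ne (hp.2.2.trans hq.2.2.symm)

theorem eq_of_fst_eq (hp : OnUpperBranch s u p) (hq : OnUpperBranch s u q) (hpq : p.1 = q.1) :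
    p = q := by
  have hprod : (p.1 - u.1) * (p.2 - u.2) = (p.1 - u.1) * (q.2 - u.2) := by
    rw [hp.2.2, hpq, hq.2.2]
  exact Prod.ext hpq (sub_left_injective (mul_left_cancel₀ (sub_pos.2 hp.1).ne' hprod))

theorem center_eq_of_fst_lt (hup : OnUpperBranch s u p) (huq : OnUpperBranch s u q)
    (hvp : OnUpperBranch s v p) (hvq : OnUpperBranch s v q) (hpq : p.1 < q.1) : u = v := by
  have hlt : (p.1 - u.1) * (p.1 - v.1) < (q.1 - u.1) * (q.1 - v.1) :=
    mul_lt_mul'' (sub_lt_sub_right hpq _) (sub_lt_sub_right hpq _) (sub_pos.2 hup.1).le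
      (sub_pos.2 hvp.1).le
  have hsnd : v.2 - u.2 = 0 := by
    by_contra hne
    exact hlt.ne <| mul_left_cancel₀ hne <|
      (hup.center_sub_mul_eq hvp).trans (huq.center_sub_mul_eq hvq).symm
  have hfst : s * (u.1 - v.1) = 0 := by
    rw [← hup.center_sub_mul_eq hvp, hsnd, zero_mul]
  exact Prod.ext (sub_eq_zero.1 ((mul_eq_zero.1 hfst).resolve_left hup.area_pos.ne'))
    (sub_eq_zero.1 hsnd).symm

theorem isDecreasingPseudolines (s : R) : IsDecreasingPseudolines (OnUpperBranch s) where
  antitone hp hq hpq := (hp.snd_lt_snd hq hpq).le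
  eq_of_ne {_ _ p q} hne hup huq hvp hvq := by
    rcases lt_trichotomy p.1 q.1 with hlt | heq | hlt
    · exact hup.center_eq_of_fst_lt huq hvp hvq hlt
    · exact absurd (hup.eq_of_fst_eq huq heq) hne
    · exact huq.center_eq_of_fst_lt hup hvq hvp hlt

end OnUpperBranch

end Hyperbolas

theorem unit_area_rectangles_in_grid_upper_bound_general {R : Type*} [CommRing R] [LinearOrder R]
    [IsStrictOrderedRing R] (s : R) {n : ℕ} {A B : Finset R} (hA : #A ≤ n) (hB : #B ≤ n) :
    (({q : R × R × R × R | q.1 ∈ A ∧ q.2.1 ∈ A ∧ q.2.2.1 ∈ B ∧ q.2.2.2 ∈ B ∧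
        q.1 < q.2.1 ∧ q.2.2.1 < q.2.2.2 ∧ (q.2.1 - q.1) * (q.2.2.2 - q.2.2.1) = s} :
        Set (R × R × R × R)).ncard : ℝ) ≤ 7 * (n : ℝ) ^ ((8 : ℝ) / 3) := by
  classical
  let I : Finset ((R × R) × R × R) := {x ∈ (A ×ˢ B) ×ˢ A ×ˢ B | OnUpperBranch s x.1 x.2}
  have hcorners : #(A ×ˢ B) ≤ n ^ 2 := by
    rw [card_product, sq]
    exact Nat.mul_le_mul hA hB
  refine le_trans (Nat.cast_le.2 ?_) <|
    (OnUpperBranch.isDecreasingPseudolines s).card_incidences_le_rpow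
      (I := I) (fun x hx ↦ (mem_filter.1 hx).2) (filter_subset _ _) hcorners hA hB
  rw [← Set.ncard_coe_finset I]
  refine Set.ncard_le_ncard_of_injOn (fun q ↦ ((q.1, q.2.2.1), q.2.1, q.2.2.2)) ?_ ?_
  · rintro ⟨a, c, b, d⟩ ⟨ha, hc, hb, hd, hrect⟩
    exact mem_filter.2
      ⟨mk_mem_product (mk_mem_product ha hb) (mk_mem_product hc hd), hrect⟩
  · rintro ⟨a, c, b, d⟩ - ⟨a', c', b', d'⟩ - heq
    simp only [Prod.mk.injEq] at heq ⊢
    tauto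

theorem unit_area_rectangles_in_grid_upper_bound :
    ∃ C : ℝ, 0 < C ∧ ∀ (n : ℕ), 1 ≤ n →
      ∀ A B : Finset ℝ, A.card = n → B.card = n →
        (({q : ℝ × ℝ × ℝ × ℝ | q.1 ∈ A ∧ q.2.1 ∈ A ∧ q.2.2.1 ∈ B ∧ q.2.2.2 ∈ B ∧
            q.1 < q.2.1 ∧ q.2.2.1 < q.2.2.2 ∧
            (q.2.1 - q.1) * (q.2.2.2 - q.2.2.1) = 1} :
            Set (ℝ × ℝ × ℝ × ℝ)).ncard : ℝ)
          ≤ C * (n : ℝ) ^ ((8 : ℝ) / 3) :=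
  ⟨7, by norm_num, fun _ _ _ _ hA hB ↦
    unit_area_rectangles_in_grid_upper_bound_general 1 hA.le hB.le⟩
end
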